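/- arXiv:1609.04438 — 3 statements merged into one kernel-verified Lean document; each statement's English description precedes it below -/
import Mathlib

section
/- Let $n\geq 1$, $s\in(0,1)$, $e\in\partial B_1\subset\mathbb{R}^n$. Let $\phi_\star$ be the first Dirichlet eigenfunction of $(-\Delta)^s$ on $B_1$ with eigenvalue $\lambda_\star>0$, and set $\kappa_\star=2^s\kappa(n,s)\int_{B_1}\phi_\star(z)\frac{(1-|z|^2)^s}{s|z-e|^n}\,dz$. Then for every $\omega\in\partial B_1$: $\lim_{\varepsilon\searrow0}\varepsilon^{-s}\,\phi_\star(e+\varepsilon\omega)=\kappa_\star\,\lambda_\star\,(-e\cdot\omega)_+^s$, where $t_+=\max\{t,0\}$. -/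
open MeasureTheory Filter Metric Set
open scoped RealInnerProductSpace

/-- The normalizing constant `C(n,s)` of the fractional Laplacian. -/
noncomputable def fracC (n : ℕ) (s : ℝ) : ℝ :=
  4 ^ s * s * Real.Gamma ((n : ℝ) / 2 + s) / (Real.pi ^ ((n : ℝ) / 2) * Real.Gamma (1 - s))

/-- `HasFracLap n s u x L` : the principal value limit defining `(-Δ)^s u (x)`
exists and equals `L`. -/
def HasFracLap (n : ℕ) (s : ℝ) (u : EuclideanSpace ℝ (Fin n) → ℝ)
    (x : EuclideanSpace ℝ (Fin n)) (L : ℝ) : Prop :=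
  Tendsto (fun ρ : ℝ =>
      fracC n s * ∫ y in {y : EuclideanSpace ℝ (Fin n) | ρ ≤ ‖y‖},
        (u x - u (x + y)) / ‖y‖ ^ ((n : ℝ) + 2 * s))
    (nhdsWithin 0 (Set.Ioi 0)) (nhds L)

/-- The constant `κ(n,s) = Γ(n/2) / (4^s π^{n/2} Γ(s)²)`. -/
noncomputable def kappaC (n : ℕ) (s : ℝ) : ℝ :=
  Real.Gamma ((n : ℝ) / 2) / (4 ^ s * Real.pi ^ ((n : ℝ) / 2) * Real.Gamma s ^ 2)

/-!
The solution of the Dirichlet problem `(-Δ)^s v = g` in the unit ball has a normal derivative of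
order `s` at `e` which is linear in `g`, and by the maximum principle `|v|` is at most `sup |g|`
times the torsion function, a multiple of `(1 - ‖x‖²)₊^s`. So it suffices to identify this
derivative for a family of right-hand sides with dense span in `C(closedBall 0 1)`.

For a pole `p` outside the closed ball, `(1 - ‖x‖²)₊^s ‖x - p‖^(-n)` is a multiple of the Kelvin
transform of the torsion function, for the inversion about `p` that preserves the ball. Hence it
solves the problem with right-hand side a multiple of `‖x - p‖^(-(n + 2s))`, and its normal
derivative at `e` is explicit. The same inversion turns the integral of this right-hand side
against `(1 - ‖z‖²)₊^s ‖z - e‖^(-n)` into that of the latter kernel alone at another boundary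
point, which does not depend on the point; so the two agree. The span of these right-hand sides is
dense: its closure contains further powers of `‖x - p‖` by differentiation in `p`, hence all
Gaussians centred at `p`, hence all exponentials.
-/

open scoped Topology symmDiff

local notation "dim" => Module.finrank ℝ

section Integration

theorem integral_eq_integral_toSphere {E F : Type*} [NormedAddCommGroup E] [NormedSpace ℝ E]
    [FiniteDimensional ℝ E] [Nontrivial E] [MeasurableSpace E] [BorelSpace E]
    [NormedAddCommGroup F] [NormedSpace ℝ F]
    (μ : Measure E) [μ.IsAddHaarMeasure] {f : E → F} (hf : Integrable f μ) :
    ∫ x, f x ∂μ = ∫ θ : sphere (0 : E) 1,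
      (∫ t in Ioi (0 : ℝ), t ^ (dim E - 1) • f (t • (θ : E))) ∂μ.toSphere := by
  have hpolar := μ.measurePreserving_homeomorphUnitSphereProd
  have hemb := (homeomorphUnitSphereProd E).measurableEmbedding
  let g : sphere (0 : E) 1 × Ioi (0 : ℝ) → F := fun q => f ((q.2 : ℝ) • (q.1 : E))
  have hgf : g ∘ homeomorphUnitSphereProd E = fun x : ({0}ᶜ : Set E) => f x := by
    ext x
    have : ‖(x : E)‖ ≠ 0 := norm_ne_zero_iff.2 x.2
    simp [g, smul_smul, this]
  have hg : Integrable g (μ.toSphere.prod (.volumeIoiPow (dim E - 1))) := by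
    rw [← hpolar.integrable_comp_emb hemb, hgf]
    exact (integrableOn_iff_comap_subtypeVal (measurableSet_singleton (0 : E)).compl).1
      hf.integrableOn
  calc ∫ x, f x ∂μ
      = ∫ x : ({0}ᶜ : Set E), f x ∂(μ.comap (↑)) := by
        rw [integral_subtype_comap (measurableSet_singleton _).compl fun x => f x,
          restrict_compl_singleton]
    _ = ∫ q, g q ∂μ.toSphere.prod (.volumeIoiPow (dim E - 1)) := by
        rw [← hpolar.integral_comp hemb]
        exact congrArg (integral _) hgf.symm
    _ = _ := by
        rw [integral_prod _ hg]
        refine integral_congr_ae (Eventually.of_forall fun θ => ?_)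
        simp only [Measure.volumeIoiPow, ENNReal.ofReal]
        rw [integral_withDensity_eq_integral_smul
          (measurable_subtype_coe.pow_const _).real_toNNReal, integral_subtype_comap
          measurableSet_Ioi fun t : ℝ => (t ^ (dim E - 1)).toNNReal • f (t • (θ : E))]
        refine setIntegral_congr_fun measurableSet_Ioi fun t (ht : 0 < t) => ?_
        simp only [NNReal.smul_def, Real.coe_toNNReal _ (pow_nonneg ht.le _)]

theorem norm_setIntegral_sub_setIntegral_le {α F : Type*} [MeasurableSpace α] {μ : Measure α}
    [NormedAddCommGroup F] [NormedSpace ℝ F] {f : α → F} {A B : Set α} {C : ℝ}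
    (hA : MeasurableSet A) (hB : MeasurableSet B) (hfA : IntegrableOn f A μ)
    (hfB : IntegrableOn f B μ) (hfin : μ (A ∆ B) ≠ ⊤) (hC : ∀ x ∈ A ∆ B, ‖f x‖ ≤ C) :
    ‖(∫ x in A, f x ∂μ) - ∫ x in B, f x ∂μ‖ ≤ C * μ.real (A ∆ B) := by
  have hAB : A \ B ⊆ A ∆ B := subset_union_left
  have hBA : B \ A ⊆ A ∆ B := subset_union_right
  have hA' := measure_ne_top_of_subset hAB hfin
  have hB' := measure_ne_top_of_subset hBA hfin
  rw [← integral_inter_add_sdiff hB hfA, ← integral_inter_add_sdiff hA hfB, inter_comm B A,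
    add_sub_add_left_eq_sub, Set.symmDiff_def, measureReal_union disjoint_sdiff_sdiff
      (hB.diff hA) hA' hB', mul_add]
  exact (norm_sub_le _ _).trans (add_le_add
    (norm_setIntegral_le_of_norm_le_const hA'.lt_top fun x hx => hC x (hAB hx))
    (norm_setIntegral_le_of_norm_le_const hB'.lt_top fun x hx => hC x (hBA hx)))

theorem ball_half_subset_of_symmDiff_ball_subset {E : Type*} [SeminormedAddCommGroup E] {B : Set E}
    {x : E} {ρ w : ℝ} (hρ : 0 < ρ) (hw : w ≤ ρ / 2)
    (hB : B ∆ ball x ρ ⊆ {y | |‖y - x‖ - ρ| ≤ w}) : ball x (ρ / 2) ⊆ B := by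
  intro y hy
  by_contra hyB
  rw [mem_ball_iff_norm] at hy
  have hyρ : |‖y - x‖ - ρ| ≤ w := hB (Or.inr ⟨mem_ball_iff_norm.2 (by linarith), hyB⟩)
  linarith [(abs_le.1 hyρ).1]

variable {E : Type*} [NormedAddCommGroup E] [NormedSpace ℝ E] [FiniteDimensional ℝ E]
  [MeasurableSpace E] [BorelSpace E] (μ : Measure E) [μ.IsAddHaarMeasure]

theorem integrableOn_compl_ball_norm_sub_rpow_neg {α : ℝ} (hα : dim E < α) (x : E) {ρ : ℝ}
    (hρ : 0 < ρ) : IntegrableOn (fun y => ‖y - x‖ ^ (-α)) (ball x ρ)ᶜ μ := by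
  have hα0 : 0 < α := (Nat.cast_nonneg _).trans_lt hα
  have hdom := ((integrable_one_add_norm (μ := μ) hα).comp_sub_right x).const_mul ((1 + 1 / ρ) ^ α)
  refine hdom.integrableOn.mono' (by fun_prop : Measurable _).aestronglyMeasurable
    ((ae_restrict_iff' measurableSet_ball.compl).2 (Eventually.of_forall fun y hy => ?_))
  have hρy : ρ ≤ ‖y - x‖ := by simpa [dist_eq_norm] using hy
  have hy0 : 0 < ‖y - x‖ := hρ.trans_le hρy
  have hle : 1 + ‖y - x‖ ≤ (1 + 1 / ρ) * ‖y - x‖ := by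
    have : 1 ≤ 1 / ρ * ‖y - x‖ := by rwa [one_div, inv_mul_eq_div, one_le_div hρ]
    linarith
  have hinv : (1 + 1 / ρ)⁻¹ * (1 + ‖y - x‖) ≤ ‖y - x‖ := (inv_mul_le_iff₀ (by positivity)).2 hle
  calc ‖‖y - x‖ ^ (-α)‖ = ‖y - x‖ ^ (-α) := Real.norm_of_nonneg (by positivity)
    _ ≤ ((1 + 1 / ρ)⁻¹ * (1 + ‖y - x‖)) ^ (-α) :=
        Real.rpow_le_rpow_of_nonpos (by positivity) hinv (neg_nonpos.2 hα0.le)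
    _ = (1 + 1 / ρ) ^ α * (1 + ‖y - x‖) ^ (-α) := by
        rw [Real.mul_rpow (by positivity) (by positivity), Real.inv_rpow (by positivity),
          Real.rpow_neg (by positivity), inv_inv]

theorem measureReal_shell_le [Nontrivial E] (x : E) {ρ w : ℝ} (hw : 0 ≤ w) (hwρ : w ≤ ρ) :
    μ.real {y | |‖y - x‖ - ρ| ≤ w} ≤
      2 * w * dim E * (2 * ρ) ^ (dim E - 1) * μ.real (ball (0 : E) 1) := by
  have hsub : {y | |‖y - x‖ - ρ| ≤ w} ⊆ closedBall x (ρ + w) \ ball x (ρ - w) := by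
    intro y (hy : |‖y - x‖ - ρ| ≤ w)
    rw [abs_le] at hy
    simp only [Set.mem_sdiff, mem_closedBall, mem_ball, dist_eq_norm]
    constructor <;> linarith
  have hball : μ.real (ball x (ρ - w)) = (ρ - w) ^ dim E * μ.real (ball (0 : E) 1) := by
    rw [← μ.addHaar_real_closedBall x (sub_nonneg.2 hwρ), Measure.real, Measure.real,
      Measure.addHaar_closedBall_eq_addHaar_ball]
  have hpow : (ρ + w) ^ dim E - (ρ - w) ^ dim E ≤ 2 * w * dim E * (2 * ρ) ^ (dim E - 1) := by
    have hmax : max |ρ + w| |ρ - w| ≤ 2 * ρ := by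
      rw [abs_of_nonneg (by linarith), abs_of_nonneg (by linarith)]
      exact max_le (by linarith) (by linarith)
    refine (le_abs_self _).trans ((abs_pow_sub_pow_le _ _ _).trans ?_)
    rw [show ρ + w - (ρ - w) = 2 * w by ring, abs_of_nonneg (by positivity)]
    gcongr
  refine (measureReal_mono hsub (measure_ne_top_of_subset sdiff_subset
    measure_closedBall_lt_top.ne)).trans ?_
  rw [measureReal_sdiff (ball_subset_closedBall.trans (closedBall_subset_closedBall (by linarith)))
      measurableSet_ball measure_closedBall_lt_top.ne, hball,
    μ.addHaar_real_closedBall x (by linarith), ← sub_mul]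
  gcongr

end Integration

section Inversion

open EuclideanGeometry

variable {E : Type*} [NormedAddCommGroup E] [InnerProductSpace ℝ E]

theorem norm_inversion_sub_center (p z : E) (a : ℝ) : ‖inversion p a z - p‖ = a ^ 2 / ‖z - p‖ := by
  simpa only [dist_eq_norm] using dist_inversion_center p z a

theorem norm_inversion_sub_inversion {p x z : E} (hx : x ≠ p) (hz : z ≠ p) (a : ℝ) :
    ‖inversion p a z - inversion p a x‖ = a ^ 2 / (‖z - p‖ * ‖x - p‖) * ‖z - x‖ := by
  simpa only [dist_eq_norm] using dist_inversion_inversion hz hx a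

/- An inversion is conformal, hence maps a small sphere around `x` to a sphere around the image of
`x` up to an error of second order in the radius. -/
theorem symmDiff_preimage_inversion_ball_subset {p x : E} (hxp : x ≠ p) {a : ℝ} (ha : a ≠ 0) {ρ : ℝ}
    (hρ : 0 < ρ) (hρx : ρ < ‖x - p‖ / 2) :
    (inversion p a ⁻¹' ball (inversion p a x) (a ^ 2 / ‖x - p‖ ^ 2 * ρ)) ∆ ball x ρ ⊆
      {y | |‖y - x‖ - ρ| ≤ 2 / ‖x - p‖ * ρ ^ 2} := by
  intro y hy
  have hxp0 : 0 < ‖x - p‖ := norm_pos_iff.2 (sub_ne_zero.2 hxp)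
  have hmem : y ∈ inversion p a ⁻¹' ball (inversion p a x) (a ^ 2 / ‖x - p‖ ^ 2 * ρ) ↔
      ‖x - p‖ * ‖y - x‖ < ρ * ‖y - p‖ := by
    rcases eq_or_ne y p with rfl | hyp
    · rw [mem_preimage, mem_ball, inversion_self, dist_center_inversion, dist_eq_norm,
        norm_sub_rev y x, sub_self, norm_zero, mul_zero]
      have : a ^ 2 / ‖x - y‖ ^ 2 * ρ = a ^ 2 / ‖x - y‖ * (ρ / ‖x - y‖) := by ring
      rw [this, lt_mul_iff_one_lt_right (by positivity), one_lt_div hxp0]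
      exact ⟨fun h => by linarith, fun h => absurd h (not_lt.2 (by positivity))⟩
    · have hyp0 : 0 < ‖y - p‖ := norm_pos_iff.2 (sub_ne_zero.2 hyp)
      rw [mem_preimage, mem_ball, dist_eq_norm, norm_inversion_sub_inversion hxp hyp,
        show a ^ 2 / (‖y - p‖ * ‖x - p‖) * ‖y - x‖ =
          a ^ 2 / ‖x - p‖ ^ 2 * (‖x - p‖ * ‖y - x‖ / ‖y - p‖) by field_simp,
        mul_lt_mul_iff_right₀ (by positivity), div_lt_iff₀ hyp0]
  have htri : |‖y - p‖ - ‖x - p‖| ≤ ‖y - x‖ := by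
    simpa only [sub_sub_sub_cancel_right] using abs_norm_sub_norm_le (y - p) (x - p)
  rw [abs_le] at htri
  rw [mem_ofPred_eq, div_mul_eq_mul_div, le_div_iff₀ hxp0]
  rw [mem_symmDiff, hmem, mem_ball, dist_eq_norm, not_lt, not_lt] at hy
  rcases hy with ⟨hlt, hle⟩ | ⟨hlt, hle⟩
  · rw [abs_of_nonneg (by linarith)]
    have : ‖y - x‖ ≤ 2 * ρ := by nlinarith
    nlinarith
  · rw [abs_of_nonpos (by linarith)]
    nlinarith

theorem image_inversion_preimage_sdiff_center (p : E) {a : ℝ} (ha : a ≠ 0) (D : Set E) :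
    inversion p a '' (inversion p a ⁻¹' D \ {p}) = D \ {p} := by
  rw [image_sdiff (inversion_injective p ha), image_singleton, inversion_self,
    image_preimage_eq _ (inversion_surjective p ha)]

section Jacobian

variable [FiniteDimensional ℝ E]

theorem abs_det_smul_reflection (c : ℝ) (K : Submodule ℝ E) :
    |(c • (K.reflection : E →L[ℝ] E)).det| = |c| ^ dim E := by
  change |LinearMap.det (c • (K.reflection.toLinearEquiv : E →ₗ[ℝ] E))| = _
  rw [LinearMap.det_smul, K.det_reflection, abs_mul, abs_pow, abs_neg_one_pow, mul_one]

theorem abs_det_fderiv_inversion (p x : E) (a : ℝ) :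
    |((a / dist x p) ^ 2 • ((ℝ ∙ (x - p))ᗮ.reflection : E →L[ℝ] E)).det| =
      ((a / ‖x - p‖) ^ 2) ^ dim E := by
  rw [abs_det_smul_reflection, abs_of_nonneg (by positivity), dist_eq_norm]

end Jacobian

variable [MeasurableSpace E] [BorelSpace E]

theorem measurable_inversion [SecondCountableTopology E] (p : E) (a : ℝ) :
    Measurable (inversion p a) := by
  unfold inversion
  simp only [vsub_eq_sub, vadd_eq_add]
  exact (((measurable_const.div (by fun_prop)).pow_const 2).smul
    (by fun_prop : Measurable fun x : E => x - p)).add_const p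

section ChangeOfVariables

variable [FiniteDimensional ℝ E] [Nontrivial E] {F : Type*} [NormedAddCommGroup F]
  [NormedSpace ℝ F] (p : E) {a : ℝ}

theorem setIntegral_eq_setIntegral_inversion (ha : a ≠ 0) {D : Set E} (hD : MeasurableSet D)
    (f : E → F) :
    ∫ y in D, f y =
      ∫ z in inversion p a ⁻¹' D, ((a / ‖z - p‖) ^ 2) ^ dim E • f (inversion p a z) := by
  have h := integral_image_eq_integral_abs_det_fderiv_smul volume
    ((measurable_inversion p a hD).diff (measurableSet_singleton p))
    (fun x hx => (hasFDerivAt_inversion hx.2).hasFDerivWithinAt)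
    (inversion_injective p ha).injOn f
  simp only [image_inversion_preimage_sdiff_center p ha, abs_det_fderiv_inversion] at h
  rwa [setIntegral_congr_set (sdiff_null_ae_eq_self (measure_singleton p)),
    setIntegral_congr_set (sdiff_null_ae_eq_self (measure_singleton p))] at h

theorem integrableOn_iff_integrableOn_inversion (ha : a ≠ 0) {D : Set E} (hD : MeasurableSet D)
    {f : E → F} :
    IntegrableOn f D ↔ IntegrableOn (fun z => ((a / ‖z - p‖) ^ 2) ^ dim E • f (inversion p a z))
      (inversion p a ⁻¹' D) := by
  have h := integrableOn_image_iff_integrableOn_abs_det_fderiv_smul volume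
    ((measurable_inversion p a hD).diff (measurableSet_singleton p))
    (fun x hx => (hasFDerivAt_inversion hx.2).hasFDerivWithinAt)
    (inversion_injective p ha).injOn f
  simp only [image_inversion_preimage_sdiff_center p ha, abs_det_fderiv_inversion] at h
  rwa [integrableOn_congr_set_ae (sdiff_null_ae_eq_self (measure_singleton p)),
    integrableOn_congr_set_ae (sdiff_null_ae_eq_self (measure_singleton p))] at h

end ChangeOfVariables

end Inversion

section PrincipalValue

variable {E : Type*} [NormedAddCommGroup E] [InnerProductSpace ℝ E] {s : ℝ}

/-- The integrand `(u x - u y) / ‖y - x‖ ^ (dim E + 2 s)` of the fractional Laplacian. -/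
noncomputable def fracDiffQuotient (s : ℝ) (u : E → ℝ) (x y : E) : ℝ :=
  (u x - u y) / ‖y - x‖ ^ (dim E + 2 * s)

theorem norm_fracDiffQuotient_le {u : E → ℝ} {x y : E} {M r R : ℝ} (hs : 0 < s) (hr : 0 < r)
    (hM : |u y - u x| ≤ M * ‖y - x‖) (hM0 : 0 ≤ M) (hry : r ≤ ‖y - x‖) (hyR : ‖y - x‖ ≤ R) :
    ‖fracDiffQuotient s u x y‖ ≤ M * R / r ^ (dim E + 2 * s) := by
  rw [fracDiffQuotient, norm_div, Real.norm_eq_abs, abs_sub_comm,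
    Real.norm_of_nonneg (by positivity)]
  have hR : 0 ≤ R := (norm_nonneg _).trans hyR
  exact div_le_div₀ (by positivity) (hM.trans (by gcongr)) (by positivity) (by gcongr)

variable [FiniteDimensional ℝ E] [MeasurableSpace E] [BorelSpace E]

/-- `HasPrincipalValue s u x L`: the principal value integral defining the fractional Laplacian of
`u` at `x`, without the normalizing constant, exists and equals `L`. -/
def HasPrincipalValue (s : ℝ) (u : E → ℝ) (x : E) (L : ℝ) : Prop :=
  Tendsto (fun ρ => ∫ y in (ball x ρ)ᶜ, fracDiffQuotient s u x y) (𝓝[>] 0) (𝓝 L)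

theorem hasFracLap_iff_hasPrincipalValue {n : ℕ} {u : EuclideanSpace ℝ (Fin n) → ℝ}
    {x : EuclideanSpace ℝ (Fin n)} {L : ℝ} (hC : fracC n s ≠ 0) :
    HasFracLap n s u x (fracC n s * L) ↔ HasPrincipalValue s u x L := by
  have htrans (ρ : ℝ) : ∫ y in {y : EuclideanSpace ℝ (Fin n) | ρ ≤ ‖y‖},
      (u x - u (x + y)) / ‖y‖ ^ ((n : ℝ) + 2 * s) =
      ∫ y in (ball x ρ)ᶜ, fracDiffQuotient s u x y := by
    rw [← (measurePreserving_add_left volume x).setIntegral_preimage_emb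
      (measurableEmbedding_addLeft x) (fracDiffQuotient s u x) (ball x ρ)ᶜ]
    simp only [fracDiffQuotient, add_sub_cancel_left, finrank_euclideanSpace_fin]
    congr 2
    ext y
    simp [dist_eq_norm]
  simp only [HasFracLap, HasPrincipalValue, htrans]
  refine ⟨fun h => ?_, fun h => h.const_mul _⟩
  simpa only [inv_mul_cancel_left₀ hC] using h.const_mul (fracC n s)⁻¹

theorem integrableOn_fracDiffQuotient (hs : 0 < s) {u : E → ℝ} (hu : Measurable u) {M : ℝ}
    (hM : ∀ y, |u y| ≤ M) (x : E) {ρ : ℝ} (hρ : 0 < ρ) :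
    IntegrableOn (fracDiffQuotient s u x) (ball x ρ)ᶜ := by
  have hker := integrableOn_compl_ball_norm_sub_rpow_neg volume
    (show (dim E : ℝ) < dim E + 2 * s by linarith) x hρ
  simp only [funext (fracDiffQuotient.eq_def s u x), div_eq_mul_inv,
    ← Real.rpow_neg (norm_nonneg _)]
  refine hker.bdd_mul (c := 2 * M) (by fun_prop : Measurable _).aestronglyMeasurable
    (Eventually.of_forall fun y => (norm_sub_le _ _).trans ?_)
  simp only [Real.norm_eq_abs]
  linarith [hM x, hM y]

theorem HasPrincipalValue.const_mul {u : E → ℝ} {x : E} {L : ℝ} (h : HasPrincipalValue s u x L)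
    (c : ℝ) : HasPrincipalValue s (fun y => c * u y) x (c * L) := by
  refine (Tendsto.const_mul c h).congr fun ρ => ?_
  simp only [fracDiffQuotient, ← mul_sub, mul_div_assoc, integral_const_mul]

theorem HasPrincipalValue.add (hs : 0 < s) {u v : E → ℝ} {x : E} {L L' : ℝ}
    (hu : HasPrincipalValue s u x L) (hv : HasPrincipalValue s v x L') (hum : Measurable u)
    (hvm : Measurable v) {M M' : ℝ} (huM : ∀ y, |u y| ≤ M) (hvM : ∀ y, |v y| ≤ M') :
    HasPrincipalValue s (fun y => u y + v y) x (L + L') := by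
  refine (Tendsto.add hu hv).congr' ?_
  filter_upwards [self_mem_nhdsWithin] with ρ hρ
  rw [← integral_add (integrableOn_fracDiffQuotient hs hum huM x hρ)
    (integrableOn_fracDiffQuotient hs hvm hvM x hρ)]
  simp only [fracDiffQuotient, ← add_div, add_sub_add_comm]

theorem HasPrincipalValue.sub (hs : 0 < s) {u v : E → ℝ} {x : E} {L L' : ℝ}
    (hu : HasPrincipalValue s u x L) (hv : HasPrincipalValue s v x L') (hum : Measurable u)
    (hvm : Measurable v) {M M' : ℝ} (huM : ∀ y, |u y| ≤ M) (hvM : ∀ y, |v y| ≤ M') :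
    HasPrincipalValue s (fun y => u y - v y) x (L - L') := by
  simpa only [neg_one_mul, ← sub_eq_add_neg] using hu.add hs (hv.const_mul (-1)) hum
    (hvm.const_mul (-1)) huM (fun y => by simpa using hvM y)

theorem rpow_two_sub_mul_rpow_add {n : ℕ} (hn : 0 < n) {ρ : ℝ} (hρ : 0 < ρ) (s : ℝ) :
    ρ ^ (2 - 2 * s) * ρ ^ (n + 2 * s) = ρ * ρ ^ 2 * ρ ^ (n - 1) := by
  have hexp : 2 - 2 * s + (n + 2 * s) = ((1 + 2 + (n - 1) : ℕ) : ℝ) := by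
    rw [Nat.cast_add, Nat.cast_pred hn]
    push_cast
    ring
  rw [← Real.rpow_add hρ, hexp, Real.rpow_natCast, pow_add, pow_add, pow_one]

theorem norm_setIntegral_compl_sub_setIntegral_compl_ball_le [Nontrivial E] (hs : 0 < s)
    {u : E → ℝ} {x : E} {M δ : ℝ} (hM : ∀ y ∈ ball x δ, |u y - u x| ≤ M * ‖y - x‖) (hM0 : 0 ≤ M)
    {C ρ : ℝ} (hC : 0 ≤ C) (hρ : 0 < ρ) (hρδ : 2 * ρ < δ) (hCρ : C * ρ ≤ 1 / 2)
    (hint : IntegrableOn (fracDiffQuotient s u x) (ball x (ρ / 2))ᶜ) {B : Set E}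
    (hB : MeasurableSet B) (hshell : B ∆ ball x ρ ⊆ {y | |‖y - x‖ - ρ| ≤ C * ρ ^ 2}) :
    ‖(∫ y in Bᶜ, fracDiffQuotient s u x y) - ∫ y in (ball x ρ)ᶜ, fracDiffQuotient s u x y‖ ≤
      M * 2 * 2 ^ (dim E + 2 * s) * (2 * C * dim E * 2 ^ (dim E - 1) *
        volume.real (ball (0 : E) 1)) * ρ ^ (2 - 2 * s) := by
  have hw : C * ρ ^ 2 ≤ ρ / 2 := by nlinarith
  have hshell' : ∀ y ∈ B ∆ ball x ρ, ρ / 2 ≤ ‖y - x‖ ∧ ‖y - x‖ ≤ 2 * ρ := by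
    intro y hy
    have hyρ : |‖y - x‖ - ρ| ≤ C * ρ ^ 2 := hshell hy
    rw [abs_le] at hyρ
    constructor <;> linarith
  have hfin : volume {y : E | |‖y - x‖ - ρ| ≤ C * ρ ^ 2} ≠ ⊤ :=
    measure_ne_top_of_subset (fun y (hy : |‖y - x‖ - ρ| ≤ C * ρ ^ 2) =>
      mem_closedBall_iff_norm.2 (by linarith [(abs_le.1 hy).2] : ‖y - x‖ ≤ 2 * ρ))
      measure_closedBall_lt_top.ne
  have hBint : IntegrableOn (fracDiffQuotient s u x) Bᶜ :=
    hint.mono_set (compl_subset_compl.2 (ball_half_subset_of_symmDiff_ball_subset hρ hw hshell))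
  calc _ ≤ M * (2 * ρ) / (ρ / 2) ^ (dim E + 2 * s) * volume.real (Bᶜ ∆ (ball x ρ)ᶜ) := by
        refine norm_setIntegral_sub_setIntegral_le hB.compl measurableSet_ball.compl hBint
          (hint.mono_set (compl_subset_compl.2 (ball_subset_ball (by linarith))))
          (by simpa using measure_ne_top_of_subset hshell hfin) fun y hy => ?_
        rw [compl_symmDiff_compl] at hy
        obtain ⟨hle, hge⟩ := hshell' y hy
        exact norm_fracDiffQuotient_le hs (by positivity)
          (hM y (mem_ball_iff_norm.2 (by linarith))) hM0 hle hge
    _ ≤ M * (2 * ρ) / (ρ / 2) ^ (dim E + 2 * s) * (2 * (C * ρ ^ 2) * dim E *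
          (2 * ρ) ^ (dim E - 1) * volume.real (ball (0 : E) 1)) := by
        rw [compl_symmDiff_compl]
        gcongr
        exact (measureReal_mono hshell hfin).trans
          (measureReal_shell_le volume x (by positivity) (by linarith))
    _ = _ := by
        rw [Real.div_rpow hρ.le two_pos.le, mul_pow, div_div_eq_mul_div, div_mul_eq_mul_div,
          div_eq_iff (by positivity), mul_assoc _ (ρ ^ (2 - 2 * s)),
          rpow_two_sub_mul_rpow_add Module.finrank_pos hρ]
        ring

theorem tendsto_setIntegral_compl_sub_setIntegral_compl_ball [Nontrivial E]
    (hs : s ∈ Ioo (0 : ℝ) 1) {u : E → ℝ} {x : E} (hu : DifferentiableAt ℝ u x)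
    (hint : ∀ ρ > 0, IntegrableOn (fracDiffQuotient s u x) (ball x ρ)ᶜ)
    {B : ℝ → Set E} (hB : ∀ ρ, MeasurableSet (B ρ)) {C : ℝ} (hC : 0 ≤ C)
    (hshell : ∀ᶠ ρ in 𝓝[>] 0, B ρ ∆ ball x ρ ⊆ {y | |‖y - x‖ - ρ| ≤ C * ρ ^ 2}) :
    Tendsto (fun ρ => (∫ y in (B ρ)ᶜ, fracDiffQuotient s u x y) -
      ∫ y in (ball x ρ)ᶜ, fracDiffQuotient s u x y) (𝓝[>] 0) (𝓝 0) := by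
  obtain ⟨M, hM0, hM⟩ := hu.isBigO_sub.exists_pos
  obtain ⟨δ, hδ, hMδ⟩ := Metric.eventually_nhds_iff.1 hM.bound
  have hlim : Tendsto (fun ρ : ℝ => ρ ^ (2 - 2 * s)) (𝓝[>] 0) (𝓝 0) := by
    have hpos : 0 < 2 - 2 * s := by linarith [hs.2]
    simpa only [Real.zero_rpow hpos.ne'] using
      ((Real.continuous_rpow_const hpos.le).tendsto 0).mono_left nhdsWithin_le_nhds
  have hsmall (c : ℝ) {d : ℝ} (hd : 0 < d) : ∀ᶠ ρ in 𝓝[>] (0 : ℝ), c * ρ < d :=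
    nhdsWithin_le_nhds ((continuous_const_mul c).continuousAt.eventually_lt continuousAt_const
      (by rwa [mul_zero]))
  refine squeeze_zero_norm' ?_ (mul_zero (_ : ℝ) ▸ hlim.const_mul
    (M * 2 * 2 ^ (dim E + 2 * s) * (2 * C * dim E * 2 ^ (dim E - 1) *
        volume.real (ball (0 : E) 1))))
  filter_upwards [hshell, hsmall C one_half_pos, hsmall 2 hδ, self_mem_nhdsWithin]
    with ρ hsub hCρ hρδ (hρ : 0 < ρ)
  exact norm_setIntegral_compl_sub_setIntegral_compl_ball_le hs.1 (fun y hy => hMδ hy) hM0.le hC hρ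
    hρδ hCρ.le (hint _ (by positivity)) (hB ρ) hsub

end PrincipalValue

section Kelvin

open EuclideanGeometry

variable {E : Type*} [NormedAddCommGroup E] [InnerProductSpace ℝ E] {s : ℝ} {p x : E} {a : ℝ}

/-- The Riesz kernel `‖y - p‖ ^ (2 s - dim E)`, up to a constant the fundamental solution of the
fractional Laplacian with pole `p`. -/
noncomputable def rieszKernel (s : ℝ) (p y : E) : ℝ := ‖y - p‖ ^ (2 * s - dim E)

theorem jacobian_mul_rieszKernel_inversion_div (hx : x ≠ p) {z : E} (hz : z ≠ p) (ha : 0 < a) :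
    ((a / ‖z - p‖) ^ 2) ^ dim E *
      (rieszKernel s p (inversion p a z) / ‖inversion p a z - x‖ ^ (dim E + 2 * s)) =
      a ^ (4 * s) * ‖x - p‖ ^ (-(dim E + 2 * s)) / ‖z - inversion p a x‖ ^ (dim E + 2 * s) := by
  have hx0 : 0 < ‖x - p‖ := norm_pos_iff.2 (sub_ne_zero.2 hx)
  have hz0 : 0 < ‖z - p‖ := norm_pos_iff.2 (sub_ne_zero.2 hz)
  have hdist : ‖inversion p a z - x‖ = ‖x - p‖ / ‖z - p‖ * ‖z - inversion p a x‖ := by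
    conv_lhs => rw [← inversion_inversion p ha.ne' x]
    rw [norm_inversion_sub_inversion ((inversion_eq_center ha.ne').not.2 hx) hz,
      norm_inversion_sub_center]
    field_simp
  have hriesz : ((a / ‖z - p‖) ^ 2) ^ dim E * rieszKernel s p (inversion p a z) =
      a ^ (4 * s) * ‖z - p‖ ^ (-(dim E + 2 * s)) := by
    have hsq : (a / ‖z - p‖) ^ 2 = a ^ 2 / ‖z - p‖ / ‖z - p‖ := by field_simp
    rw [rieszKernel, norm_inversion_sub_center, hsq, div_pow, div_mul_eq_mul_div,
      ← Real.rpow_natCast (a ^ 2 / ‖z - p‖), ← Real.rpow_add (by positivity), add_sub_cancel,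
      Real.div_rpow (by positivity) hz0.le, ← Real.rpow_natCast a, ← Real.rpow_mul ha.le, div_div,
      ← Real.rpow_natCast ‖z - p‖, ← Real.rpow_add hz0, div_eq_mul_inv, ← Real.rpow_neg hz0.le]
    ring_nf
  rw [← mul_div_assoc, hriesz, hdist, Real.mul_rpow (by positivity) (norm_nonneg _),
    Real.div_rpow hx0.le hz0.le, Real.rpow_neg hz0.le, Real.rpow_neg hx0.le]
  field_simp

theorem differentiableAt_rieszKernel (hx : x ≠ p) :
    DifferentiableAt ℝ (rieszKernel s p) x := by
  have hx0 : x - p ≠ 0 := sub_ne_zero.2 hx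
  exact ((differentiableAt_id.sub_const p).norm ℝ hx0).rpow_const (Or.inl (norm_ne_zero_iff.2 hx0))

theorem rieszKernel_mul_rieszKernel_inversion {y : E} (hy : y ≠ p) :
    rieszKernel s p y * rieszKernel s p (inversion p ‖x - p‖ y) = rieszKernel s p x ^ 2 := by
  have hy0 : 0 < ‖y - p‖ := norm_pos_iff.2 (sub_ne_zero.2 hy)
  rw [rieszKernel, rieszKernel, rieszKernel, norm_inversion_sub_center,
    ← Real.mul_rpow hy0.le (by positivity), mul_div_cancel₀ _ hy0.ne', sq, sq,
    Real.mul_rpow (norm_nonneg _) (norm_nonneg _)]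

variable [MeasurableSpace E] [BorelSpace E] [FiniteDimensional ℝ E] [Nontrivial E]

theorem setIntegral_rieszKernel_mul_comp_inversion_div (hx : x ≠ p) (ha : 0 < a) {D : Set E}
    (hD : MeasurableSet D) (v : E → ℝ) :
    ∫ y in D, rieszKernel s p y * v (inversion p a y) / ‖y - x‖ ^ (dim E + 2 * s) =
      a ^ (4 * s) * ‖x - p‖ ^ (-(dim E + 2 * s)) *
        ∫ z in inversion p a ⁻¹' D, v z / ‖z - inversion p a x‖ ^ (dim E + 2 * s) := by
  rw [setIntegral_eq_setIntegral_inversion p ha.ne' hD, ← integral_const_mul]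
  refine setIntegral_congr_ae (measurable_inversion p a hD) ?_
  filter_upwards [Measure.ae_ne volume p] with z hz _
  rw [smul_eq_mul, inversion_inversion p ha.ne', mul_div_right_comm, ← mul_assoc,
    jacobian_mul_rieszKernel_inversion_div hx hz ha]
  ring

theorem integrableOn_rieszKernel_div (hs : 0 < s) (hx : x ≠ p) {ρ : ℝ} (hρ : 0 < ρ) :
    IntegrableOn (fun y => rieszKernel s p y / ‖y - x‖ ^ (dim E + 2 * s)) (ball x ρ)ᶜ := by
  set x' := inversion p 1 x
  have hx' : x' ≠ p := (inversion_eq_center one_ne_zero).not.2 hx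
  obtain ⟨δ, hδ, hball⟩ : ∃ δ > 0, ball x' δ ⊆ inversion p 1 ⁻¹' ball x ρ := by
    refine Metric.mem_nhds_iff.1 ((hasFDerivAt_inversion hx').continuousAt ?_)
    rw [inversion_inversion p one_ne_zero]
    exact ball_mem_nhds x hρ
  rw [integrableOn_iff_integrableOn_inversion p one_ne_zero measurableSet_ball.compl]
  have hker := (integrableOn_compl_ball_norm_sub_rpow_neg volume
    (show (dim E : ℝ) < dim E + 2 * s by linarith) x' hδ).mono_set (compl_subset_compl.2 hball)
  refine (hker.const_mul (1 ^ (4 * s) * ‖x - p‖ ^ (-(dim E + 2 * s)))).congr ?_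
  filter_upwards [ae_restrict_of_ae (Measure.ae_ne volume p)] with z hz
  rw [smul_eq_mul, jacobian_mul_rieszKernel_inversion_div hx hz one_pos, div_eq_mul_inv,
    Real.rpow_neg (norm_nonneg (z - x'))]

theorem integrableOn_fracDiffQuotient_rieszKernel (hs : 0 < s) (hx : x ≠ p) {ρ : ℝ} (hρ : 0 < ρ) :
    IntegrableOn (fracDiffQuotient s (rieszKernel s p) x) (ball x ρ)ᶜ := by
  have hconst := (integrableOn_compl_ball_norm_sub_rpow_neg volume
    (show (dim E : ℝ) < dim E + 2 * s by linarith) x hρ).const_mul (rieszKernel s p x)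
  refine (hconst.sub (integrableOn_rieszKernel_div hs hx hρ)).congr
    (Eventually.of_forall fun y => ?_)
  simp only [fracDiffQuotient, Pi.sub_apply, Real.rpow_neg (norm_nonneg (y - x)), sub_div,
    ← div_eq_mul_inv]

theorem tendsto_setIntegral_compl_preimage_inversion (hs : s ∈ Ioo (0 : ℝ) 1) (hx : x ≠ p)
    (ha : 0 < a) {u : E → ℝ} (hu : DifferentiableAt ℝ u x)
    (hint : ∀ ρ > 0, IntegrableOn (fracDiffQuotient s u x) (ball x ρ)ᶜ) :
    Tendsto (fun ρ => (∫ y in (inversion p a ⁻¹' ball (inversion p a x)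
        (a ^ 2 / ‖x - p‖ ^ 2 * ρ))ᶜ, fracDiffQuotient s u x y) -
      ∫ y in (ball x ρ)ᶜ, fracDiffQuotient s u x y) (𝓝[>] 0) (𝓝 0) := by
  have hx0 : 0 < ‖x - p‖ := norm_pos_iff.2 (sub_ne_zero.2 hx)
  refine tendsto_setIntegral_compl_sub_setIntegral_compl_ball hs hu hint
    (fun ρ => measurable_inversion p a measurableSet_ball) (by positivity : 0 ≤ 2 / ‖x - p‖) ?_
  filter_upwards [Ioo_mem_nhdsGT (half_pos hx0)] with ρ hρ
  exact symmDiff_preimage_inversion_ball_subset hx ha.ne' hρ.1 hρ.2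

/- The inversion about `p` that fixes `x` turns the truncated integral into its negative, up to the
distortion of the excised ball. -/
theorem hasPrincipalValue_rieszKernel (hs : s ∈ Ioo (0 : ℝ) 1) (hx : x ≠ p) :
    HasPrincipalValue s (rieszKernel s p) x 0 := by
  have hx0 : 0 < ‖x - p‖ := norm_pos_iff.2 (sub_ne_zero.2 hx)
  set I := inversion p ‖x - p‖
  have hIx : I x = x := inversion_of_mem_sphere (mem_sphere_iff_norm.2 rfl)
  have hk : 0 < rieszKernel s p x := Real.rpow_pos_of_pos hx0 _
  have hconst : ‖x - p‖ ^ (4 * s) * ‖x - p‖ ^ (-(dim E + 2 * s)) = rieszKernel s p x := by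
    rw [← Real.rpow_add hx0, rieszKernel]
    ring_nf
  have hanti (ρ : ℝ) : ∫ y in (I ⁻¹' ball x ρ)ᶜ, fracDiffQuotient s (rieszKernel s p) x y =
      -∫ y in (ball x ρ)ᶜ, fracDiffQuotient s (rieszKernel s p) x y := by
    calc _ = -(rieszKernel s p x * ∫ z in I ⁻¹' (ball x ρ)ᶜ,
            (rieszKernel s p z / rieszKernel s p x - 1) / ‖z - I x‖ ^ (dim E + 2 * s)) := by
          rw [← integral_const_mul, ← integral_neg, preimage_compl]
          congr 1 with z
          rw [hIx, fracDiffQuotient]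
          field_simp
          ring
      _ = -∫ y in (ball x ρ)ᶜ, rieszKernel s p y * (rieszKernel s p (I y) / rieszKernel s p x - 1) /
            ‖y - x‖ ^ (dim E + 2 * s) := by
          rw [setIntegral_rieszKernel_mul_comp_inversion_div hx hx0 measurableSet_ball.compl
            fun z => rieszKernel s p z / rieszKernel s p x - 1, hconst]
      _ = _ := by
          refine congrArg _ (setIntegral_congr_ae measurableSet_ball.compl ?_)
          filter_upwards [Measure.ae_ne volume p] with y hy _
          rw [fracDiffQuotient, mul_sub_one, ← mul_div_assoc,
            rieszKernel_mul_rieszKernel_inversion hy, sq, mul_div_cancel_right₀ _ hk.ne']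
  have h := tendsto_setIntegral_compl_preimage_inversion hs hx hx0 (differentiableAt_rieszKernel hx)
    (fun ρ hρ => integrableOn_fracDiffQuotient_rieszKernel hs.1 hx hρ)
  have hone : ‖x - p‖ ^ 2 / ‖x - p‖ ^ 2 = 1 := div_self (by positivity)
  simp only [I, hIx, hone, one_mul, hanti] at h
  refine (mul_zero (-1 / 2 : ℝ) ▸ h.const_mul (-1 / 2)).congr fun ρ => ?_
  ring

/-- The Kelvin transform of `u` under the inversion about `p` of radius `a`. -/
noncomputable def kelvinTransform (s : ℝ) (p : E) (a : ℝ) (u : E → ℝ) (y : E) : ℝ :=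
  rieszKernel s p y * u (inversion p a y)

theorem setIntegral_fracDiffQuotient_kelvinTransform (hs : 0 < s) (hx : x ≠ p) (ha : 0 < a)
    {u : E → ℝ} (hu : Measurable u) {M : ℝ} (hM : ∀ y, |u y| ≤ M) {ρ : ℝ} (hρ : 0 < ρ) :
    ∫ y in (ball x ρ)ᶜ, fracDiffQuotient s (kelvinTransform s p a u) x y =
      a ^ (4 * s) * ‖x - p‖ ^ (-(dim E + 2 * s)) *
        (∫ z in (inversion p a ⁻¹' ball x ρ)ᶜ, fracDiffQuotient s u (inversion p a x) z) +
      u (inversion p a x) * ∫ y in (ball x ρ)ᶜ, fracDiffQuotient s (rieszKernel s p) x y := by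
  have hint : IntegrableOn (fun y => rieszKernel s p y *
      (u (inversion p a x) - u (inversion p a y)) / ‖y - x‖ ^ (dim E + 2 * s)) (ball x ρ)ᶜ := by
    refine ((integrableOn_rieszKernel_div hs hx hρ).bdd_mul (c := 2 * M)
      ((hu.comp (measurable_inversion p a)).const_sub (u (inversion p a x))).aestronglyMeasurable
      (Eventually.of_forall fun y => (norm_sub_le _ _).trans ?_)).congr
      (Eventually.of_forall fun y => ?_)
    · rw [Real.norm_eq_abs, Real.norm_eq_abs, two_mul]
      exact add_le_add (hM _) (hM _)
    · simp only [Function.comp_apply]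
      ring
  simp only [fracDiffQuotient.eq_def s u, ← preimage_compl]
  rw [← setIntegral_rieszKernel_mul_comp_inversion_div hx ha measurableSet_ball.compl
    fun z => u (inversion p a x) - u z, ← integral_const_mul, ← integral_add hint
      ((integrableOn_fracDiffQuotient_rieszKernel hs hx hρ).const_mul _)]
  refine integral_congr_ae (Eventually.of_forall fun y => ?_)
  simp only [kelvinTransform, fracDiffQuotient]
  ring

theorem HasPrincipalValue.kelvinTransform {u : E → ℝ} {L M : ℝ}
    (h : HasPrincipalValue s u (inversion p a x) L)
    (hs : s ∈ Ioo (0 : ℝ) 1) (hx : x ≠ p) (ha : 0 < a) (hu : Measurable u) (hM : ∀ y, |u y| ≤ M)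
    (hdiff : DifferentiableAt ℝ u (inversion p a x)) :
    HasPrincipalValue s (kelvinTransform s p a u) x
      (a ^ (4 * s) * ‖x - p‖ ^ (-(dim E + 2 * s)) * L) := by
  set x' := inversion p a x
  set c := a ^ 2 / ‖x' - p‖ ^ 2
  have hx' : x' ≠ p := (inversion_eq_center ha.ne').not.2 hx
  have hx'0 : 0 < ‖x' - p‖ := norm_pos_iff.2 (sub_ne_zero.2 hx')
  have hc : 0 < c := by positivity
  have hscale {b : ℝ} (hb : 0 < b) : Tendsto (b * ·) (𝓝[>] 0) (𝓝[>] 0) :=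
    tendsto_iff_comap.2 (comap_mulLeft_nhdsGT_zero hb).ge
  have hu' : Tendsto (fun ρ => ∫ z in (inversion p a ⁻¹' ball x (c * ρ))ᶜ,
      fracDiffQuotient s u x' z) (𝓝[>] 0) (𝓝 L) := by
    have hshell := tendsto_setIntegral_compl_preimage_inversion hs hx' ha hdiff
      fun ρ hρ => integrableOn_fracDiffQuotient hs.1 hu hM x' hρ
    rw [inversion_inversion p ha.ne'] at hshell
    simpa only [sub_add_cancel, zero_add] using hshell.add h
  have hsum := (hu'.const_mul (a ^ (4 * s) * ‖x - p‖ ^ (-(dim E + 2 * s)))).add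
    (((hasPrincipalValue_rieszKernel hs hx).comp (hscale hc)).const_mul (u x'))
  rw [mul_zero, add_zero] at hsum
  refine (hsum.comp (hscale (inv_pos.2 hc))).congr' ?_
  filter_upwards [self_mem_nhdsWithin] with ρ (hρ : 0 < ρ)
  rw [setIntegral_fracDiffQuotient_kelvinTransform hs.1 hx ha hu hM hρ]
  simp only [Function.comp_apply, mul_inv_cancel_left₀ hc.ne', x']

end Kelvin

section HalfLine

variable {s : ℝ}

theorem integral_rpowIntegrand₀₁_one (hs : s ∈ Ioo (0 : ℝ) 1) :
    ∫ t in Ioi (0 : ℝ), Real.rpowIntegrand₀₁ s t 1 = Real.Gamma s * Real.Gamma (1 - s) := by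
  have hlaplace {t : ℝ} (ht : 0 < t) :
      IntegrableOn (fun u => t ^ (s - 1) * Real.exp (-(t + 1) * u)) (Ioi 0) ∧
      ∫ u in Ioi 0, t ^ (s - 1) * Real.exp (-(t + 1) * u) = Real.rpowIntegrand₀₁ s t 1 := by
    have hneg : -(t + 1) < 0 := by linarith
    refine ⟨(integrableOn_exp_mul_Ioi hneg 0).const_mul _, ?_⟩
    rw [integral_const_mul, integral_exp_mul_Ioi hneg, neg_div_neg_eq, mul_zero, Real.exp_zero,
      mul_one_div, Real.rpowIntegrand₀₁_eq_pow_div hs ht.le zero_le_one, mul_one]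
  have hgamma {u : ℝ} (hu : 0 < u) : ∫ t in Ioi 0, t ^ (s - 1) * Real.exp (-(t + 1) * u) =
      Real.Gamma s * (Real.exp (-u) * u ^ (1 - s - 1)) := by
    have hexp (t : ℝ) : t ^ (s - 1) * Real.exp (-(t + 1) * u) =
        Real.exp (-u) * (t ^ (s - 1) * Real.exp (-(u * t))) := by
      rw [mul_left_comm, ← Real.exp_add]
      ring_nf
    simp only [hexp]
    rw [integral_const_mul, Real.integral_rpow_mul_exp_neg_mul_Ioi hs.1 hu, one_div,
      Real.inv_rpow hu.le, ← Real.rpow_neg hu.le, sub_right_comm, sub_self, zero_sub]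
    ring
  have hprod : Integrable (fun q : ℝ × ℝ => q.1 ^ (s - 1) * Real.exp (-(q.1 + 1) * q.2))
      ((volume.restrict (Ioi 0)).prod (volume.restrict (Ioi 0))) := by
    rw [integrable_prod_iff (by fun_prop : Measurable _).aestronglyMeasurable]
    refine ⟨(ae_restrict_iff' measurableSet_Ioi).2 (Eventually.of_forall fun t ht =>
      (hlaplace ht).1), (Real.integrableOn_rpowIntegrand₀₁_Ioi hs zero_le_one).congr
      ((ae_restrict_iff' measurableSet_Ioi).2 (Eventually.of_forall fun t (ht : 0 < t) => ?_))⟩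
    simp only
    rw [← (hlaplace ht).2]
    refine integral_congr_ae (Eventually.of_forall fun u => (Real.norm_of_nonneg ?_).symm)
    positivity
  rw [← setIntegral_congr_fun measurableSet_Ioi fun t ht => (hlaplace ht).2,
    integral_integral_swap hprod, setIntegral_congr_fun measurableSet_Ioi fun u hu => hgamma hu,
    integral_const_mul, ← Real.Gamma_eq_integral (by linarith [hs.2])]

theorem tendsto_one_add_rpow_sub_rpow (hs : s ∈ Ioo (0 : ℝ) 1) :
    Tendsto (fun t : ℝ => (1 + t) ^ s - t ^ s) atTop (𝓝 0) := by
  have hzero : Tendsto (fun t : ℝ => s * t ^ (s - 1)) atTop (𝓝 0) := by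
    simpa using (tendsto_rpow_neg_atTop (sub_pos.2 hs.2)).const_mul s
  refine squeeze_zero' ?_ ?_ hzero <;> filter_upwards [eventually_gt_atTop 0] with t ht
  · exact sub_nonneg.2 (Real.rpow_le_rpow ht.le (by linarith) hs.1.le)
  · have hbern := rpow_one_add_le_one_add_mul_self (s := t⁻¹) (by linarith [inv_pos.2 ht])
      hs.1.le hs.2.le
    calc (1 + t) ^ s - t ^ s = t ^ s * ((1 + t⁻¹) ^ s - 1) := by
          rw [mul_sub_one, ← Real.mul_rpow ht.le (by positivity), mul_add, mul_one,
            mul_inv_cancel₀ ht.ne', add_comm 1 t]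
      _ ≤ t ^ s * (s * t⁻¹) := by gcongr; linarith
      _ = s * t ^ (s - 1) := by rw [Real.rpow_sub_one ht.ne']; ring

theorem integral_one_add_rpow_sub_rpow (hs : s ∈ Ioo (0 : ℝ) 1) :
    IntegrableOn (fun t : ℝ => (1 + t) ^ (s - 1) - t ^ (s - 1)) (Ioi 0) ∧
      ∫ t in Ioi (0 : ℝ), ((1 + t) ^ (s - 1) - t ^ (s - 1)) = -(1 / s) := by
  obtain ⟨hs0, hs1⟩ := hs
  have hcont : ContinuousWithinAt (fun t : ℝ => ((1 + t) ^ s - t ^ s) / s) (Ici 0) 0 :=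
    (((continuous_const.add continuous_id).rpow_const fun _ => Or.inr hs0.le).sub
      (Real.continuous_rpow_const hs0.le)).div_const s |>.continuousWithinAt
  have hderiv : ∀ t ∈ Ioi (0 : ℝ), HasDerivAt (fun t : ℝ => ((1 + t) ^ s - t ^ s) / s)
      ((1 + t) ^ (s - 1) - t ^ (s - 1)) t := by
    intro t (ht : 0 < t)
    have hshift := ((hasDerivAt_id t).const_add 1).rpow_const (p := s)
      (Or.inl (add_pos one_pos ht).ne')
    refine ((hshift.sub (Real.hasDerivAt_rpow_const (Or.inl ht.ne'))).div_const s).congr_deriv ?_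
    simp only [id]
    field_simp
  have hneg : ∀ t ∈ Ioi (0 : ℝ), (1 + t) ^ (s - 1) - t ^ (s - 1) ≤ 0 := fun t (ht : 0 < t) =>
    sub_nonpos.2 (Real.rpow_le_rpow_of_nonpos ht (by linarith) (by linarith))
  have hlim := (tendsto_one_add_rpow_sub_rpow ⟨hs0, hs1⟩).div_const s
  refine ⟨integrableOn_Ioi_deriv_of_nonpos hcont hderiv hneg hlim, ?_⟩
  rw [integral_Ioi_of_hasDerivAt_of_nonpos hcont hderiv hneg hlim]
  simp [Real.zero_rpow hs0.ne']

theorem rpow_sub_max_one_sub_inv_rpow_one_add {t r : ℝ} (ht : 0 < t) (hr : r < 1) :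
    (1 + t) ^ (s - 1) * (1 - max (1 - (1 + t)⁻¹) 0 ^ s / (1 - r * (1 + t)⁻¹)) =
      ((1 + t) ^ (s - 1) - t ^ (s - 1)) + Real.rpowIntegrand₀₁ s t (1 - r) := by
  have hinv : 1 - (1 + t)⁻¹ = t / (1 + t) := by field_simp; ring
  have hden : 0 < 1 + t - r := by linarith
  have hquot : 1 - r * (1 + t)⁻¹ = (1 + t - r) / (1 + t) := by field_simp
  rw [hinv, max_eq_left (by positivity), Real.div_rpow ht.le (by positivity),
    Real.rpowIntegrand₀₁, Real.rpow_sub_one (x := 1 + t) (by positivity),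
    Real.rpow_sub_one ht.ne', hquot, show t + (1 - r) = 1 + t - r by ring]
  field_simp
  ring

/- Splitting the integral at `x = 1` and putting `x = 1 + t` beyond, the integrand becomes
`((1 + t) ^ (s - 1) - t ^ (s - 1)) + rpowIntegrand₀₁ s t (1 - r)`. -/
theorem integral_rpow_sub_max_one_sub_inv_rpow (hs : s ∈ Ioo (0 : ℝ) 1) {r : ℝ} (hr : r < 1) :
    IntegrableOn (fun x : ℝ => x ^ (s - 1) * (1 - max (1 - x⁻¹) 0 ^ s / (1 - r * x⁻¹))) (Ioi 0) ∧
      ∫ x in Ioi (0 : ℝ), x ^ (s - 1) * (1 - max (1 - x⁻¹) 0 ^ s / (1 - r * x⁻¹)) =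
        Real.Gamma s * Real.Gamma (1 - s) * (1 - r) ^ s := by
  set f : ℝ → ℝ := fun x => x ^ (s - 1) * (1 - max (1 - x⁻¹) 0 ^ s / (1 - r * x⁻¹))
  obtain ⟨hs0, hs1⟩ := hs
  have hshort : EqOn f (fun x => x ^ (s - 1)) (Ioc 0 1) := by
    intro x hx
    simp only [f]
    rw [max_eq_right (sub_nonpos.2 ((one_le_inv₀ hx.1).2 hx.2)), Real.zero_rpow hs0.ne', zero_div,
      sub_zero, mul_one]
  have hIoc : IntegrableOn (fun x : ℝ => x ^ (s - 1)) (Ioc 0 1) :=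
    (intervalIntegral.intervalIntegrable_rpow' (by linarith)).1
  have hIoi : IntegrableOn f (Ioi 1) ∧
      ∫ x in Ioi 1, f x = -(1 / s) + Real.Gamma s * Real.Gamma (1 - s) * (1 - r) ^ s := by
    have hshift := measurePreserving_add_right volume (1 : ℝ)
    have hemb := (MeasurableEquiv.addRight (1 : ℝ)).measurableEmbedding
    have hshifted : EqOn (fun t => f (t + 1)) (fun t => ((1 + t) ^ (s - 1) - t ^ (s - 1)) +
        Real.rpowIntegrand₀₁ s t (1 - r)) (Ioi 0) := fun t ht => by
      simpa only [f, add_comm t] using rpow_sub_max_one_sub_inv_rpow_one_add ht hr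
    have hpre : (fun t : ℝ => t + 1) ⁻¹' Ioi 1 = Ioi 0 := by simp
    obtain ⟨hint, hval⟩ := integral_one_add_rpow_sub_rpow ⟨hs0, hs1⟩
    have hint' := Real.integrableOn_rpowIntegrand₀₁_Ioi (x := 1 - r) ⟨hs0, hs1⟩ (by linarith)
    constructor
    · rw [← hshift.integrableOn_comp_preimage hemb, hpre]
      exact (integrableOn_congr_fun hshifted measurableSet_Ioi).2 (hint.add hint')
    · rw [← hshift.setIntegral_preimage_emb hemb, hpre, setIntegral_congr_fun measurableSet_Ioi
        hshifted, integral_add hint hint', hval,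
        Real.integral_rpowIntegrand₀₁_eq_rpow_mul_const ⟨hs0, hs1⟩ (by linarith),
        integral_rpowIntegrand₀₁_one ⟨hs0, hs1⟩]
      ring
  rw [← Ioc_union_Ioi_eq_Ioi zero_le_one]
  refine ⟨((integrableOn_congr_fun hshort measurableSet_Ioc).2 hIoc).union hIoi.1, ?_⟩
  rw [setIntegral_union Ioc_disjoint_Ioi_same measurableSet_Ioi
      ((integrableOn_congr_fun hshort measurableSet_Ioc).2 hIoc) hIoi.1, hIoi.2,
    setIntegral_congr_fun measurableSet_Ioc hshort, ← intervalIntegral.integral_of_le zero_le_one,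
    integral_rpow (Or.inl (by linarith))]
  simp [Real.zero_rpow hs0.ne']

theorem integral_one_sub_max_one_sub_sq_rpow (hs : s ∈ Ioo (0 : ℝ) 1) {r : ℝ} (hr : r < 1) :
    IntegrableOn (fun t : ℝ =>
      (1 - max (1 - t ^ 2) 0 ^ s / (1 - r * t ^ 2)) / t ^ (1 + 2 * s)) (Ioi 0) ∧
    ∫ t in Ioi (0 : ℝ), (1 - max (1 - t ^ 2) 0 ^ s / (1 - r * t ^ 2)) / t ^ (1 + 2 * s) =
        Real.Gamma s * Real.Gamma (1 - s) * (1 - r) ^ s / 2 := by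
  set f : ℝ → ℝ := fun t => (1 - max (1 - t ^ 2) 0 ^ s / (1 - r * t ^ 2)) / t ^ (1 + 2 * s)
  have hsubst : EqOn (fun x : ℝ => (|(-1 / 2 : ℝ)| * x ^ (-1 / 2 - 1 : ℝ)) • f (x ^ (-1 / 2 : ℝ)))
      (fun x => 2⁻¹ * (x ^ (s - 1) * (1 - max (1 - x⁻¹) 0 ^ s / (1 - r * x⁻¹)))) (Ioi 0) := by
    intro x (hx : 0 < x)
    have hsq : (x ^ (-1 / 2 : ℝ)) ^ 2 = x⁻¹ := by
      rw [← Real.rpow_natCast, ← Real.rpow_mul hx.le, ← Real.rpow_neg_one]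
      norm_num
    have hpow : x ^ (-1 / 2 - 1 : ℝ) / (x ^ (-1 / 2 : ℝ)) ^ (1 + 2 * s) = x ^ (s - 1) := by
      rw [← Real.rpow_mul hx.le, ← Real.rpow_sub hx]
      ring_nf
    simp only [f, smul_eq_mul]
    rw [hsq, ← hpow, show |(-1 / 2 : ℝ)| = 2⁻¹ by norm_num [abs_of_neg]]
    ring
  obtain ⟨hint, hval⟩ := integral_rpow_sub_max_one_sub_inv_rpow hs hr
  have hp : (-1 / 2 : ℝ) ≠ 0 := by norm_num
  constructor
  · rw [← integrableOn_Ioi_comp_rpow_iff f hp]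
    exact (integrableOn_congr_fun hsubst measurableSet_Ioi).2 (hint.const_mul _)
  · rw [← integral_comp_rpow_Ioi f hp, setIntegral_congr_fun measurableSet_Ioi hsubst,
      integral_const_mul, hval]
    ring

end HalfLine

section SecondDifference

variable {E : Type*} [NormedAddCommGroup E] [InnerProductSpace ℝ E] {s : ℝ}

/-- The integrand `(2 u x - u (x + y) - u (x - y)) / ‖y‖ ^ (dim E + 2 s)` obtained by averaging the
principal value integral over `y` and `-y`; unlike the original one it is usually integrable. -/
noncomputable def secondDiffQuotient (s : ℝ) (u : E → ℝ) (x y : E) : ℝ :=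
  (2 * u x - u (x + y) - u (x - y)) / ‖y‖ ^ (dim E + 2 * s)

theorem fracDiffQuotient_add_add_fracDiffQuotient_sub (u : E → ℝ) (x y : E) :
    fracDiffQuotient s u x (x + y) + fracDiffQuotient s u x (x - y) =
      secondDiffQuotient s u x y := by
  simp only [fracDiffQuotient, secondDiffQuotient, add_sub_cancel_left, sub_sub_cancel_left,
    norm_neg]
  ring

variable [FiniteDimensional ℝ E] [MeasurableSpace E] [BorelSpace E]

theorem setIntegral_fracDiffQuotient_eq_setIntegral_secondDiffQuotient {u : E → ℝ} {x : E} {ρ : ℝ}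
    (hint : IntegrableOn (fracDiffQuotient s u x) (ball x ρ)ᶜ) :
    ∫ y in (ball x ρ)ᶜ, fracDiffQuotient s u x y =
      2⁻¹ * ∫ y in (ball 0 ρ)ᶜ, secondDiffQuotient s u x y := by
  have hadd := measurePreserving_add_left volume x
  have hsub := Measure.measurePreserving_sub_left volume x
  have hadd_emb := measurableEmbedding_addLeft x
  have hsub_emb := (MeasurableEquiv.subLeft x).measurableEmbedding
  have hadd_pre : (x + ·) ⁻¹' (ball x ρ)ᶜ = (ball 0 ρ)ᶜ := by ext; simp [dist_eq_norm]
  have hsub_pre : (x - ·) ⁻¹' (ball x ρ)ᶜ = (ball 0 ρ)ᶜ := by ext; simp [dist_eq_norm]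
  have hadd_int : IntegrableOn (fun y => fracDiffQuotient s u x (x + y)) _ :=
    (hadd.integrableOn_comp_preimage hadd_emb).2 hint
  have hsub_int : IntegrableOn (fun y => fracDiffQuotient s u x (x - y)) _ :=
    (hsub.integrableOn_comp_preimage hsub_emb).2 hint
  have hadd_val := hadd.setIntegral_preimage_emb hadd_emb (fracDiffQuotient s u x) (ball x ρ)ᶜ
  have hsub_val := hsub.setIntegral_preimage_emb hsub_emb (fracDiffQuotient s u x) (ball x ρ)ᶜ
  rw [hadd_pre] at hadd_int hadd_val
  rw [hsub_pre] at hsub_int hsub_val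
  simp only [← fracDiffQuotient_add_add_fracDiffQuotient_sub]
  rw [integral_add hadd_int hsub_int, hadd_val, hsub_val]
  ring

variable [Nontrivial E]

theorem hasPrincipalValue_of_integrable_secondDiffQuotient {u : E → ℝ} {x : E}
    (hint : ∀ ρ > 0, IntegrableOn (fracDiffQuotient s u x) (ball x ρ)ᶜ)
    (h : Integrable (secondDiffQuotient s u x)) :
    HasPrincipalValue s u x (2⁻¹ * ∫ y, secondDiffQuotient s u x y) := by
  have hcover : AECover (volume : Measure E) (𝓝[>] (0 : ℝ)) fun ρ => (ball 0 ρ)ᶜ := by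
    refine ⟨?_, fun _ => measurableSet_ball.compl⟩
    filter_upwards [Measure.ae_ne volume (0 : E)] with y hy
    filter_upwards [nhdsWithin_le_nhds (Iio_mem_nhds (norm_pos_iff.2 hy))] with ρ hρ
    simpa using (mem_Iio.1 hρ).le
  refine ((hcover.integral_tendsto_of_countably_generated h).const_mul 2⁻¹).congr' ?_
  filter_upwards [self_mem_nhdsWithin] with ρ hρ
  exact (setIntegral_fracDiffQuotient_eq_setIntegral_secondDiffQuotient (hint ρ hρ)).symm

theorem integrable_min_sq_one_div_norm_rpow (hs : s ∈ Ioo (0 : ℝ) 1) :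
    Integrable fun y : E => min (‖y‖ ^ 2) 1 / ‖y‖ ^ (dim E + 2 * s) := by
  have hdim : ((dim E - 1 : ℕ) : ℝ) = dim E - 1 := Nat.cast_pred Module.finrank_pos
  refine (integrable_fun_norm_addHaar volume
    (f := fun t => min (t ^ 2) 1 / t ^ (dim E + 2 * s))).2 ?_
  have hpow {t : ℝ} (ht : 0 < t) (k : ℝ) :
      t ^ (dim E - 1) • (t ^ k / t ^ (dim E + 2 * s)) = t ^ (k - 1 - 2 * s) := by
    rw [smul_eq_mul, ← Real.rpow_natCast, hdim, ← Real.rpow_sub ht, ← Real.rpow_add ht]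
    ring_nf
  rw [← Ioc_union_Ioi_eq_Ioi zero_le_one]
  refine IntegrableOn.union ?_ ?_
  · refine (integrableOn_congr_fun (fun t ht => ?_) measurableSet_Ioc).2
      ((intervalIntegral.intervalIntegrable_rpow' (r := 2 - 1 - 2 * s) (by linarith [hs.2])).1)
    rw [← hpow ht.1 2, Real.rpow_two, min_eq_left (pow_le_one₀ ht.1.le ht.2)]
  · refine (integrableOn_congr_fun (fun t (ht : 1 < t) => ?_) measurableSet_Ioi).2
      (integrableOn_Ioi_rpow_of_lt (a := 0 - 1 - 2 * s) (by linarith [hs.1]) one_pos)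
    rw [← hpow (one_pos.trans ht) 0, Real.rpow_zero, min_eq_right (one_le_pow₀ ht.le)]

theorem integrable_secondDiffQuotient (hs : s ∈ Ioo (0 : ℝ) 1) {u : E → ℝ} (hu : Measurable u)
    {x : E} {C : ℝ} (hC : ∀ y, |2 * u x - u (x + y) - u (x - y)| ≤ C * min (‖y‖ ^ 2) 1) :
    Integrable (secondDiffQuotient s u x) := by
  refine ((integrable_min_sq_one_div_norm_rpow hs).const_mul C).mono' ?_
    (Eventually.of_forall fun y => ?_)
  · unfold secondDiffQuotient
    exact (by fun_prop : Measurable _).aestronglyMeasurable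
  · rw [secondDiffQuotient, norm_div, Real.norm_eq_abs, Real.norm_of_nonneg (by positivity),
      mul_div_assoc']
    gcongr
    exact hC y

end SecondDifference

section BallWeight

open EuclideanGeometry

variable {E : Type*} [NormedAddCommGroup E] {s : ℝ}

/-- The weight `(1 - ‖x‖ ^ 2)₊ ^ s`, which solves the torsion problem on the unit ball up to a
constant. -/
noncomputable def ballWeight (s : ℝ) (x : E) : ℝ := max (1 - ‖x‖ ^ 2) 0 ^ s

theorem ballWeight_of_norm_le_one {x : E} (hx : ‖x‖ ≤ 1) : ballWeight s x = (1 - ‖x‖ ^ 2) ^ s := by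
  rw [ballWeight, max_eq_left (sub_nonneg.2 (pow_le_one₀ (norm_nonneg _) hx))]

theorem ballWeight_of_one_le_norm (hs : s ≠ 0) {x : E} (hx : 1 ≤ ‖x‖) : ballWeight s x = 0 := by
  rw [ballWeight, max_eq_right (sub_nonpos.2 (one_le_pow₀ hx)), Real.zero_rpow hs]

theorem ballWeight_nonneg (x : E) : 0 ≤ ballWeight s x := by unfold ballWeight; positivity

theorem ballWeight_le_one (hs : 0 ≤ s) (x : E) : ballWeight s x ≤ 1 :=
  Real.rpow_le_one (le_max_right _ _) (max_le (by linarith [sq_nonneg ‖x‖]) zero_le_one) hs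

theorem abs_ballWeight_le_one (hs : 0 ≤ s) (x : E) : |ballWeight s x| ≤ 1 :=
  (abs_of_nonneg (ballWeight_nonneg x)).trans_le (ballWeight_le_one hs x)

theorem continuous_ballWeight (hs : 0 ≤ s) : Continuous (ballWeight (E := E) s) :=
  Continuous.rpow_const (by fun_prop) fun _ => Or.inr hs

theorem differentiableAt_ballWeight [InnerProductSpace ℝ E] {x : E} (hx : ‖x‖ < 1) :
    DifferentiableAt ℝ (ballWeight s) x := by
  have hpos : 0 < 1 - ‖x‖ ^ 2 := sub_pos.2 (pow_lt_one₀ (norm_nonneg _) hx two_ne_zero)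
  have hdiff : DifferentiableAt ℝ (fun y : E => (1 - ‖y‖ ^ 2) ^ s) x :=
    ((differentiableAt_const 1).sub (differentiableAt_id.norm_sq ℝ)).rpow_const (Or.inl hpos.ne')
  refine hdiff.congr_of_eventuallyEq ?_
  filter_upwards [isOpen_ball.mem_nhds (mem_ball_zero_iff.2 hx)] with y hy
  exact ballWeight_of_norm_le_one (mem_ball_zero_iff.1 hy).le

theorem abs_max_zero_rpow_sub_le (hs : s ∈ Ioo (0 : ℝ) 1) (y : ℝ) :
    |max y 0 ^ s - (1 + s * (y - 1))| ≤ (y - 1) ^ 2 := by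
  obtain ⟨hs0, hs1⟩ := hs
  rcases le_total y 0 with hy | hy
  · rw [max_eq_right hy, Real.zero_rpow hs0.ne', abs_le]
    constructor <;> nlinarith [mul_nonneg hs0.le (neg_nonneg.2 hy)]
  rw [max_eq_left hy]
  have hupper : y ^ s ≤ 1 + s * (y - 1) := by
    simpa using rpow_one_add_le_one_add_mul_self (s := y - 1) (by linarith) hs0.le hs1.le
  have hlower : y * (1 - (1 - s) * (y - 1)) ≤ y ^ s := by
    rcases hy.eq_or_lt with rfl | hy0
    · simp [Real.zero_rpow hs0.ne']
    have hconj : y ^ (1 - s) ≤ 1 + (1 - s) * (y - 1) := by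
      simpa using rpow_one_add_le_one_add_mul_self (s := y - 1) (p := 1 - s) (by linarith)
        (by linarith) (by linarith)
    have hmul : y ^ s * y ^ (1 - s) = y := by rw [← Real.rpow_add hy0]; simp
    have hpow : 0 < y ^ s := by positivity
    rcases le_total (1 - (1 - s) * (y - 1)) 0 with hneg | hpos
    · exact (mul_nonpos_of_nonneg_of_nonpos hy hneg).trans hpow.le
    calc y * (1 - (1 - s) * (y - 1))
        = y ^ s * (y ^ (1 - s) * (1 - (1 - s) * (y - 1))) := by rw [← mul_assoc, hmul]
      _ ≤ y ^ s * ((1 + (1 - s) * (y - 1)) * (1 - (1 - s) * (y - 1))) := by gcongr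
      _ ≤ y ^ s * 1 := by gcongr; nlinarith [sq_nonneg ((1 - s) * (y - 1))]
      _ = y ^ s := mul_one _
  rw [abs_le]
  constructor <;> nlinarith [sq_nonneg (y - 1), mul_nonneg hs0.le (sq_nonneg (y - 1))]

theorem abs_max_zero_rpow_sub_rpow_sub_le (hs : s ∈ Ioo (0 : ℝ) 1) {γ : ℝ} (hγ : 0 < γ) (δ : ℝ) :
    |max (γ + δ) 0 ^ s - γ ^ s - s * γ ^ (s - 1) * δ| ≤ γ ^ (s - 2) * δ ^ 2 := by
  have hscale : max (γ + δ) 0 = γ * max (1 + δ / γ) 0 := by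
    rw [mul_max_of_nonneg _ _ hγ.le, mul_zero, mul_add, mul_one, mul_div_cancel₀ _ hγ.ne']
  have htaylor := abs_max_zero_rpow_sub_le hs (1 + δ / γ)
  have hpow : 0 < γ ^ s := by positivity
  calc |max (γ + δ) 0 ^ s - γ ^ s - s * γ ^ (s - 1) * δ|
      = |γ ^ s * (max (1 + δ / γ) 0 ^ s - (1 + s * (1 + δ / γ - 1)))| := by
        rw [hscale, Real.mul_rpow hγ.le (le_max_right _ _), Real.rpow_sub_one hγ.ne']
        ring_nf
    _ = γ ^ s * |max (1 + δ / γ) 0 ^ s - (1 + s * (1 + δ / γ - 1))| := by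
        rw [abs_mul, abs_of_pos hpow]
    _ ≤ γ ^ s * (1 + δ / γ - 1) ^ 2 := by gcongr
    _ = γ ^ (s - 2) * δ ^ 2 := by
        rw [Real.rpow_sub hγ, Real.rpow_two]
        ring

theorem abs_secondDiff_ballWeight_le [InnerProductSpace ℝ E] (hs : s ∈ Ioo (0 : ℝ) 1) {x y : E}
    (hx : ‖x‖ < 1) (hy : ‖y‖ ≤ 1) :
    |2 * ballWeight s x - ballWeight s (x + y) - ballWeight s (x - y)| ≤
      (2 * (s * (1 - ‖x‖ ^ 2) ^ (s - 1)) + 18 * (1 - ‖x‖ ^ 2) ^ (s - 2)) * ‖y‖ ^ 2 := by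
  set γ := 1 - ‖x‖ ^ 2
  have hγ : 0 < γ := sub_pos.2 (pow_lt_one₀ (norm_nonneg _) hx two_ne_zero)
  have hinner : |⟪x, y⟫| ≤ ‖y‖ := (abs_real_inner_le_norm x y).trans
    (mul_le_of_le_one_left (norm_nonneg y) hx.le)
  have hadd : 1 - ‖x + y‖ ^ 2 = γ + (-2 * ⟪x, y⟫ - ‖y‖ ^ 2) := by
    rw [norm_add_sq_real]; ring
  have hsub : 1 - ‖x - y‖ ^ 2 = γ + (2 * ⟪x, y⟫ - ‖y‖ ^ 2) := by
    rw [norm_sub_sq_real]; ring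
  have hsq {σ : ℝ} (hσ : |σ| = 2) :
      γ ^ (s - 2) * (σ * ⟪x, y⟫ - ‖y‖ ^ 2) ^ 2 ≤ γ ^ (s - 2) * (9 * ‖y‖ ^ 2) := by
    have hδ : |σ * ⟪x, y⟫ - ‖y‖ ^ 2| ≤ 3 * ‖y‖ := by
      refine (abs_sub _ _).trans ?_
      rw [abs_mul, hσ, abs_of_nonneg (sq_nonneg ‖y‖)]
      nlinarith [norm_nonneg y]
    gcongr
    calc (σ * ⟪x, y⟫ - ‖y‖ ^ 2) ^ 2 ≤ (3 * ‖y‖) ^ 2 := sq_le_sq' (abs_le.1 hδ).1 (abs_le.1 hδ).2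
      _ = 9 * ‖y‖ ^ 2 := by ring
  have hT₁ := (abs_max_zero_rpow_sub_rpow_sub_le hs hγ (-2 * ⟪x, y⟫ - ‖y‖ ^ 2)).trans
    (hsq (by norm_num))
  have hT₂ := (abs_max_zero_rpow_sub_rpow_sub_le hs hγ (2 * ⟪x, y⟫ - ‖y‖ ^ 2)).trans
    (hsq (by norm_num))
  have hlin : 0 ≤ s * γ ^ (s - 1) * ‖y‖ ^ 2 := by have := hs.1; positivity
  rw [ballWeight_of_norm_le_one hx.le, ballWeight, ballWeight, hadd, hsub]
  rw [abs_le] at hT₁ hT₂ ⊢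
  constructor <;> linarith

theorem exists_abs_secondDiff_ballWeight_le [InnerProductSpace ℝ E] (hs : s ∈ Ioo (0 : ℝ) 1)
    {x : E} (hx : ‖x‖ < 1) : ∃ C, ∀ y : E,
      |2 * ballWeight s x - ballWeight s (x + y) - ballWeight s (x - y)| ≤ C * min (‖y‖ ^ 2) 1 := by
  refine ⟨max (2 * (s * (1 - ‖x‖ ^ 2) ^ (s - 1)) + 18 * (1 - ‖x‖ ^ 2) ^ (s - 2)) 4, fun y => ?_⟩
  rcases le_total ‖y‖ 1 with hy | hy
  · rw [min_eq_left (pow_le_one₀ (norm_nonneg y) hy)]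
    exact (abs_secondDiff_ballWeight_le hs hx hy).trans (by gcongr; exact le_max_left _ _)
  · rw [min_eq_right (one_le_pow₀ hy), mul_one]
    refine le_trans ?_ (le_max_right _ _)
    have h₁ := ballWeight_le_one (s := s) hs.1.le x
    have h₂ := ballWeight_le_one (s := s) hs.1.le (x + y)
    have h₃ := ballWeight_le_one (s := s) hs.1.le (x - y)
    rw [abs_le]
    constructor <;> linarith [ballWeight_nonneg (s := s) x, ballWeight_nonneg (s := s) (x + y),
      ballWeight_nonneg (s := s) (x - y)]

theorem one_sub_norm_inversion_sq [InnerProductSpace ℝ E] {p y : E} {a : ℝ}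
    (ha : a ^ 2 = ‖p‖ ^ 2 - 1) (hy : y ≠ p) :
    1 - ‖inversion p a y‖ ^ 2 = a ^ 2 / ‖y - p‖ ^ 2 * (1 - ‖y‖ ^ 2) := by
  have hd : ‖y - p‖ ^ 2 ≠ 0 := pow_ne_zero 2 (norm_ne_zero_iff.2 (sub_ne_zero.2 hy))
  set c := a ^ 2 / ‖y - p‖ ^ 2
  have hc : c * ‖y - p‖ ^ 2 = a ^ 2 := div_mul_cancel₀ _ hd
  have hinv : inversion p a y = p + c • (y - p) := by
    rw [inversion, dist_eq_norm, div_pow, vsub_eq_sub, vadd_eq_add, add_comm]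
  have hnorm := norm_add_sq_real p (y - p)
  rw [add_sub_cancel] at hnorm
  rw [hinv, norm_add_sq_real, real_inner_smul_right, norm_smul, mul_pow, Real.norm_eq_abs, sq_abs]
  linear_combination c * hnorm + (1 - c) * hc + (1 - c) * ha

theorem ballWeight_inversion [InnerProductSpace ℝ E] {p y : E} {a : ℝ}
    (ha : a ^ 2 = ‖p‖ ^ 2 - 1) (hy : y ≠ p) :
    ballWeight s (inversion p a y) = (a ^ 2 / ‖y - p‖ ^ 2) ^ s * ballWeight s y := by
  have hc : 0 ≤ a ^ 2 / ‖y - p‖ ^ 2 := by positivity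
  rw [ballWeight, one_sub_norm_inversion_sq ha hy, ballWeight,
    ← Real.mul_rpow hc (le_max_right _ _), mul_max_of_nonneg _ _ hc, mul_zero]

end BallWeight

section Torsion

open EuclideanGeometry

variable {s : ℝ}

theorem secondDiffQuotient_ballWeight_div (hs : s ∈ Ioo (0 : ℝ) 1) {x : ℝ} (hx : |x| < 1) (y : ℝ) :
    secondDiffQuotient s (fun y => ballWeight s y / (1 - x * y)) 0 y =
      2 * ((1 - max (1 - ‖y‖ ^ 2) 0 ^ s / (1 - x ^ 2 * ‖y‖ ^ 2)) / ‖y‖ ^ (1 + 2 * s)) := by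
  have hzero : ballWeight s (0 : ℝ) = 1 := by simp [ballWeight]
  have hsym : ballWeight s (-y) = ballWeight s y := by simp [ballWeight]
  have hsum : ballWeight s y / (1 - x * y) + ballWeight s y / (1 + x * y) =
      2 * (ballWeight s y / (1 - x ^ 2 * ‖y‖ ^ 2)) := by
    rcases le_or_gt 1 ‖y‖ with hy | hy
    · simp [ballWeight_of_one_le_norm hs.1.ne' hy]
    have hxy : |x * y| < 1 := by
      rw [abs_mul]
      exact mul_lt_one_of_nonneg_of_lt_one_left (abs_nonneg x) hx hy.le
    obtain ⟨hneg, hpos⟩ := abs_lt.1 hxy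
    have hsub : 1 - x * y ≠ 0 := by linarith
    have hadd : 1 + x * y ≠ 0 := by linarith
    rw [show 1 - x ^ 2 * ‖y‖ ^ 2 = (1 - x * y) * (1 + x * y) by
      rw [Real.norm_eq_abs, sq_abs]; ring]
    field_simp
    ring
  rw [secondDiffQuotient, Module.finrank_self, Nat.cast_one, zero_add, zero_sub, hzero, hsym,
    mul_zero, sub_zero, div_one, mul_neg, sub_neg_eq_add, sub_sub, hsum, ballWeight]
  ring

theorem abs_ballWeight_div_le (hs : 0 < s) {x : ℝ} (hx : |x| < 1) (y : ℝ) :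
    |ballWeight s y / (1 - x * y)| ≤ 1 / (1 - |x|) := by
  rcases le_or_gt 1 ‖y‖ with hy | hy
  · rw [ballWeight_of_one_le_norm hs.ne' hy, zero_div, abs_zero]
    exact (one_div_pos.2 (sub_pos.2 hx)).le
  · have hxy : |x * y| ≤ |x| := by
      rw [abs_mul]
      exact mul_le_of_le_one_right (abs_nonneg x) hy.le
    have hden : 1 - |x| ≤ |1 - x * y| := by
      linarith [le_abs_self (1 - x * y), (abs_le.1 hxy).2]
    rw [abs_div]
    have := sub_pos.2 hx
    gcongr
    exact abs_ballWeight_le_one hs.le y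

theorem hasPrincipalValue_ballWeight_div (hs : s ∈ Ioo (0 : ℝ) 1) {x : ℝ} (hx : |x| < 1) :
    HasPrincipalValue s (fun y : ℝ => ballWeight s y / (1 - x * y)) 0
      (Real.Gamma s * Real.Gamma (1 - s) * (1 - x ^ 2) ^ s) := by
  obtain ⟨hint, hval⟩ := integral_one_sub_max_one_sub_sq_rpow hs ((sq_lt_one_iff_abs_lt_one x).2 hx)
  have hquot := funext (secondDiffQuotient_ballWeight_div hs hx)
  have hmeas : Measurable fun y : ℝ => ballWeight s y / (1 - x * y) :=
    (continuous_ballWeight hs.1.le).measurable.div (by fun_prop)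
  have hdiff : Integrable (secondDiffQuotient s (fun y : ℝ => ballWeight s y / (1 - x * y)) 0) := by
    rw [hquot]
    refine Integrable.const_mul ((integrable_fun_norm_addHaar volume (f := fun t =>
      (1 - max (1 - t ^ 2) 0 ^ s / (1 - x ^ 2 * t ^ 2)) / t ^ (1 + 2 * s))).2 ?_) 2
    simpa using hint
  convert! hasPrincipalValue_of_integrable_secondDiffQuotient (fun ρ hρ =>
    integrableOn_fracDiffQuotient hs.1 hmeas (abs_ballWeight_div_le hs.1 hx) 0 hρ) hdiff using 1
  rw [hquot, integral_const_mul, integral_fun_norm_addHaar volume (fun t =>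
      (1 - max (1 - t ^ 2) 0 ^ s / (1 - x ^ 2 * t ^ 2)) / t ^ (1 + 2 * s)), Module.finrank_self,
    Nat.sub_self]
  simp only [pow_zero, one_smul, smul_eq_mul, one_mul, measureReal_def, Real.volume_ball]
  rw [hval]
  norm_num
  ring

theorem one_sub_mul_inversion_inv {x y a : ℝ} (hx : x ≠ 0) (ha : a ^ 2 = x⁻¹ ^ 2 - 1)
    (hxy : 1 - x * y ≠ 0) :
    1 - x * inversion x⁻¹ a y = (1 - x ^ 2) / (1 - x * y) := by
  have hsub : y - x⁻¹ = -(1 - x * y) / x := by field_simp; ring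
  rw [inversion, div_pow, Real.dist_eq, sq_abs, vsub_eq_sub, vadd_eq_add, hsub, ha, smul_eq_mul]
  field_simp
  ring

theorem kelvinTransform_ballWeight_div (hs : s ≠ 0) {x a : ℝ} (hx : |x| < 1) (hx0 : x ≠ 0)
    (ha : a ^ 2 = x⁻¹ ^ 2 - 1) (y : ℝ) :
    kelvinTransform s x⁻¹ a (fun y => ballWeight s y / (1 - x * y)) y =
      (a ^ 2) ^ (s - 1) / |x| * ballWeight s y := by
  have hx2 : 0 < 1 - x ^ 2 := sub_pos.2 ((sq_lt_one_iff_abs_lt_one x).2 hx)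
  have ha' : a ^ 2 = ‖x⁻¹‖ ^ 2 - 1 := by rw [ha, Real.norm_eq_abs, sq_abs]
  have hax : a ^ 2 = (1 - x ^ 2) / x ^ 2 := by rw [ha]; field_simp
  have ha0 : 0 < a ^ 2 := by rw [hax]; positivity
  simp only [kelvinTransform, rieszKernel, Module.finrank_self, Nat.cast_one]
  rcases eq_or_ne y x⁻¹ with rfl | hyp
  · have hp : 1 ≤ ‖x⁻¹‖ := by
      rw [norm_inv]
      exact (one_le_inv₀ (norm_pos_iff.2 hx0)).2 hx.le
    rw [inversion_self, ballWeight_of_one_le_norm hs hp]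
    simp
  rw [ballWeight_inversion ha' hyp]
  rcases le_or_gt 1 ‖y‖ with hy | hy
  · simp [ballWeight_of_one_le_norm hs hy]
  have hxy : 0 < 1 - x * y := by
    have : |x * y| < 1 := by
      rw [abs_mul]
      exact mul_lt_one_of_nonneg_of_lt_one_left (abs_nonneg x) hx hy.le
    linarith [(abs_lt.1 this).2]
  have hd : 0 < ‖y - x⁻¹‖ := norm_pos_iff.2 (sub_ne_zero.2 hyp)
  have hdx : 1 - x * y = ‖y - x⁻¹‖ * |x| := by
    rw [← Real.norm_eq_abs x, ← norm_mul, sub_mul, inv_mul_cancel₀ hx0, norm_sub_rev, mul_comm y,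
      Real.norm_of_nonneg hxy.le]
  rw [one_sub_mul_inversion_inv hx0 ha hxy.ne', hdx, Real.div_rpow (sq_nonneg _) (sq_nonneg _),
    Real.rpow_sub_one hd.ne', Real.rpow_sub_one ha0.ne', ← Real.rpow_natCast ‖y - x⁻¹‖ 2,
    ← Real.rpow_mul hd.le, Nat.cast_two, hax]
  have := abs_pos.2 hx0
  rw [← sq_abs x] at hx2 ⊢
  generalize ‖y - x⁻¹‖ = d at hd ⊢
  field_simp

theorem rpow_four_mul_mul_rpow_neg_mul_rpow {a r : ℝ} (ha : 0 < a) (hr : 0 < r) (s : ℝ) :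
    a ^ (4 * s) * (a ^ 2 * r) ^ (-(1 + 2 * s)) * (a ^ 2 * r ^ 2) ^ s = (a ^ 2) ^ (s - 1) / r := by
  have hpow : a ^ (4 * s) = (a ^ 2) ^ (2 * s) := by
    rw [← Real.rpow_natCast, ← Real.rpow_mul ha.le, Nat.cast_two]
    ring_nf
  have hpow' : (r ^ 2) ^ s = r ^ (2 * s) := by
    rw [← Real.rpow_natCast, ← Real.rpow_mul hr.le, Nat.cast_two]
  have ha2 : 0 < a ^ 2 := by positivity
  rw [hpow, Real.mul_rpow ha2.le hr.le, Real.mul_rpow ha2.le (sq_nonneg r), hpow',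
    Real.rpow_neg ha2.le, Real.rpow_neg hr.le, Real.rpow_add ha2, Real.rpow_add hr,
    Real.rpow_one, Real.rpow_one, Real.rpow_sub_one ha2.ne']
  field_simp

theorem hasPrincipalValue_ballWeight_real (hs : s ∈ Ioo (0 : ℝ) 1) {x : ℝ} (hx : |x| < 1) :
    HasPrincipalValue s (ballWeight s) x (Real.Gamma s * Real.Gamma (1 - s)) := by
  rcases eq_or_ne x 0 with rfl | hx0
  · simpa using hasPrincipalValue_ballWeight_div hs hx
  have hx2 : 0 < 1 - x ^ 2 := sub_pos.2 ((sq_lt_one_iff_abs_lt_one x).2 hx)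
  have hsq : x⁻¹ ^ 2 - 1 = (1 - x ^ 2) / x ^ 2 := by field_simp
  have hpos : 0 < x⁻¹ ^ 2 - 1 := by rw [hsq]; positivity
  set a := √(x⁻¹ ^ 2 - 1)
  have ha : a ^ 2 = x⁻¹ ^ 2 - 1 := Real.sq_sqrt hpos.le
  have hinv : inversion x⁻¹ a x = 0 := by
    have := one_sub_mul_inversion_inv hx0 ha (y := x) (by rw [← sq]; exact hx2.ne')
    rw [← sq, div_self hx2.ne', sub_eq_self] at this
    exact (mul_eq_zero.1 this).resolve_left hx0
  have hxp : x ≠ x⁻¹ := fun h => hpos.ne' (by rw [← h, sub_eq_zero, sq]; nth_rw 2 [h]; simp [hx0])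
  have hmeas : Measurable fun y : ℝ => ballWeight s y / (1 - x * y) :=
    (continuous_ballWeight hs.1.le).measurable.div (by fun_prop)
  have hdiff : DifferentiableAt ℝ (fun y : ℝ => ballWeight s y / (1 - x * y)) 0 :=
    (differentiableAt_ballWeight (by simp)).div (by fun_prop) (by simp)
  have hkelvin := (hinv.symm ▸ hasPrincipalValue_ballWeight_div hs hx :
    HasPrincipalValue s _ (inversion x⁻¹ a x) _).kelvinTransform hs hxp (Real.sqrt_pos.2 hpos) hmeas
      (abs_ballWeight_div_le hs.1 hx) (hinv.symm ▸ hdiff)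
  rw [funext (kelvinTransform_ballWeight_div hs.1.ne' hx hx0 ha)] at hkelvin
  have hapos : 0 < a := Real.sqrt_pos.2 hpos
  have hdist : ‖x - x⁻¹‖ = a ^ 2 * |x| := by
    rw [ha, hsq, Real.norm_eq_abs, show x - x⁻¹ = -((1 - x ^ 2) / x) by field_simp; ring,
      abs_neg, abs_div, abs_of_pos hx2, ← sq_abs x]
    field_simp
  have hone : 1 - x ^ 2 = a ^ 2 * |x| ^ 2 := by rw [ha, hsq, sq_abs]; field_simp
  convert! hkelvin.const_mul ((a ^ 2) ^ (s - 1) / |x|)⁻¹ using 1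
  · funext y
    rw [inv_mul_cancel_left₀ (by positivity)]
  · rw [eq_inv_mul_iff_mul_eq₀ (by positivity),
      ← rpow_four_mul_mul_rpow_neg_mul_rpow hapos (abs_pos.2 hx0) s, hdist, hone,
      Module.finrank_self, Nat.cast_one]
    ring

section

variable {E : Type*} [NormedAddCommGroup E] [InnerProductSpace ℝ E]

theorem ballWeight_add_smul {x θ : E} (hθ : ‖θ‖ = 1) {R : ℝ} (hR : 0 < R)
    (hRx : R ^ 2 = 1 - ‖x‖ ^ 2 + ⟪x, θ⟫ ^ 2) (t : ℝ) :
    ballWeight s (x + (R * t) • θ) = (R ^ 2) ^ s * ballWeight s (⟪x, θ⟫ / R + t) := by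
  have hnorm : 1 - ‖x + (R * t) • θ‖ ^ 2 = R ^ 2 * (1 - ‖⟪x, θ⟫ / R + t‖ ^ 2) := by
    rw [norm_add_sq_real, real_inner_smul_right, norm_smul, hθ, mul_one, Real.norm_eq_abs,
      Real.norm_eq_abs, sq_abs, sq_abs]
    field_simp
    linear_combination -hRx
  rw [ballWeight, ballWeight, hnorm, ← Real.mul_rpow (sq_nonneg R) (le_max_right _ _),
    mul_max_of_nonneg _ _ (sq_nonneg R), mul_zero]

variable [FiniteDimensional ℝ E] [MeasurableSpace E] [BorelSpace E] [Nontrivial E]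

theorem integrable_secondDiffQuotient_ballWeight (hs : s ∈ Ioo (0 : ℝ) 1) {x : E} (hx : ‖x‖ < 1) :
    Integrable (secondDiffQuotient s (ballWeight s) x) :=
  have ⟨_, hC⟩ := exists_abs_secondDiff_ballWeight_le hs hx
  integrable_secondDiffQuotient hs (continuous_ballWeight hs.1.le).measurable hC

theorem hasPrincipalValue_ballWeight_integral (hs : s ∈ Ioo (0 : ℝ) 1) {x : E} (hx : ‖x‖ < 1) :
    HasPrincipalValue s (ballWeight s) x (2⁻¹ * ∫ y, secondDiffQuotient s (ballWeight s) x y) :=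
  hasPrincipalValue_of_integrable_secondDiffQuotient (fun _ hρ => integrableOn_fracDiffQuotient hs.1
    (continuous_ballWeight hs.1.le).measurable (abs_ballWeight_le_one hs.1.le) x hρ)
    (integrable_secondDiffQuotient_ballWeight hs hx)

end

theorem integral_secondDiff_ballWeight_real (hs : s ∈ Ioo (0 : ℝ) 1) {x : ℝ} (hx : |x| < 1) :
    ∫ t in Ioi 0, (2 * ballWeight s x - ballWeight s (x + t) - ballWeight s (x - t)) /
      t ^ (1 + 2 * s) = Real.Gamma s * Real.Gamma (1 - s) := by
  set f : ℝ → ℝ := fun t =>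
    (2 * ballWeight s x - ballWeight s (x + t) - ballWeight s (x - t)) / t ^ (1 + 2 * s)
  have heven (y : ℝ) : secondDiffQuotient s (ballWeight s) x y = f |y| := by
    simp only [secondDiffQuotient, f, Module.finrank_self, Nat.cast_one, Real.norm_eq_abs]
    rcases abs_choice y with h | h <;> rw [h]
    rw [← sub_eq_add_neg, sub_neg_eq_add, sub_right_comm]
  have hlim := tendsto_nhds_unique (hasPrincipalValue_ballWeight_integral hs hx)
    (hasPrincipalValue_ballWeight_real hs hx)
  simp only [heven] at hlim
  rw [integral_comp_abs] at hlim
  linarith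

variable {E : Type*} [NormedAddCommGroup E] [InnerProductSpace ℝ E]

theorem integral_secondDiff_ballWeight_ray (hs : s ∈ Ioo (0 : ℝ) 1) {x θ : E} (hx : ‖x‖ < 1)
    (hθ : ‖θ‖ = 1) :
    ∫ t in Ioi (0 : ℝ), (2 * ballWeight s x - ballWeight s (x + t • θ) - ballWeight s (x - t • θ)) /
      t ^ (1 + 2 * s) = Real.Gamma s * Real.Gamma (1 - s) := by
  have hpos : 0 < 1 - ‖x‖ ^ 2 + ⟪x, θ⟫ ^ 2 := by
    have := pow_lt_one₀ (norm_nonneg x) hx two_ne_zero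
    positivity
  set R := √(1 - ‖x‖ ^ 2 + ⟪x, θ⟫ ^ 2)
  have hRx : R ^ 2 = 1 - ‖x‖ ^ 2 + ⟪x, θ⟫ ^ 2 := Real.sq_sqrt hpos.le
  have hR : 0 < R := Real.sqrt_pos.2 hpos
  have hlt : |⟪x, θ⟫ / R| < 1 := by
    rw [abs_div, abs_of_pos hR, div_lt_one hR]
    refine abs_lt_of_sq_lt_sq ?_ hR.le
    linarith [pow_lt_one₀ (norm_nonneg x) hx two_ne_zero]
  have hscale := ballWeight_add_smul (s := s) hθ hR hRx
  have hquot {t : ℝ} (ht : 0 < t) :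
      (2 * ballWeight s x - ballWeight s (x + (R * t) • θ) - ballWeight s (x - (R * t) • θ)) /
        (R * t) ^ (1 + 2 * s) =
      R⁻¹ * ((2 * ballWeight s (⟪x, θ⟫ / R) - ballWeight s (⟪x, θ⟫ / R + t) -
        ballWeight s (⟪x, θ⟫ / R - t)) / t ^ (1 + 2 * s)) := by
    have hx0 := hscale 0
    have hneg := hscale (-t)
    have hpow : (R ^ 2) ^ s = R ^ (2 * s) := by
      rw [← Real.rpow_natCast, ← Real.rpow_mul hR.le, Nat.cast_two]
    rw [mul_zero, zero_smul, add_zero, add_zero] at hx0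
    rw [mul_neg, neg_smul, ← sub_eq_add_neg, ← sub_eq_add_neg] at hneg
    rw [hx0, hneg, hscale, hpow, Real.mul_rpow hR.le ht.le, Real.rpow_add hR, Real.rpow_one]
    field_simp
  have hsubst := integral_comp_mul_left_Ioi (fun t => (2 * ballWeight s x -
    ballWeight s (x + t • θ) - ballWeight s (x - t • θ)) / t ^ (1 + 2 * s)) 0 hR
  rw [setIntegral_congr_fun measurableSet_Ioi fun t ht => hquot ht, integral_const_mul,
    integral_secondDiff_ballWeight_real hs hlt, mul_zero, smul_eq_mul] at hsubst
  exact (mul_left_cancel₀ (inv_ne_zero hR.ne') hsubst).symm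

variable [FiniteDimensional ℝ E] [MeasurableSpace E] [BorelSpace E] [Nontrivial E]

variable (E) in
/-- The value of the principal value integral of `ballWeight s` at any point of the unit ball: up
to the normalisation of the fractional Laplacian, the constant by which `ballWeight s` differs from
the torsion function of the unit ball. -/
noncomputable def torsionConst (s : ℝ) : ℝ :=
  2⁻¹ * ((volume : Measure E).toSphere.real univ * (Real.Gamma s * Real.Gamma (1 - s)))

theorem torsionConst_pos (hs : s ∈ Ioo (0 : ℝ) 1) : 0 < torsionConst E s := by
  have hΓ := Real.Gamma_pos_of_pos hs.1
  have hΓ' := Real.Gamma_pos_of_pos (sub_pos.2 hs.2)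
  have hsphere : 0 < (volume : Measure E).toSphere.real univ := by
    rw [measureReal_def, Measure.toSphere_apply_univ]
    exact ENNReal.toReal_pos (mul_ne_zero (by exact_mod_cast Module.finrank_pos.ne')
      (measure_ball_pos _ _ one_pos).ne') (ENNReal.mul_ne_top (by simp) measure_ball_lt_top.ne)
  unfold torsionConst
  positivity

theorem hasPrincipalValue_ballWeight (hs : s ∈ Ioo (0 : ℝ) 1) {x : E} (hx : ‖x‖ < 1) :
    HasPrincipalValue s (ballWeight s) x (torsionConst E s) := by
  convert! hasPrincipalValue_ballWeight_integral hs hx using 1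
  have hradial (θ : sphere (0 : E) 1) : ∫ t in Ioi (0 : ℝ),
      t ^ (dim E - 1) • secondDiffQuotient s (ballWeight s) x (t • (θ : E)) =
      Real.Gamma s * Real.Gamma (1 - s) := by
    have hθ : ‖(θ : E)‖ = 1 := by simp
    rw [← integral_secondDiff_ballWeight_ray hs hx hθ]
    refine setIntegral_congr_fun measurableSet_Ioi fun t (ht : 0 < t) => ?_
    have hdim : (dim E : ℝ) + 2 * s = ((dim E - 1 : ℕ) : ℝ) + (1 + 2 * s) := by
      rw [Nat.cast_pred Module.finrank_pos]; ring
    simp only [secondDiffQuotient, norm_smul, hθ, mul_one, Real.norm_of_nonneg ht.le, smul_eq_mul]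
    rw [hdim, Real.rpow_add ht, Real.rpow_natCast]
    field_simp
  rw [integral_eq_integral_toSphere volume (integrable_secondDiffQuotient_ballWeight hs hx)]
  rw [integral_congr_ae (Eventually.of_forall hradial), integral_const, smul_eq_mul,
    torsionConst]

end Torsion

section MaximumPrinciple

variable {E : Type*} [NormedAddCommGroup E] {s : ℝ}

theorem continuous_ballWeight_mul (hs : 0 < s) {q : E → ℝ}
    (hq : ContinuousOn q (closedBall 0 1)) : Continuous fun y => ballWeight s y * q y := by
  have hout : ContinuousOn (fun y => ballWeight s y * q y) (ball 0 1)ᶜ :=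
    continuousOn_const.congr fun y hy => by
      rw [mem_compl_iff, mem_ball_zero_iff, not_lt] at hy
      rw [ballWeight_of_one_le_norm hs.ne' hy, zero_mul]
  rw [← continuousOn_univ]
  refine (((continuous_ballWeight hs.le).continuousOn.mul hq).union_of_isClosed hout
    isClosed_closedBall isOpen_ball.isClosed_compl).mono fun y _ => ?_
  exact (em (y ∈ ball (0 : E) 1)).imp_left (ball_subset_closedBall ·)

variable [InnerProductSpace ℝ E] [FiniteDimensional ℝ E]

theorem hasCompactSupport_of_eq_zero_of_one_le_norm {v : E → ℝ} (hv0 : ∀ y, 1 ≤ ‖y‖ → v y = 0) :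
    HasCompactSupport v :=
  HasCompactSupport.intro (isCompact_closedBall (0 : E) 1) fun y hy =>
    hv0 y (by rw [mem_closedBall_zero_iff, not_le] at hy; exact hy.le)

variable [MeasurableSpace E] [BorelSpace E]

theorem nonpos_of_hasPrincipalValue_neg {v g : E → ℝ} (hv : Continuous v)
    (hv0 : ∀ y, 1 ≤ ‖y‖ → v y = 0) (hg : ∀ x, ‖x‖ < 1 → HasPrincipalValue s v x (g x))
    (hneg : ∀ x, ‖x‖ < 1 → g x < 0) (x : E) : v x ≤ 0 := by
  obtain ⟨x₀, hx₀⟩ := hv.exists_forall_ge_of_hasCompactSupport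
    (hasCompactSupport_of_eq_zero_of_one_le_norm hv0)
  by_contra! hx
  have hx₀_mem : ‖x₀‖ < 1 := by
    by_contra! h
    exact (hx.trans_le (hx₀ x)).ne' (hv0 x₀ h)
  refine (hneg x₀ hx₀_mem).not_ge (ge_of_tendsto' (hg x₀ hx₀_mem) fun ρ => integral_nonneg fun y =>
    div_nonneg (sub_nonneg.2 (hx₀ y)) (by positivity))

variable [Nontrivial E]

theorem le_mul_ballWeight_of_hasPrincipalValue_lt (hs : s ∈ Ioo (0 : ℝ) 1) {v g : E → ℝ}
    (hv : Continuous v) (hv0 : ∀ y, 1 ≤ ‖y‖ → v y = 0)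
    (hg : ∀ x, ‖x‖ < 1 → HasPrincipalValue s v x (g x)) {δ : ℝ} (hδ : ∀ x, ‖x‖ < 1 → g x < δ)
    (x : E) : v x ≤ δ / torsionConst E s * ballWeight s x := by
  have hτ : torsionConst E s ≠ 0 := (torsionConst_pos hs).ne'
  set d := δ / torsionConst E s with hd
  have hw : Continuous fun y : E => d * ballWeight s y :=
    continuous_const.mul (continuous_ballWeight hs.1.le)
  have hw0 (y : E) (hy : 1 ≤ ‖y‖) : d * ballWeight s y = 0 := by
    rw [ballWeight_of_one_le_norm hs.1.ne' hy, mul_zero]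
  obtain ⟨M, hM⟩ := hv.bounded_above_of_compact_support
    (hasCompactSupport_of_eq_zero_of_one_le_norm hv0)
  obtain ⟨M', hM'⟩ := hw.bounded_above_of_compact_support
    (hasCompactSupport_of_eq_zero_of_one_le_norm hw0)
  refine sub_nonpos.1 (nonpos_of_hasPrincipalValue_neg (hv.fun_sub hw)
    (fun y hy => by rw [hv0 y hy, hw0 y hy, sub_zero])
    (fun y hy => (hg y hy).sub hs.1 ((hasPrincipalValue_ballWeight hs hy).const_mul d)
      hv.measurable hw.measurable hM hM') (fun y hy => ?_) x)
  rw [hd, div_mul_cancel₀ _ hτ]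
  exact sub_neg.2 (hδ y hy)

theorem abs_le_mul_ballWeight_of_hasPrincipalValue_lt (hs : s ∈ Ioo (0 : ℝ) 1) {v g : E → ℝ}
    (hv : Continuous v) (hv0 : ∀ y, 1 ≤ ‖y‖ → v y = 0)
    (hg : ∀ x, ‖x‖ < 1 → HasPrincipalValue s v x (g x)) {δ : ℝ} (hδ : ∀ x, ‖x‖ < 1 → |g x| < δ)
    (x : E) : |v x| ≤ δ / torsionConst E s * ballWeight s x := by
  have hneg := le_mul_ballWeight_of_hasPrincipalValue_lt hs (v := fun y => -1 * v y)
    (continuous_const.mul hv)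
    (fun y hy => by rw [hv0 y hy, mul_zero]) (fun y hy => (hg y hy).const_mul (-1))
    (fun y hy => by rw [neg_one_mul]; exact neg_lt.1 (abs_lt.1 (hδ y hy)).1) x
  rw [neg_one_mul, neg_le] at hneg
  exact abs_le.2 ⟨hneg, le_mul_ballWeight_of_hasPrincipalValue_lt hs hv hv0 hg
    (fun y hy => (abs_lt.1 (hδ y hy)).2) x⟩

end MaximumPrinciple

section Pole

open EuclideanGeometry

variable {E : Type*} [NormedAddCommGroup E] [InnerProductSpace ℝ E] {s : ℝ}

theorem norm_inversion_lt_one_iff {p y : E} (hy : y ≠ p) {a : ℝ} (ha0 : a ≠ 0)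
    (ha : a ^ 2 = ‖p‖ ^ 2 - 1) : ‖inversion p a y‖ < 1 ↔ ‖y‖ < 1 := by
  have hd : 0 < ‖y - p‖ := norm_sub_pos_iff.2 hy
  rw [← sq_lt_one_iff₀ (norm_nonneg _), ← sub_pos, one_sub_norm_inversion_sq ha hy,
    mul_pos_iff_of_pos_left (by positivity), sub_pos, sq_lt_one_iff₀ (norm_nonneg _)]

theorem norm_inversion_eq_one {p y : E} (hy : y ≠ p) {a : ℝ} (ha : a ^ 2 = ‖p‖ ^ 2 - 1)
    (hy1 : ‖y‖ = 1) : ‖inversion p a y‖ = 1 := by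
  have h := one_sub_norm_inversion_sq ha hy
  rw [hy1, one_pow, sub_self, mul_zero, sub_eq_zero] at h
  exact (pow_eq_one_iff_of_nonneg (norm_nonneg _) two_ne_zero).1 h.symm

theorem ballWeight_inversion_rpow {p y : E} (hy : y ≠ p) {a : ℝ} (ha0 : 0 ≤ a)
    (ha : a ^ 2 = ‖p‖ ^ 2 - 1) :
    ballWeight s (inversion p a y) = a ^ (2 * s) * ‖y - p‖ ^ (-(2 * s)) * ballWeight s y := by
  rw [ballWeight_inversion ha hy, Real.div_rpow (by positivity) (by positivity),
    ← Real.rpow_natCast_mul ha0, ← Real.rpow_natCast_mul (norm_nonneg _),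
    Real.rpow_neg (norm_nonneg _), Nat.cast_two, div_eq_mul_inv]

theorem kelvinTransform_ballWeight (hs : s ≠ 0) {p : E} (hp : 1 < ‖p‖) {a : ℝ} (ha0 : 0 ≤ a)
    (ha : a ^ 2 = ‖p‖ ^ 2 - 1) (y : E) :
    kelvinTransform s p a (ballWeight s) y =
      a ^ (2 * s) * (ballWeight s y * ‖y - p‖ ^ (-dim E : ℝ)) := by
  rcases eq_or_ne y p with rfl | hy
  · rw [kelvinTransform, inversion_self, ballWeight_of_one_le_norm hs hp.le, mul_zero, zero_mul,
      mul_zero]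
  · have hpow : ‖y - p‖ ^ (-dim E : ℝ) = ‖y - p‖ ^ (2 * s - dim E) * ‖y - p‖ ^ (-(2 * s)) := by
      rw [← Real.rpow_add (norm_sub_pos_iff.2 hy)]
      ring_nf
    rw [kelvinTransform, ballWeight_inversion_rpow hy ha0 ha, rieszKernel, hpow]
    ring

variable [FiniteDimensional ℝ E] [MeasurableSpace E] [BorelSpace E] [Nontrivial E]

theorem hasPrincipalValue_ballWeight_mul_norm_sub_rpow (hs : s ∈ Ioo (0 : ℝ) 1) {p x : E}
    (hp : 1 < ‖p‖) (hx : ‖x‖ < 1) :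
    HasPrincipalValue s (fun y => ballWeight s y * ‖y - p‖ ^ (-dim E : ℝ)) x
      ((‖p‖ ^ 2 - 1) ^ s * torsionConst E s * ‖x - p‖ ^ (-(dim E + 2 * s))) := by
  obtain ⟨a, ha0, ha⟩ : ∃ a > 0, a ^ 2 = ‖p‖ ^ 2 - 1 :=
    ⟨√(‖p‖ ^ 2 - 1), Real.sqrt_pos.2 (by nlinarith), Real.sq_sqrt (by nlinarith)⟩
  have hxp : x ≠ p := fun h => (hx.trans hp).ne (by rw [h])
  have hx' := (norm_inversion_lt_one_iff hxp ha0.ne' ha).2 hx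
  have hkelvin := ((hasPrincipalValue_ballWeight hs hx').kelvinTransform hs hxp ha0
    (continuous_ballWeight hs.1.le).measurable (abs_ballWeight_le_one hs.1.le)
    (differentiableAt_ballWeight hx')).const_mul (a ^ (2 * s))⁻¹
  have hapow : a ^ (2 * s) ≠ 0 := (Real.rpow_pos_of_pos ha0 _).ne'
  convert hkelvin using 1
  · ext y
    rw [kelvinTransform_ballWeight hs.1.ne' hp ha0.le ha, inv_mul_cancel_left₀ hapow]
  · have hsq : (‖p‖ ^ 2 - 1) ^ s = a ^ (2 * s) := by
      rw [← ha, ← Real.rpow_natCast_mul ha0.le, Nat.cast_two]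
    rw [hsq, show 4 * s = 2 * s + 2 * s by ring, Real.rpow_add ha0]
    field_simp

end Pole

section Gaussian

variable {E : Type*} [NormedAddCommGroup E] [InnerProductSpace ℝ E] [FiniteDimensional ℝ E]
  [MeasurableSpace E] [BorelSpace E]

theorem integral_inner_mul_exp_neg_norm_sq {e : E} (he : ‖e‖ = 1) (f : ℝ → ℝ) :
    ∫ y : E, f ⟪e, y⟫ * Real.exp (-‖y‖ ^ 2) =
      (∫ t, f t * Real.exp (-t ^ 2)) * √Real.pi ^ (dim E - 1) := by
  have : Nontrivial E := ⟨e, 0, norm_ne_zero_iff.1 (he ▸ one_ne_zero)⟩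
  let i₀ : Fin (dim E) := ⟨0, Module.finrank_pos⟩
  obtain ⟨b, hb⟩ := Orthonormal.exists_orthonormalBasis_extension_of_card_eq
    (v := fun _ : Fin (dim E) => e) (s := {i₀}) (Fintype.card_fin _).symm
    ⟨fun _ => he, fun i j hij => (hij (Subsingleton.elim i j)).elim⟩
  have hbe : b i₀ = e := hb i₀ rfl
  set F : Fin (dim E) → ℝ → ℝ := fun i t => (if i = i₀ then f t else 1) * Real.exp (-t ^ 2)
  have hcoord (y : E) : f ⟪e, y⟫ * Real.exp (-‖y‖ ^ 2) = ∏ i, F i (b.repr y i) := by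
    rw [Finset.prod_mul_distrib, Finset.prod_ite_eq' _ i₀, if_pos (Finset.mem_univ _),
      ← Real.exp_sum, Finset.sum_neg_distrib, b.repr_apply_apply, hbe, ← b.repr.norm_map,
      EuclideanSpace.norm_sq_eq]
    simp only [Real.norm_eq_abs, sq_abs]
  have hgauss : ∫ t : ℝ, Real.exp (-t ^ 2) = √Real.pi := by simpa using integral_gaussian 1
  have hmp := (PiLp.volume_preserving_ofLp (Fin (dim E))).comp b.measurePreserving_repr
  have hemb : MeasurableEmbedding fun y : E => WithLp.ofLp (b.repr y) :=
    (MeasurableEquiv.toLp 2 (Fin (dim E) → ℝ)).symm.measurableEmbedding.comp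
      b.repr.toHomeomorph.measurableEmbedding
  calc ∫ y : E, f ⟪e, y⟫ * Real.exp (-‖y‖ ^ 2)
      = ∫ x : Fin (dim E) → ℝ, ∏ i, F i (x i) := by
        simp only [hcoord]
        exact hmp.integral_comp hemb fun x => ∏ i, F i (x i)
    _ = ∏ i, ∫ t, F i t := integral_fintype_prod_volume_eq_prod F
    _ = _ := by
        have hne (i) (hi : i ∈ Finset.univ.erase i₀) : ∫ t, F i t = √Real.pi := by
          simp only [F, if_neg (Finset.ne_of_mem_erase hi), one_mul, hgauss]
        rw [← Finset.mul_prod_erase _ _ (Finset.mem_univ i₀), Finset.prod_congr rfl hne,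
          Finset.prod_const, Finset.card_erase_of_mem (Finset.mem_univ _), Finset.card_univ,
          Fintype.card_fin]
        simp only [F, if_true]

theorem integral_max_zero_rpow_mul_exp_neg_sq {q : ℝ} (hq : 0 < q) :
    ∫ t : ℝ, max t 0 ^ q * Real.exp (-t ^ 2) = Real.Gamma ((q + 1) / 2) / 2 := by
  have hzero (t : ℝ) (ht : t ∉ Ioi 0) : max t 0 ^ q * Real.exp (-t ^ 2) = 0 := by
    rw [max_eq_right (not_lt.1 ht), Real.zero_rpow hq.ne', zero_mul]
  have hpos : ∫ t in Ioi (0 : ℝ), max t 0 ^ q * Real.exp (-t ^ 2) =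
      ∫ t in Ioi (0 : ℝ), t ^ q * Real.exp (-t ^ (2 : ℝ)) :=
    setIntegral_congr_fun measurableSet_Ioi fun t (ht : 0 < t) => by
      simp only [max_eq_left ht.le, Real.rpow_two]
  rw [← setIntegral_eq_integral_of_forall_compl_eq_zero hzero, hpos,
    integral_rpow_mul_exp_neg_rpow two_pos (by linarith), one_div_mul_eq_div]

variable [Nontrivial E]

theorem integrable_norm_rpow_mul_exp_neg_norm_sq {q : ℝ} (hq : -dim E < q) :
    Integrable fun y : E => ‖y‖ ^ q * Real.exp (-‖y‖ ^ 2) := by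
  refine (integrable_fun_norm_addHaar volume
    (f := fun r : ℝ => r ^ q * Real.exp (-r ^ 2))).2 ?_
  have hdim : ((dim E - 1 : ℕ) : ℝ) = dim E - 1 := Nat.cast_pred Module.finrank_pos
  refine (integrableOn_rpow_mul_exp_neg_rpow (s := dim E - 1 + q) (by linarith) two_pos).congr_fun
    (fun r (hr : 0 < r) => ?_) measurableSet_Ioi
  simp only [smul_eq_mul, ← Real.rpow_natCast r (dim E - 1), hdim, Real.rpow_add hr, Real.rpow_two,
    mul_assoc]

theorem integral_sphere_inner_rpow {e : E} (he : ‖e‖ = 1) {q : ℝ} (hq : 0 < q) :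
    ∫ θ : sphere (0 : E) 1, max ⟪e, (θ : E)⟫ 0 ^ q ∂volume.toSphere =
      √Real.pi ^ (dim E - 1) * Real.Gamma ((q + 1) / 2) / Real.Gamma ((dim E + q) / 2) := by
  have hdim : ((dim E - 1 : ℕ) : ℝ) = dim E - 1 := Nat.cast_pred Module.finrank_pos
  have hΓ := Real.Gamma_pos_of_pos (show 0 < (dim E + q) / 2 by positivity)
  have hint : Integrable fun y : E => max ⟪e, y⟫ 0 ^ q * Real.exp (-‖y‖ ^ 2) := by
    refine (integrable_norm_rpow_mul_exp_neg_norm_sq (q := q) (by linarith)).mono' (by fun_prop)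
      (.of_forall fun y => ?_)
    rw [Real.norm_of_nonneg (by positivity)]
    gcongr
    exact max_le ((real_inner_le_norm e y).trans_eq (by rw [he, one_mul])) (norm_nonneg y)
  have hradial (θ : sphere (0 : E) 1) : ∫ t in Ioi (0 : ℝ), t ^ (dim E - 1) •
      (max ⟪e, t • (θ : E)⟫ 0 ^ q * Real.exp (-‖t • (θ : E)‖ ^ 2)) =
      max ⟪e, (θ : E)⟫ 0 ^ q * (Real.Gamma ((dim E + q) / 2) / 2) := by
    have hgamma := integral_rpow_mul_exp_neg_rpow two_pos (q := dim E - 1 + q)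
      (by linarith)
    rw [show (dim E - 1 + q + 1 : ℝ) = dim E + q by ring, one_div_mul_eq_div] at hgamma
    rw [← hgamma, ← integral_const_mul]
    refine setIntegral_congr_fun measurableSet_Ioi fun t (ht : 0 < t) => ?_
    simp only [norm_smul, norm_eq_of_mem_sphere, mul_one, Real.norm_of_nonneg ht.le,
      real_inner_smul_right, smul_eq_mul]
    rw [← mul_zero t, ← mul_max_of_nonneg _ _ ht.le, mul_zero, Real.mul_rpow ht.le (by positivity),
      ← hdim, Real.rpow_add ht, Real.rpow_natCast, Real.rpow_two]
    ring
  have hpolar := integral_eq_integral_toSphere volume hint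
  simp only [hradial] at hpolar
  rw [integral_mul_const, integral_inner_mul_exp_neg_norm_sq he fun t => max t 0 ^ q,
    integral_max_zero_rpow_mul_exp_neg_sq hq] at hpolar
  rw [eq_div_iff hΓ.ne']
  linarith

end Gaussian

section BoundaryKernel

theorem integral_rpow_mul_one_sub_rpow {α β : ℝ} (hα : 0 < α) (hβ : 0 < β) :
    ∫ t in Ioc (0 : ℝ) 1, t ^ (α - 1) * (1 - t) ^ (β - 1) = ProbabilityTheory.beta α β := by
  rw [ProbabilityTheory.beta_eq_betaIntegralReal α β hα hβ, Complex.betaIntegral,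
    intervalIntegral.integral_of_le zero_le_one, ← RCLike.re_to_complex, ← integral_re]
  · refine setIntegral_congr_fun measurableSet_Ioc fun x ⟨hx1, hx2⟩ => ?_
    norm_cast
    rw [← Complex.ofReal_cpow hx1.le, ← Complex.ofReal_cpow (by linarith), RCLike.re_to_complex,
      Complex.re_mul_ofReal, Complex.ofReal_re]
  · exact (intervalIntegrable_iff_integrableOn_Ioc_of_le zero_le_one).1
      (Complex.betaIntegral_convergent (u := α) (v := β) (by simpa) (by simpa))

variable {s : ℝ}

theorem integral_inv_mul_max_mul_one_sub_rpow (hs : 0 < s) :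
    ∫ t in Ioi (0 : ℝ), t⁻¹ * max (t * (1 - t)) 0 ^ s = ProbabilityTheory.beta s (s + 1) := by
  rw [← integral_rpow_mul_one_sub_rpow hs (by linarith),
    setIntegral_eq_of_subset_of_forall_sdiff_eq_zero (s := Ioc 0 1) measurableSet_Ioi
      Ioc_subset_Ioi_self]
  · refine setIntegral_congr_fun measurableSet_Ioc fun t ⟨ht0, ht1⟩ => ?_
    have ht1' : 0 ≤ 1 - t := sub_nonneg.2 ht1
    rw [max_eq_left (by positivity), Real.mul_rpow ht0.le ht1', add_sub_cancel_right,
      Real.rpow_sub_one ht0.ne', div_eq_inv_mul, mul_assoc]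
  · rintro t ⟨ht0, ht1⟩
    have ht : 1 < t := not_le.1 fun h => ht1 ⟨ht0, h⟩
    rw [max_eq_right (mul_nonpos_of_nonneg_of_nonpos (zero_le_one.trans ht.le) (by linarith)),
      Real.zero_rpow hs.ne', mul_zero]

theorem integral_inv_mul_max_mul_sub_rpow (hs : 0 < s) (b : ℝ) :
    ∫ t in Ioi (0 : ℝ), t⁻¹ * max (t * (b - t)) 0 ^ s =
      max b 0 ^ (2 * s) * ProbabilityTheory.beta s (s + 1) := by
  rcases le_or_gt b 0 with hb | hb
  · rw [max_eq_right hb, Real.zero_rpow (by positivity), zero_mul]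
    refine setIntegral_eq_zero_of_forall_eq_zero fun t (ht : 0 < t) => ?_
    rw [max_eq_right (mul_nonpos_of_nonneg_of_nonpos ht.le (by linarith)), Real.zero_rpow hs.ne',
      mul_zero]
  have hscale (t : ℝ) :
      max (b * t * (b - b * t)) 0 ^ s = b ^ (2 * s) * max (t * (1 - t)) 0 ^ s := by
    rw [show b * t * (b - b * t) = b ^ 2 * (t * (1 - t)) by ring, ← mul_zero (b ^ 2),
      ← mul_max_of_nonneg _ _ (by positivity), mul_zero,
      Real.mul_rpow (by positivity) (le_max_right _ _), ← Real.rpow_natCast_mul hb.le, Nat.cast_two]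
  have hsub := integral_comp_mul_left_Ioi (fun t => t⁻¹ * max (t * (b - t)) 0 ^ s) 0 hb
  simp only [mul_zero, hscale, mul_inv, smul_eq_mul] at hsub
  rw [max_eq_left hb.le, ← integral_inv_mul_max_mul_one_sub_rpow hs, ← integral_const_mul,
    ← mul_right_inj' (inv_ne_zero hb.ne'), ← hsub, ← integral_const_mul]
  congr with t
  ring

variable {E : Type*} [NormedAddCommGroup E]

theorem ballWeight_le_norm_sub_rpow (hs : 0 ≤ s) {e : E} (he : ‖e‖ = 1) (z : E) :
    ballWeight s z ≤ (2 * ‖z - e‖) ^ s := by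
  refine Real.rpow_le_rpow (le_max_right _ _) (max_le ?_ (by positivity)) hs
  have h := norm_sub_norm_le e z
  rw [he, norm_sub_rev] at h
  nlinarith [norm_nonneg z, norm_nonneg (z - e)]

variable [InnerProductSpace ℝ E]

theorem ballWeight_add_smul_of_norm_eq_one {e : E} (he : ‖e‖ = 1) (t : ℝ) (v : E) :
    ballWeight s (e + t • v) = max (t * (2 * -⟪e, v⟫ - t * ‖v‖ ^ 2)) 0 ^ s := by
  rw [ballWeight, norm_add_sq_real, he, norm_smul, real_inner_smul_right, mul_pow, Real.norm_eq_abs,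
    sq_abs]
  ring_nf

theorem tendsto_rpow_neg_mul_ballWeight (hs : 0 < s) {e : E} (he : ‖e‖ = 1) (v : E) :
    Tendsto (fun ε : ℝ => ε ^ (-s) * ballWeight s (e + ε • v)) (𝓝[>] 0)
      (𝓝 (2 ^ s * max (-⟪e, v⟫) 0 ^ s)) := by
  have hc : Continuous fun ε : ℝ => max (2 * -⟪e, v⟫ - ε * ‖v‖ ^ 2) 0 ^ s :=
    Continuous.rpow_const (by fun_prop) fun _ => Or.inr hs.le
  have h0 : max (2 * -⟪e, v⟫ - 0 * ‖v‖ ^ 2) 0 ^ s = 2 ^ s * max (-⟪e, v⟫) 0 ^ s := by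
    rw [← Real.mul_rpow zero_le_two (le_max_right _ _), mul_max_of_nonneg _ _ zero_le_two,
      zero_mul, sub_zero, mul_zero]
  rw [← h0]
  refine ((hc.tendsto 0).mono_left nhdsWithin_le_nhds).congr' ?_
  filter_upwards [self_mem_nhdsWithin] with ε (hε : 0 < ε)
  rw [ballWeight_add_smul_of_norm_eq_one he, Real.rpow_neg hε.le, ← mul_zero ε,
    ← mul_max_of_nonneg _ _ hε.le, mul_zero, Real.mul_rpow hε.le (le_max_right _ _),
    inv_mul_cancel_left₀ (Real.rpow_pos_of_pos hε s).ne']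

/-- For `‖e‖ = 1`, up to a constant the normal derivative at `e` of order `s` of the Green function
of the fractional Laplacian on the unit ball, as a function of the pole `z`. -/
noncomputable def boundaryKernel (s : ℝ) (e z : E) : ℝ := ballWeight s z * ‖z - e‖ ^ (-dim E : ℝ)

theorem boundaryKernel_nonneg (e z : E) : 0 ≤ boundaryKernel s e z :=
  mul_nonneg (ballWeight_nonneg z) (by positivity)

theorem boundaryKernel_of_one_le_norm (hs : s ≠ 0) (e : E) {z : E} (hz : 1 ≤ ‖z‖) :
    boundaryKernel s e z = 0 := by
  rw [boundaryKernel, ballWeight_of_one_le_norm hs hz, zero_mul]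

theorem support_boundaryKernel_subset (hs : s ≠ 0) (e : E) :
    Function.support (boundaryKernel s e) ⊆ ball 0 1 := fun z hz => by
  contrapose! hz
  rw [Function.notMem_support, boundaryKernel_of_one_le_norm hs]
  simpa using hz

variable [FiniteDimensional ℝ E] [MeasurableSpace E] [BorelSpace E]

theorem setIntegral_ball_eq_inv_mul_integral_boundaryKernel (hs : s ≠ 0) (e : E) (g : E → ℝ) :
    ∫ z in ball 0 1, g z * (1 - ‖z‖ ^ 2) ^ s / (s * ‖z - e‖ ^ dim E) =
      s⁻¹ * ∫ z, g z * boundaryKernel s e z := by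
  have hzero (z : E) (hz : z ∉ ball 0 1) : g z * boundaryKernel s e z = 0 := by
    rw [boundaryKernel_of_one_le_norm hs e (le_of_not_gt fun h => hz (mem_ball_zero_iff.2 h)),
      mul_zero]
  rw [← setIntegral_eq_integral_of_forall_compl_eq_zero hzero, ← integral_const_mul]
  refine setIntegral_congr_fun measurableSet_ball fun z hz => ?_
  simp only [boundaryKernel, ballWeight_of_norm_le_one (mem_ball_zero_iff.1 hz).le,
    Real.rpow_neg (norm_nonneg _), Real.rpow_natCast]
  ring

variable [Nontrivial E]

theorem integrable_boundaryKernel (hs : 0 < s) {e : E} (he : ‖e‖ = 1) :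
    Integrable (boundaryKernel s e) := by
  have hmeas : Measurable (boundaryKernel s e) :=
    (continuous_ballWeight hs.le).measurable.mul (by fun_prop)
  have hloc : LocallyIntegrable fun z => boundaryKernel s e (e + z) := by
    refine locallyIntegrable_of_norm_le_rpow (C := 2 ^ s) (α := dim E - s) Module.finrank_pos
      (sub_lt_self _ hs) ((Measure.ae_ne volume 0).mono fun z hz => ?_)
      (hmeas.comp (measurable_const_add e)).aestronglyMeasurable
    have hz : 0 < ‖z‖ := norm_pos_iff.2 hz
    have h := ballWeight_le_norm_sub_rpow hs.le he (e + z)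
    rw [add_sub_cancel_left, Real.mul_rpow two_pos.le hz.le] at h
    rw [Real.norm_of_nonneg (boundaryKernel_nonneg _ _), boundaryKernel, add_sub_cancel_left,
      neg_sub, sub_eq_add_neg s, Real.rpow_add hz, ← mul_assoc]
    gcongr
  have hsupp : Function.support (fun z => boundaryKernel s e (e + z)) ⊆ closedBall (-e) 1 := by
    intro z hz
    have hz := support_boundaryKernel_subset hs.ne' e hz
    rw [mem_ball_zero_iff, add_comm, ← sub_neg_eq_add] at hz
    exact mem_closedBall_iff_norm.2 hz.le
  have hint := (integrableOn_iff_integrable_of_support_subset hsupp).1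
    (hloc.integrableOn_isCompact (isCompact_closedBall _ _))
  simpa using hint.comp_add_left (-e)

theorem integral_boundaryKernel (hs : 0 < s) {e : E} (he : ‖e‖ = 1) :
    ∫ z, boundaryKernel s e z =
      √Real.pi ^ dim E * Real.Gamma s / Real.Gamma (dim E / 2 + s) := by
  have hradial (θ : sphere (0 : E) 1) : ∫ t in Ioi (0 : ℝ),
      t ^ (dim E - 1) • boundaryKernel s e (e + t • (θ : E)) =
      4 ^ s * ProbabilityTheory.beta s (s + 1) * max ⟪-e, (θ : E)⟫ 0 ^ (2 * s) := by
    have h := integral_inv_mul_max_mul_sub_rpow hs (2 * ⟪-e, (θ : E)⟫)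
    rw [← mul_zero (2 : ℝ), ← mul_max_of_nonneg _ _ two_pos.le, mul_zero,
      Real.mul_rpow two_pos.le (le_max_right _ _), Real.rpow_mul two_pos.le, Real.rpow_two,
      show (2 : ℝ) ^ 2 = 4 by norm_num] at h
    rw [mul_right_comm, ← h]
    refine setIntegral_congr_fun measurableSet_Ioi fun t (ht : 0 < t) => ?_
    have hpow : t ^ (dim E - 1) * t ^ (-dim E : ℝ) = t⁻¹ := by
      rw [← Real.rpow_natCast, ← Real.rpow_add ht, Nat.cast_pred Module.finrank_pos,
        ← Real.rpow_neg_one]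
      congr 1
      ring
    simp only [boundaryKernel, ballWeight_add_smul_of_norm_eq_one he, norm_eq_of_mem_sphere,
      add_sub_cancel_left, norm_smul, Real.norm_of_nonneg ht.le, mul_one, one_pow, smul_eq_mul,
      inner_neg_left]
    rw [mul_left_comm, hpow, mul_comm]
  have hpolar := integral_eq_integral_toSphere volume
    ((integrable_boundaryKernel hs he).comp_add_left e)
  simp only [hradial] at hpolar
  rw [integral_add_left_eq_self, integral_const_mul,
    integral_sphere_inner_rpow (by rwa [norm_neg]) (by positivity)] at hpolar
  have hdup := Real.Gamma_mul_Gamma_add_half (s + 1 / 2)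
  rw [show s + 1 / 2 + 1 / 2 = s + 1 by ring, show 2 * (s + 1 / 2) = s + (s + 1) by ring,
    show 1 - (s + (s + 1)) = -(2 * s) by ring, Real.rpow_neg two_pos.le,
    Real.rpow_mul two_pos.le, Real.rpow_two, show (2 : ℝ) ^ 2 = 4 by norm_num] at hdup
  rw [hpolar, ProbabilityTheory.beta, show (2 * s + 1) / 2 = s + 1 / 2 by ring,
    show ((dim E : ℝ) + 2 * s) / 2 = dim E / 2 + s by ring,
    ← mul_pow_sub_one Module.finrank_pos.ne' √Real.pi]
  field_simp at hdup ⊢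
  linear_combination hdup

end BoundaryKernel

theorem continuousOn_norm_sub_rpow {E : Type*} [NormedAddCommGroup E] {p : E} (hp : 1 < ‖p‖)
    (N : ℝ) : ContinuousOn (fun z => ‖z - p‖ ^ N) (closedBall 0 1) :=
  ContinuousOn.rpow_const (by fun_prop) fun z hz => Or.inl (norm_ne_zero_iff.2 (sub_ne_zero.2 (by
    rintro rfl
    exact hp.not_ge (mem_closedBall_zero_iff.1 hz))))

section BoundaryPotential

open EuclideanGeometry

variable {E : Type*} [NormedAddCommGroup E] [InnerProductSpace ℝ E] [FiniteDimensional ℝ E]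
  [MeasurableSpace E] [BorelSpace E] {s : ℝ} {e : E}

/-- `IsBoundaryPotential s e F q`: the function `ballWeight s * q` solves the Dirichlet problem
with right-hand side `F` in the unit ball, and its normal derivative of order `s` at `e`, encoded by
`q e`, is given by integrating `F` against the boundary kernel. -/
structure IsBoundaryPotential (s : ℝ) (e : E) (F q : E → ℝ) : Prop where
  continuousOn_rhs : ContinuousOn F (closedBall 0 1)
  continuousOn_factor : ContinuousOn q (closedBall 0 1)
  hasPrincipalValue : ∀ x, ‖x‖ < 1 → HasPrincipalValue s (fun y => ballWeight s y * q y) x (F x)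
  factor_eq : torsionConst E s * (∫ z, boundaryKernel s e z) * q e = ∫ z, F z * boundaryKernel s e z

theorem IsBoundaryPotential.zero : IsBoundaryPotential s e 0 0 where
  continuousOn_rhs := continuousOn_const
  continuousOn_factor := continuousOn_const
  hasPrincipalValue x _ := by
    simp [HasPrincipalValue, fracDiffQuotient]
  factor_eq := by simp

theorem IsBoundaryPotential.const_smul {F q : E → ℝ} (h : IsBoundaryPotential s e F q) (c : ℝ) :
    IsBoundaryPotential s e (c • F) (c • q) where
  continuousOn_rhs := h.continuousOn_rhs.const_smul c
  continuousOn_factor := h.continuousOn_factor.const_smul c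
  hasPrincipalValue x hx := by
    simpa only [Pi.smul_apply, smul_eq_mul, mul_left_comm] using
      (h.hasPrincipalValue x hx).const_mul c
  factor_eq := by
    simp only [Pi.smul_apply, smul_eq_mul, mul_assoc c, integral_const_mul, ← h.factor_eq]
    ring

variable [Nontrivial E]

theorem integral_boundaryKernel_inversion {p : E} (hep : e ≠ p) {a : ℝ} (ha0 : 0 < a)
    (ha : a ^ 2 = ‖p‖ ^ 2 - 1) :
    ∫ z, boundaryKernel s (inversion p a e) z =
      a ^ (2 * s) * ‖e - p‖ ^ dim E *
        ∫ z, ‖z - p‖ ^ (-(dim E + 2 * s)) * boundaryKernel s e z := by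
  have hcov := setIntegral_eq_setIntegral_inversion p ha0.ne' MeasurableSet.univ
    (boundaryKernel s (inversion p a e))
  rw [preimage_univ, setIntegral_univ, setIntegral_univ] at hcov
  rw [hcov, ← integral_const_mul]
  refine integral_congr_ae ((Measure.ae_ne _ p).mono fun z hz => ?_)
  have hd : 0 < ‖z - p‖ := norm_sub_pos_iff.2 hz
  have he : 0 < ‖e - p‖ := norm_sub_pos_iff.2 hep
  simp only [boundaryKernel, ballWeight_inversion_rpow hz ha0.le ha,
    norm_inversion_sub_inversion hep hz, neg_add, Real.rpow_add hd, smul_eq_mul]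
  rw [Real.mul_rpow (by positivity) (norm_nonneg _)]
  simp only [Real.rpow_neg (show 0 ≤ a ^ 2 / (‖z - p‖ * ‖e - p‖) by positivity),
    Real.rpow_neg hd.le, Real.rpow_natCast, div_pow, mul_pow]
  field_simp
  ring

theorem integral_norm_sub_rpow_mul_boundaryKernel (hs : 0 < s) (he : ‖e‖ = 1) {p : E}
    (hp : 1 < ‖p‖) :
    (‖p‖ ^ 2 - 1) ^ s * ∫ z, ‖z - p‖ ^ (-(dim E + 2 * s)) * boundaryKernel s e z =
      ‖e - p‖ ^ (-dim E : ℝ) * ∫ z, boundaryKernel s e z := by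
  have hb : 0 < ‖p‖ ^ 2 - 1 := sub_pos.2 (one_lt_pow₀ hp two_ne_zero)
  obtain ⟨a, ha0, ha⟩ : ∃ a : ℝ, 0 < a ∧ a ^ 2 = ‖p‖ ^ 2 - 1 :=
    ⟨√(‖p‖ ^ 2 - 1), Real.sqrt_pos.2 hb, Real.sq_sqrt hb.le⟩
  have hep : e ≠ p := by rintro rfl; exact hp.ne' he
  have hpow : (‖p‖ ^ 2 - 1) ^ s = a ^ (2 * s) := by
    rw [← ha, ← Real.rpow_natCast_mul ha0.le, Nat.cast_two]
  have hd := norm_sub_pos_iff.2 hep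
  rw [integral_boundaryKernel hs he,
    ← integral_boundaryKernel hs (norm_inversion_eq_one hep ha he),
    integral_boundaryKernel_inversion hep ha0 ha, hpow, Real.rpow_neg hd.le, Real.rpow_natCast]
  field_simp

theorem integrable_mul_boundaryKernel (hs : 0 < s) (he : ‖e‖ = 1) {F : E → ℝ}
    (hF : ContinuousOn F (closedBall 0 1)) : Integrable fun z => F z * boundaryKernel s e z := by
  have hsupp : Function.support (fun z => F z * boundaryKernel s e z) ⊆ closedBall 0 1 :=
    (Function.support_mul_subset_right _ _).trans
      ((support_boundaryKernel_subset hs.ne' e).trans ball_subset_closedBall)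
  exact (integrableOn_iff_integrable_of_support_subset hsupp).1
    ((integrable_boundaryKernel hs he).integrableOn.continuousOn_mul hF (isCompact_closedBall _ _))

theorem IsBoundaryPotential.add (hs : 0 < s) (he : ‖e‖ = 1) {F q F' q' : E → ℝ}
    (h : IsBoundaryPotential s e F q) (h' : IsBoundaryPotential s e F' q') :
    IsBoundaryPotential s e (F + F') (q + q') where
  continuousOn_rhs := h.continuousOn_rhs.add h'.continuousOn_rhs
  continuousOn_factor := h.continuousOn_factor.add h'.continuousOn_factor
  hasPrincipalValue x hx := by
    have bounded {q : E → ℝ} (hq : Continuous fun y => ballWeight s y * q y) :=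
      hq.bounded_above_of_compact_support <|
        hasCompactSupport_of_eq_zero_of_one_le_norm fun y hy => by
          rw [ballWeight_of_one_le_norm hs.ne' hy, zero_mul]
    have hc := continuous_ballWeight_mul hs h.continuousOn_factor
    have hc' := continuous_ballWeight_mul hs h'.continuousOn_factor
    obtain ⟨M, hM⟩ := bounded hc
    obtain ⟨M', hM'⟩ := bounded hc'
    simpa only [Pi.add_apply, mul_add] using (h.hasPrincipalValue x hx).add hs
      (h'.hasPrincipalValue x hx) hc.measurable hc'.measurable hM hM'
  factor_eq := by
    simp only [Pi.add_apply, add_mul, mul_add, h.factor_eq, h'.factor_eq]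
    rw [integral_add (integrable_mul_boundaryKernel hs he h.continuousOn_rhs)
      (integrable_mul_boundaryKernel hs he h'.continuousOn_rhs)]

theorem isBoundaryPotential_pole (hs : s ∈ Ioo (0 : ℝ) 1) (he : ‖e‖ = 1) {p : E} (hp : 1 < ‖p‖) :
    IsBoundaryPotential s e
      (fun z => (‖p‖ ^ 2 - 1) ^ s * torsionConst E s * ‖z - p‖ ^ (-(dim E + 2 * s)))
      (fun z => ‖z - p‖ ^ (-dim E : ℝ)) where
  continuousOn_rhs := (continuousOn_norm_sub_rpow hp _).const_mul _
  continuousOn_factor := continuousOn_norm_sub_rpow hp _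
  hasPrincipalValue _ := hasPrincipalValue_ballWeight_mul_norm_sub_rpow hs hp
  factor_eq := by
    simp only [mul_assoc, integral_const_mul]
    linear_combination
      -torsionConst E s * integral_norm_sub_rpow_mul_boundaryKernel hs.1 he hp

variable (E) in
/-- The restrictions to the closed unit ball of the powers `‖· - p‖ ^ (-N)` with poles `p` outside
the closed unit ball. -/
def poleMaps (N : ℝ) : Set C(closedBall (0 : E) 1, ℝ) :=
  {f | ∃ p : E, 1 < ‖p‖ ∧ ∀ z, f z = ‖(z : E) - p‖ ^ (-N)}

theorem exists_isBoundaryPotential (hs : s ∈ Ioo (0 : ℝ) 1) (he : ‖e‖ = 1)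
    {f : C(closedBall (0 : E) 1, ℝ)}
    (hf : f ∈ Submodule.span ℝ (poleMaps E (dim E + 2 * s))) :
    ∃ F q, IsBoundaryPotential s e F q ∧ ∀ z, f z = F z := by
  induction hf using Submodule.span_induction with
  | mem f hf =>
    obtain ⟨p, hp, hf⟩ := hf
    have hc : (‖p‖ ^ 2 - 1) ^ s * torsionConst E s ≠ 0 :=
      (mul_pos (Real.rpow_pos_of_pos (sub_pos.2 (one_lt_pow₀ hp two_ne_zero)) _)
        (torsionConst_pos hs)).ne'
    refine ⟨_, _, (isBoundaryPotential_pole hs he hp).const_smul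
      ((‖p‖ ^ 2 - 1) ^ s * torsionConst E s)⁻¹, fun z => ?_⟩
    rw [hf, Pi.smul_apply, smul_eq_mul, inv_mul_cancel_left₀ hc]
  | zero => exact ⟨0, 0, .zero, fun z => rfl⟩
  | add f g _ _ hf hg =>
    obtain ⟨F, q, h, hF⟩ := hf
    obtain ⟨G, r, h', hG⟩ := hg
    exact ⟨_, _, h.add hs.1 he h', fun z => congrArg₂ (· + ·) (hF z) (hG z)⟩
  | smul c f _ hf =>
    obtain ⟨F, q, h, hF⟩ := hf
    exact ⟨_, _, h.const_smul c, fun z => congrArg (c * ·) (hF z)⟩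

end BoundaryPotential

section RestrictMem

variable {X : Type*} [TopologicalSpace X] {K : Set X} {W : Submodule ℝ C(K, ℝ)}

/-- The restriction of `g` to `K` is a continuous function belonging to `W`. -/
def RestrictMem (W : Submodule ℝ C(K, ℝ)) (g : X → ℝ) : Prop :=
  ∃ f ∈ W, ∀ z : K, f z = g z

theorem RestrictMem.congr {g g' : X → ℝ} (h : RestrictMem W g) (hg : ∀ z ∈ K, g z = g' z) :
    RestrictMem W g' := by
  obtain ⟨f, hf, hfg⟩ := h
  exact ⟨f, hf, fun z => (hfg z).trans (hg z z.2)⟩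

theorem RestrictMem.sub {g g' : X → ℝ} (h : RestrictMem W g) (h' : RestrictMem W g') :
    RestrictMem W fun z => g z - g' z := by
  obtain ⟨f, hf, hfg⟩ := h
  obtain ⟨f', hf', hfg'⟩ := h'
  exact ⟨f - f', W.sub_mem hf hf', fun z => by rw [ContinuousMap.sub_apply, hfg, hfg']⟩

theorem RestrictMem.const_mul {g : X → ℝ} (h : RestrictMem W g) (c : ℝ) :
    RestrictMem W fun z => c * g z := by
  obtain ⟨f, hf, hfg⟩ := h
  exact ⟨c • f, W.smul_mem c hf, fun z => by rw [ContinuousMap.smul_apply, hfg, smul_eq_mul]⟩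

theorem RestrictMem.sum {ι : Type*} (t : Finset ι) {g : ι → X → ℝ}
    (h : ∀ i, RestrictMem W (g i)) : RestrictMem W fun z => ∑ i ∈ t, g i z := by
  choose f hf hfg using h
  refine ⟨∑ i ∈ t, f i, W.sum_mem fun i _ => hf i, fun z => ?_⟩
  simp only [ContinuousMap.sum_apply, hfg]

theorem RestrictMem.mem {f : C(K, ℝ)} {g : X → ℝ} (h : RestrictMem W g)
    (hf : ∀ z : K, f z = g z) : f ∈ W := by
  obtain ⟨f', hf', hfg⟩ := h
  rwa [show f = f' from ContinuousMap.ext fun z => (hf z).trans (hfg z).symm]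

theorem RestrictMem.of_approx [CompactSpace K] (hW : IsClosed (W : Set C(K, ℝ))) {g : X → ℝ}
    (hg : ContinuousOn g K)
    (h : ∀ ε > 0, ∃ g', RestrictMem W g' ∧ ∀ z ∈ K, |g z - g' z| < ε) : RestrictMem W g := by
  refine ⟨⟨K.domRestrict g, hg.domRestrict⟩, ?_, fun z => rfl⟩
  rw [← SetLike.mem_coe, ← hW.closure_eq, Metric.mem_closure_iff]
  intro ε hε
  obtain ⟨g', ⟨f', hf', hfg'⟩, happ⟩ := h ε hε
  refine ⟨f', hf', (ContinuousMap.dist_lt_iff hε).2 fun z => ?_⟩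
  rw [Real.dist_eq, hfg']
  exact happ z z.2

theorem RestrictMem.of_mem_closure [CompactSpace K] (hW : IsClosed (W : Set C(K, ℝ)))
    {P : Type*} [TopologicalSpace P] {G : P → X → ℝ} (hG : Continuous (Function.uncurry G))
    {A : Set P} (hA : ∀ q ∈ A, RestrictMem W (G q)) {p : P} (hp : p ∈ closure A) :
    RestrictMem W (G p) := by
  refine .of_approx hW (hG.comp (Continuous.prodMk_right p)).continuousOn fun ε hε => ?_
  obtain ⟨V, hV, hVK⟩ := (isCompact_iff_compactSpace.2 ‹CompactSpace K›).mem_uniformity_of_prod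
    hG.continuousOn (mem_univ p) (dist_mem_uniformity hε)
  rw [nhdsWithin_univ] at hV
  obtain ⟨q, hqV, hqA⟩ := mem_closure_iff_nhds.1 hp V hV
  refine ⟨G q, hA q hqA, fun z hz => ?_⟩
  rw [abs_sub_comm]
  exact hVK q hqV z hz

theorem RestrictMem.of_hasLineDerivAt [CompactSpace K] (hW : IsClosed (W : Set C(K, ℝ)))
    {P : Type*} [NormedAddCommGroup P] [NormedSpace ℝ P] {U : Set P} (hU : IsOpen U)
    {G G' : P → X → ℝ} {v : P} (hG : ∀ p ∈ U, RestrictMem W (G p))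
    (hd : ∀ p ∈ U, ∀ z ∈ K, HasLineDerivAt ℝ (fun q => G q z) (G' p z) p v)
    (hc : ContinuousOn (Function.uncurry G') (U ×ˢ K)) {p : P} (hp : p ∈ U) :
    RestrictMem W (G' p) := by
  refine .of_approx hW (hc.comp (by fun_prop) fun z hz => mk_mem_prod hp hz) fun ε hε => ?_
  obtain ⟨V, hV, hVK⟩ := (isCompact_iff_compactSpace.2 ‹CompactSpace K›).mem_uniformity_of_prod
    hc hp (dist_mem_uniformity hε)
  rw [hU.nhdsWithin_eq hp] at hV
  have hline : Tendsto (fun t : ℝ => p + t • v) (𝓝 0) (𝓝 p) := by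
    simpa using (Continuous.tendsto (by fun_prop : Continuous fun t : ℝ => p + t • v) 0)
  obtain ⟨r, hr, hrV⟩ := Metric.eventually_nhds_iff_ball.1
    (hline.eventually (inter_mem hV (hU.mem_nhds hp)))
  have hmem {t : ℝ} (ht : t ∈ Icc 0 (r / 2)) : p + t • v ∈ V ∩ U := hrV t <| by
    rw [mem_ball_zero_iff, Real.norm_of_nonneg ht.1]
    exact ht.2.trans_lt (half_lt_self hr)
  refine ⟨_, ((hG _ (hmem ⟨by positivity, le_rfl⟩).2).sub (hG _ hp)).const_mul (r / 2)⁻¹,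
    fun z hz => ?_⟩
  have hderiv (t : ℝ) (ht : t ∈ Icc 0 (r / 2)) :
      HasDerivAt (fun t => G (p + t • v) z) (G' (p + t • v) z) t := by
    have h := hd _ (hmem ht).2 z hz
    rw [HasLineDerivAt, ← sub_self t] at h
    simpa [add_assoc, ← add_smul] using h.comp_sub_const t t
  obtain ⟨t, ht, hslope⟩ := exists_hasDerivAt_eq_slope (fun t => G (p + t • v) z)
    (fun t => G' (p + t • v) z) (half_pos hr)
    (fun t ht => (hderiv t ht).continuousAt.continuousWithinAt)
    (fun t ht => hderiv t (Ioo_subset_Icc_self ht))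
  rw [zero_smul, add_zero, sub_zero, div_eq_inv_mul] at hslope
  rw [← hslope, abs_sub_comm]
  exact hVK _ (hmem (Ioo_subset_Icc_self ht)).1 z hz

end RestrictMem

theorem norm_sub_sq_pos_of_one_lt_norm {E : Type*} [NormedAddCommGroup E] {p z : E}
    (hp : 1 < ‖p‖) (hz : z ∈ closedBall (0 : E) 1) : 0 < ‖p - z‖ ^ 2 :=
  pow_pos (norm_sub_pos_iff.2 (by
    rintro rfl
    exact hp.not_ge (mem_closedBall_zero_iff.1 hz))) 2

theorem inv_norm_sub_sq_mem_Icc {E : Type*} [NormedAddCommGroup E] {p z : E} (hp : 1 < ‖p‖)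
    (hz : z ∈ closedBall (0 : E) 1) :
    (‖p - z‖ ^ 2)⁻¹ ∈ Icc ((‖p‖ + 1) ^ 2)⁻¹ ((‖p‖ - 1) ^ 2)⁻¹ := by
  have hz1 := mem_closedBall_zero_iff.1 hz
  have hpz := norm_sub_sq_pos_of_one_lt_norm hp hz
  have := sub_pos.2 hp
  constructor <;> gcongr
  · linarith [norm_sub_le p z]
  · linarith [norm_sub_norm_le p z]

theorem continuousOn_norm_sub_sq_rpow {E : Type*} [NormedAddCommGroup E] (β : ℝ) :
    ContinuousOn (fun x : E × E => (‖x.1 - x.2‖ ^ 2) ^ β) ({p | 1 < ‖p‖} ×ˢ closedBall 0 1) :=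
  ContinuousOn.rpow_const (by fun_prop) fun _ hx =>
    Or.inl (norm_sub_sq_pos_of_one_lt_norm hx.1 hx.2).ne'

section Density

variable {E : Type*} [NormedAddCommGroup E] [InnerProductSpace ℝ E]

theorem hasLineDerivAt_norm_sub_sq (p v z : E) :
    HasLineDerivAt ℝ (fun q => ‖q - z‖ ^ 2) (2 * ⟪p - z, v⟫) p v := by
  have h : HasDerivAt (fun t : ℝ => p + t • v - z) v 0 := by
    simpa using (((hasDerivAt_id (0 : ℝ)).smul_const v).const_add p).sub_const z
  simpa [HasLineDerivAt] using h.norm_sq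

theorem hasLineDerivAt_inner_sub (p v z : E) :
    HasLineDerivAt ℝ (fun q => ⟪q - z, v⟫) (‖v‖ ^ 2) p v := by
  have h : HasDerivAt (fun t : ℝ => p + t • v - z) v 0 := by
    simpa using (((hasDerivAt_id (0 : ℝ)).smul_const v).const_add p).sub_const z
  simpa [HasLineDerivAt] using h.inner ℝ (hasDerivAt_const 0 v)

theorem hasLineDerivAt_norm_sub_sq_rpow {p z : E} (hpz : 0 < ‖p - z‖ ^ 2) (v : E) (β : ℝ) :
    HasLineDerivAt ℝ (fun q => (‖q - z‖ ^ 2) ^ β)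
      (2 * ⟪p - z, v⟫ * β * (‖p - z‖ ^ 2) ^ (β - 1)) p v := by
  simpa [HasLineDerivAt] using
    HasDerivAt.rpow_const (hasLineDerivAt_norm_sub_sq p v z) (p := β) (by simp [hpz.ne'])

variable [FiniteDimensional ℝ E] {W : Submodule ℝ C(closedBall (0 : E) 1, ℝ)}

theorem RestrictMem.inner_mul_norm_sub_sq_rpow (hW : IsClosed (W : Set C(closedBall (0 : E) 1, ℝ)))
    {β : ℝ} (hβ : β ≠ 0) (hmem : ∀ p, 1 < ‖p‖ → RestrictMem W fun z => (‖p - z‖ ^ 2) ^ β)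
    (v : E) {p : E} (hp : 1 < ‖p‖) :
    RestrictMem W fun z => ⟪p - z, v⟫ * (‖p - z‖ ^ 2) ^ (β - 1) := by
  have h := RestrictMem.of_hasLineDerivAt hW (isOpen_lt continuous_const continuous_norm) hmem
    (fun p hp z hz => hasLineDerivAt_norm_sub_sq_rpow (norm_sub_sq_pos_of_one_lt_norm hp hz) v β)
    (ContinuousOn.mul (by fun_prop) (continuousOn_norm_sub_sq_rpow _)) hp
  refine (h.const_mul (2 * β)⁻¹).congr fun z _ => ?_
  field_simp

theorem RestrictMem.second_lineDeriv_norm_sub_sq_rpow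
    (hW : IsClosed (W : Set C(closedBall (0 : E) 1, ℝ))) {β : ℝ} (hβ : β ≠ 0)
    (hmem : ∀ p, 1 < ‖p‖ → RestrictMem W fun z => (‖p - z‖ ^ 2) ^ β)
    (v : E) {p : E} (hp : 1 < ‖p‖) :
    RestrictMem W fun z => ‖v‖ ^ 2 * (‖p - z‖ ^ 2) ^ (β - 1) +
      2 * (β - 1) * ⟪p - z, v⟫ ^ 2 * (‖p - z‖ ^ 2) ^ (β - 2) := by
  have hd (p : E) (hp : 1 < ‖p‖) (z : E) (hz : z ∈ closedBall (0 : E) 1) :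
      HasLineDerivAt ℝ (fun q => ⟪q - z, v⟫ * (‖q - z‖ ^ 2) ^ (β - 1))
        (‖v‖ ^ 2 * (‖p - z‖ ^ 2) ^ (β - 1) +
          2 * (β - 1) * ⟪p - z, v⟫ ^ 2 * (‖p - z‖ ^ 2) ^ (β - 2)) p v := by
    have h := HasDerivAt.mul (hasLineDerivAt_inner_sub p v z)
      (hasLineDerivAt_norm_sub_sq_rpow (norm_sub_sq_pos_of_one_lt_norm hp hz) v (β - 1))
    rw [zero_smul, add_zero, show β - 1 - 1 = β - 2 by ring] at h
    exact h.congr_deriv (by ring)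
  have hc := ((continuousOn_norm_sub_sq_rpow (E := E) (β - 1)).const_mul (‖v‖ ^ 2)).add
    (ContinuousOn.mul (f := fun x => 2 * (β - 1) * ⟪x.1 - x.2, v⟫ ^ 2) (by fun_prop)
      (continuousOn_norm_sub_sq_rpow (β - 2)))
  exact .of_hasLineDerivAt (U := {p | 1 < ‖p‖}) hW (isOpen_lt continuous_const continuous_norm)
    (fun p hp => inner_mul_norm_sub_sq_rpow hW hβ hmem v hp) hd hc hp

-- The Laplacian of `|p - z| ^ (2β)` in `p` is a multiple of `|p - z| ^ (2β - 2)`.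
theorem RestrictMem.norm_sub_sq_rpow_sub_one (hW : IsClosed (W : Set C(closedBall (0 : E) 1, ℝ)))
    {β : ℝ} (hβ : β ≠ 0) (hβE : dim E + 2 * (β - 1) ≠ 0)
    (hmem : ∀ p, 1 < ‖p‖ → RestrictMem W fun z => (‖p - z‖ ^ 2) ^ β) {p : E} (hp : 1 < ‖p‖) :
    RestrictMem W fun z => (‖p - z‖ ^ 2) ^ (β - 1) := by
  have h := RestrictMem.sum Finset.univ fun i =>
    RestrictMem.second_lineDeriv_norm_sub_sq_rpow hW hβ hmem (stdOrthonormalBasis ℝ E i) hp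
  refine (h.const_mul (dim E + 2 * (β - 1))⁻¹).congr fun z hz => ?_
  have hpos := norm_sub_sq_pos_of_one_lt_norm hp hz
  have hpow : (‖p - z‖ ^ 2) ^ (β - 1) = (‖p - z‖ ^ 2) ^ (β - 2) * ‖p - z‖ ^ 2 := by
    rw [← Real.rpow_add_one hpos.ne', show β - 2 + 1 = β - 1 by ring]
  rw [Finset.sum_add_distrib, ← Finset.sum_mul, ← Finset.sum_mul, ← Finset.mul_sum,
    OrthonormalBasis.sum_sq_inner_left]
  simp only [OrthonormalBasis.norm_eq_one, one_pow, Finset.sum_const, Finset.card_univ,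
    Fintype.card_fin, nsmul_eq_mul, mul_one]
  rw [inv_mul_eq_iff_eq_mul₀ hβE, hpow]
  ring

theorem RestrictMem.norm_sub_sq_rpow_sub_natCast
    (hW : IsClosed (W : Set C(closedBall (0 : E) 1, ℝ))) {β : ℝ} (hβ : β < 0)
    (hβE : dim E + 2 * β ≤ 0)
    (hmem : ∀ p, 1 < ‖p‖ → RestrictMem W fun z => (‖p - z‖ ^ 2) ^ β) (j : ℕ) {p : E}
    (hp : 1 < ‖p‖) : RestrictMem W fun z => (‖p - z‖ ^ 2) ^ (β - j) := by
  induction j generalizing p with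
  | zero => simpa using hmem p hp
  | succ j ih =>
    have := j.cast_nonneg (α := ℝ)
    have h := norm_sub_sq_rpow_sub_one hW (β := β - j) (by linarith) (by linarith)
      (fun p hp => ih hp) hp
    rwa [sub_sub, ← Nat.cast_succ] at h

theorem RestrictMem.norm_sub_sq_rpow_mul_eval (hW : IsClosed (W : Set C(closedBall (0 : E) 1, ℝ)))
    {β : ℝ} (hβ : β < 0) (hβE : dim E + 2 * β ≤ 0)
    (hmem : ∀ p, 1 < ‖p‖ → RestrictMem W fun z => (‖p - z‖ ^ 2) ^ β) (P : Polynomial ℝ) {p : E}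
    (hp : 1 < ‖p‖) : RestrictMem W fun z => (‖p - z‖ ^ 2) ^ β * P.eval (‖p - z‖ ^ 2)⁻¹ := by
  refine (RestrictMem.sum P.support fun j =>
    (norm_sub_sq_rpow_sub_natCast hW hβ hβE hmem j hp).const_mul (P.coeff j)).congr fun z hz => ?_
  rw [Polynomial.eval_eq_sum, Polynomial.sum, Finset.mul_sum]
  refine Finset.sum_congr rfl fun j _ => ?_
  rw [Real.rpow_sub (norm_sub_sq_pos_of_one_lt_norm hp hz), Real.rpow_natCast, inv_pow]
  ring

theorem RestrictMem.comp_norm_sub_sq (hW : IsClosed (W : Set C(closedBall (0 : E) 1, ℝ)))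
    {β : ℝ} (hβ : β < 0) (hβE : dim E + 2 * β ≤ 0)
    (hmem : ∀ p, 1 < ‖p‖ → RestrictMem W fun z => (‖p - z‖ ^ 2) ^ β)
    {h : ℝ → ℝ} (hh : ContinuousOn h (Ioi 0)) {p : E} (hp : 1 < ‖p‖) :
    RestrictMem W fun z => h (‖p - z‖ ^ 2) := by
  have hcont : ContinuousOn (fun y => h y⁻¹ * y ^ β) (Icc ((‖p‖ + 1) ^ 2)⁻¹ ((‖p‖ - 1) ^ 2)⁻¹) := by
    have hpos : ∀ y ∈ Icc ((‖p‖ + 1) ^ 2)⁻¹ ((‖p‖ - 1) ^ 2)⁻¹, 0 < y := fun y hy =>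
      lt_of_lt_of_le (by positivity) hy.1
    exact (hh.comp (continuousOn_inv₀.mono fun y hy => (hpos y hy).ne')
      fun y hy => inv_pos.2 (hpos y hy)).mul
      (continuousOn_id.rpow_const fun y hy => Or.inl (hpos y hy).ne')
  have hpow : ContinuousOn (fun z => (‖p - z‖ ^ 2) ^ β) (closedBall 0 1) :=
    ContinuousOn.rpow_const (by fun_prop) fun z hz =>
      Or.inl (norm_sub_sq_pos_of_one_lt_norm hp hz).ne'
  obtain ⟨M, hM⟩ := (isCompact_closedBall _ _).exists_bound_of_continuousOn hpow
  refine .of_approx hW (hh.comp (by fun_prop) fun z hz => norm_sub_sq_pos_of_one_lt_norm hp hz)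
    fun ε hε => ?_
  obtain ⟨P, hP⟩ := exists_polynomial_near_of_continuousOn _ _ _ hcont (ε / (|M| + 1))
    (by positivity)
  refine ⟨_, norm_sub_sq_rpow_mul_eval hW hβ hβE hmem P hp, fun z hz => ?_⟩
  have hpz := norm_sub_sq_pos_of_one_lt_norm hp hz
  have hfactor : h (‖p - z‖ ^ 2) = (‖p - z‖ ^ 2) ^ β *
      (h (‖p - z‖ ^ 2)⁻¹⁻¹ * (‖p - z‖ ^ 2)⁻¹ ^ β) := by
    rw [inv_inv, Real.inv_rpow hpz.le]
    field_simp
  rw [hfactor, ← mul_sub, abs_mul, abs_sub_comm]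
  calc |(‖p - z‖ ^ 2) ^ β| * |P.eval (‖p - z‖ ^ 2)⁻¹ -
        h (‖p - z‖ ^ 2)⁻¹⁻¹ * (‖p - z‖ ^ 2)⁻¹ ^ β|
      ≤ |M| * (ε / (|M| + 1)) := by
        exact mul_le_mul ((hM z hz).trans (le_abs_self M))
          (hP _ (inv_norm_sub_sq_mem_Icc hp hz)).le (abs_nonneg _) (abs_nonneg _)
    _ < ε := by
        rw [mul_div_assoc', div_lt_iff₀ (by positivity)]
        linarith

theorem RestrictMem.exp_inner [Nontrivial E] (hW : IsClosed (W : Set C(closedBall (0 : E) 1, ℝ)))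
    {β : ℝ} (hβ : β < 0) (hβE : dim E + 2 * β ≤ 0)
    (hmem : ∀ p, 1 < ‖p‖ → RestrictMem W fun z => (‖p - z‖ ^ 2) ^ β) (ξ : E) :
    RestrictMem W fun z => Real.exp ⟪ξ, z⟫ := by
  rcases eq_or_ne ξ 0 with rfl | hξ
  · obtain ⟨p, hp⟩ := exists_norm_eq E zero_le_two
    simpa using comp_norm_sub_sq hW hβ hβE hmem (continuousOn_const (c := (1 : ℝ)))
      (hp ▸ one_lt_two)
  have hξ0 : 0 < ‖ξ‖ / 2 := half_pos (norm_pos_iff.2 hξ)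
  -- Completing the square: `exp (⟪ξ, z⟫ - t * ‖z‖ ^ 2)` is a Gaussian centred at `(2 * t)⁻¹ • ξ`.
  have hgauss (t : ℝ) (ht : t ∈ Ioo 0 (‖ξ‖ / 2)) :
      RestrictMem W fun z => Real.exp (⟪ξ, z⟫ - t * ‖z‖ ^ 2) := by
    have hp : 1 < ‖(2 * t)⁻¹ • ξ‖ := by
      rw [norm_smul, Real.norm_of_nonneg (inv_nonneg.2 (mul_pos two_pos ht.1).le),
        ← div_eq_inv_mul, one_lt_div (mul_pos two_pos ht.1)]
      linarith [ht.2]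
    have h := comp_norm_sub_sq hW hβ hβE hmem (h := fun y => Real.exp (-t * y)) (by fun_prop) hp
    refine (h.const_mul (Real.exp (t * ‖(2 * t)⁻¹ • ξ‖ ^ 2))).congr fun z _ => ?_
    have ht0 := ht.1.ne'
    rw [← Real.exp_add, norm_sub_sq_real, inner_smul_left, RCLike.conj_to_real]
    congr 1
    field_simp
    ring
  have h := RestrictMem.of_mem_closure hW (G := fun (t : ℝ) z => Real.exp (⟪ξ, z⟫ - t * ‖z‖ ^ 2))
    (by fun_prop) hgauss (p := 0) (by rw [closure_Ioo hξ0.ne]; exact left_mem_Icc.2 hξ0.le)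
  simpa using h

/-- The restriction of `z ↦ exp ⟪ξ, z⟫` to the closed unit ball. -/
noncomputable def expInnerMap (ξ : E) : C(closedBall (0 : E) 1, ℝ) where
  toFun z := Real.exp ⟪ξ, z⟫

theorem topologicalClosure_span_range_expInnerMap :
    (Submodule.span ℝ (range (expInnerMap (E := E)))).topologicalClosure = ⊤ := by
  let M : Submonoid C(closedBall (0 : E) 1, ℝ) :=
    { carrier := range expInnerMap
      one_mem' := ⟨0, by ext z; simp [expInnerMap]⟩
      mul_mem' := by
        rintro _ _ ⟨ξ, rfl⟩ ⟨ζ, rfl⟩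
        exact ⟨ξ + ζ, by ext z; simp [expInnerMap, inner_add_left, Real.exp_add]⟩ }
  have hspan : Submodule.span ℝ (range (expInnerMap (E := E))) =
      Subalgebra.toSubmodule (Algebra.adjoin ℝ M) := by
    rw [Algebra.adjoin_eq_span, Submonoid.closure_eq]
    rfl
  have hsep : (Algebra.adjoin ℝ (M : Set C(closedBall (0 : E) 1, ℝ))).SeparatesPoints := by
    intro x y hxy
    refine ⟨_, ⟨expInnerMap (x - y : E), Algebra.subset_adjoin ⟨_, rfl⟩, rfl⟩, fun h => hxy ?_⟩
    have hinner : ⟪(x - y : E), x⟫ = ⟪(x - y : E), y⟫ := Real.exp_injective h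
    rwa [← sub_eq_zero, ← inner_sub_right, inner_self_eq_zero, sub_eq_zero, SetCoe.ext_iff]
      at hinner
  rw [hspan, ← Algebra.top_toSubmodule,
    ← ContinuousMap.subalgebra_topologicalClosure_eq_top_of_separatesPoints _ hsep]
  rfl

theorem topologicalClosure_span_poleMaps [Nontrivial E] {N : ℝ} (hN : dim E ≤ N) :
    (Submodule.span ℝ (poleMaps E N)).topologicalClosure = ⊤ := by
  set W := (Submodule.span ℝ (poleMaps E N)).topologicalClosure
  have hW : IsClosed (W : Set C(closedBall (0 : E) 1, ℝ)) :=
    Submodule.isClosed_topologicalClosure _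
  have hE : (0 : ℝ) < dim E := Nat.cast_pos.2 Module.finrank_pos
  have hmem (p : E) (hp : 1 < ‖p‖) : RestrictMem W fun z => (‖p - z‖ ^ 2) ^ (-N / 2) := by
    refine ⟨⟨_, (continuousOn_norm_sub_rpow hp (-N)).domRestrict⟩,
      Submodule.le_topologicalClosure _ (Submodule.subset_span ⟨p, hp, fun z => rfl⟩), fun z => ?_⟩
    change ‖(z : E) - p‖ ^ (-N) = (‖p - z‖ ^ 2) ^ (-N / 2)
    rw [norm_sub_rev, ← Real.rpow_natCast_mul (norm_nonneg _), Nat.cast_two,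
      mul_div_cancel₀ _ two_ne_zero]
  rw [eq_top_iff, ← topologicalClosure_span_range_expInnerMap]
  refine Submodule.topologicalClosure_minimal _ (Submodule.span_le.2 ?_) hW
  rintro _ ⟨ξ, rfl⟩
  exact (RestrictMem.exp_inner hW (by linarith) (by linarith) hmem ξ).mem fun z => rfl

end Density

section BoundaryLimit

variable {E : Type*} [NormedAddCommGroup E] [InnerProductSpace ℝ E] [FiniteDimensional ℝ E]
  [MeasurableSpace E] [BorelSpace E] [Nontrivial E] {s δ : ℝ} {e : E}

theorem exists_isBoundaryPotential_abs_sub_lt (hs : s ∈ Ioo (0 : ℝ) 1) (he : ‖e‖ = 1) {g : E → ℝ}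
    (hg : ContinuousOn g (closedBall 0 1)) (hδ : 0 < δ) :
    ∃ F q, IsBoundaryPotential s e F q ∧ ∀ z, ‖z‖ ≤ 1 → |g z - F z| < δ := by
  have hmem : ⟨_, hg.domRestrict⟩ ∈
      (Submodule.span ℝ (poleMaps E (dim E + 2 * s))).topologicalClosure := by
    rw [topologicalClosure_span_poleMaps (by linarith [hs.1])]
    exact Submodule.mem_top
  obtain ⟨f, hf, hfδ⟩ := Metric.mem_closure_iff.1 hmem δ hδ
  obtain ⟨F, q, h, hfF⟩ := exists_isBoundaryPotential hs he hf
  refine ⟨F, q, h, fun z hz => ?_⟩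
  rw [← hfF ⟨z, mem_closedBall_zero_iff.2 hz⟩]
  exact (ContinuousMap.dist_lt_iff hδ).1 hfδ ⟨z, mem_closedBall_zero_iff.2 hz⟩

theorem IsBoundaryPotential.abs_sub_ballWeight_mul_le (hs : s ∈ Ioo (0 : ℝ) 1) {F q v g : E → ℝ}
    (h : IsBoundaryPotential s e F q) (hv : Continuous v) (hv0 : ∀ y, 1 ≤ ‖y‖ → v y = 0)
    (hvg : ∀ x, ‖x‖ < 1 → HasPrincipalValue s v x (g x)) (hgF : ∀ x, ‖x‖ ≤ 1 → |g x - F x| < δ)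
    (x : E) : |v x - ballWeight s x * q x| ≤ δ / torsionConst E s * ballWeight s x := by
  have hq := continuous_ballWeight_mul hs.1 h.continuousOn_factor
  have hq0 (y : E) (hy : 1 ≤ ‖y‖) : ballWeight s y * q y = 0 := by
    rw [ballWeight_of_one_le_norm hs.1.ne' hy, zero_mul]
  obtain ⟨M, hM⟩ := hv.bounded_above_of_compact_support
    (hasCompactSupport_of_eq_zero_of_one_le_norm hv0)
  obtain ⟨M', hM'⟩ := hq.bounded_above_of_compact_support
    (hasCompactSupport_of_eq_zero_of_one_le_norm hq0)
  exact abs_le_mul_ballWeight_of_hasPrincipalValue_lt hs (v := fun y => v y - ballWeight s y * q y)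
    (hv.sub hq) (fun y hy => by rw [hv0 y hy, hq0 y hy, sub_zero])
    (fun x hx => (hvg x hx).sub hs.1 (h.hasPrincipalValue x hx) hv.measurable hq.measurable hM hM')
    (fun x hx => hgF x hx.le) x

variable (s e) in
/-- The normal derivative of order `s` at `e` of the solution of the Dirichlet problem in the unit
ball with right-hand side `g`, normalised so that it equals `1` for the solution `ballWeight s`. -/
noncomputable def boundaryFactor (g : E → ℝ) : ℝ :=
  (∫ z, g z * boundaryKernel s e z) / (torsionConst E s * ∫ z, boundaryKernel s e z)

theorem integral_boundaryKernel_pos (hs : 0 < s) (he : ‖e‖ = 1) :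
    0 < ∫ z, boundaryKernel s e z := by
  rw [integral_boundaryKernel hs he]
  positivity

theorem IsBoundaryPotential.abs_boundaryFactor_sub_le (hs : s ∈ Ioo (0 : ℝ) 1) (he : ‖e‖ = 1)
    {F q g : E → ℝ} (h : IsBoundaryPotential s e F q) (hg : ContinuousOn g (closedBall 0 1))
    (hgF : ∀ x, ‖x‖ ≤ 1 → |g x - F x| < δ) :
    |boundaryFactor s e g - q e| ≤ δ / torsionConst E s := by
  have hT := torsionConst_pos (E := E) hs
  have hI := integral_boundaryKernel_pos hs.1 he
  have hbound : |∫ z, (g z - F z) * boundaryKernel s e z| ≤ δ * ∫ z, boundaryKernel s e z := by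
    rw [← Real.norm_eq_abs, ← integral_const_mul]
    refine norm_integral_le_of_norm_le ((integrable_boundaryKernel hs.1 he).const_mul δ)
      (Eventually.of_forall fun z => ?_)
    rw [norm_mul, Real.norm_eq_abs, Real.norm_of_nonneg (boundaryKernel_nonneg e z)]
    rcases le_or_gt ‖z‖ 1 with hz | hz
    · exact mul_le_mul_of_nonneg_right (hgF z hz).le (boundaryKernel_nonneg e z)
    · simp [boundaryKernel_of_one_le_norm hs.1.ne' e hz.le]
  have hdiff : boundaryFactor s e g - q e = (∫ z, (g z - F z) * boundaryKernel s e z) /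
      (torsionConst E s * ∫ z, boundaryKernel s e z) := by
    simp only [sub_mul]
    rw [integral_sub (integrable_mul_boundaryKernel hs.1 he hg)
      (integrable_mul_boundaryKernel hs.1 he h.continuousOn_rhs), ← h.factor_eq, boundaryFactor]
    field_simp
  rw [hdiff, abs_div, abs_of_pos (mul_pos hT hI), div_le_div_iff₀ (mul_pos hT hI) hT]
  nlinarith

theorem isLittleO_sub_boundaryFactor_mul_ballWeight (hs : s ∈ Ioo (0 : ℝ) 1) (he : ‖e‖ = 1)
    {v g : E → ℝ} (hv : Continuous v) (hv0 : ∀ y, 1 ≤ ‖y‖ → v y = 0)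
    (hg : ContinuousOn g (closedBall 0 1))
    (hvg : ∀ x, ‖x‖ < 1 → HasPrincipalValue s v x (g x)) :
    (fun x => v x - boundaryFactor s e g * ballWeight s x) =o[𝓝 e] (ballWeight s : E → ℝ) := by
  refine Asymptotics.isLittleO_iff.2 fun c hc => ?_
  have hT := torsionConst_pos (E := E) hs
  obtain ⟨F, q, h, hgF⟩ := exists_isBoundaryPotential_abs_sub_lt hs he hg
    (show 0 < c / 3 * torsionConst E s by positivity)
  have hq := h.continuousOn_factor e (mem_closedBall_zero_iff.2 he.le)
  filter_upwards [eventually_nhdsWithin_iff.1 (hq.eventually (ball_mem_nhds _ (by positivity :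
    0 < c / 3)))] with x hx
  rw [Real.norm_eq_abs, Real.norm_of_nonneg (ballWeight_nonneg x)]
  rcases le_total 1 ‖x‖ with hx1 | hx1
  · simp [hv0 x hx1, ballWeight_of_one_le_norm hs.1.ne' hx1]
  have hsol := h.abs_sub_ballWeight_mul_le hs hv hv0 hvg hgF x
  have hfactor := h.abs_boundaryFactor_sub_le hs he hg hgF
  rw [mul_div_cancel_right₀ _ hT.ne'] at hsol hfactor
  have hqx : |q x - q e| ≤ c / 3 := (hx (mem_closedBall_zero_iff.2 hx1)).le
  have hqB : |q x - boundaryFactor s e g| ≤ c / 3 + c / 3 :=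
    (abs_sub_le _ (q e) _).trans (add_le_add hqx (by rwa [abs_sub_comm]))
  calc |v x - boundaryFactor s e g * ballWeight s x|
      = |(v x - ballWeight s x * q x) + (q x - boundaryFactor s e g) * ballWeight s x| := by
        ring_nf
    _ ≤ c / 3 * ballWeight s x + (c / 3 + c / 3) * ballWeight s x := by
        refine (abs_add_le _ _).trans (add_le_add hsol ?_)
        rw [abs_mul, abs_of_nonneg (ballWeight_nonneg x)]
        exact mul_le_mul_of_nonneg_right hqB (ballWeight_nonneg x)
    _ = c * ballWeight s x := by ring

theorem tendsto_rpow_neg_mul_of_hasPrincipalValue (hs : s ∈ Ioo (0 : ℝ) 1) (he : ‖e‖ = 1)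
    {v g : E → ℝ} (hv : Continuous v) (hv0 : ∀ y, 1 ≤ ‖y‖ → v y = 0)
    (hg : ContinuousOn g (closedBall 0 1))
    (hvg : ∀ x, ‖x‖ < 1 → HasPrincipalValue s v x (g x)) (ω : E) :
    Tendsto (fun ε : ℝ => ε ^ (-s) * v (e + ε • ω)) (𝓝[>] 0)
      (𝓝 (boundaryFactor s e g * (2 ^ s * max (-⟪e, ω⟫) 0 ^ s))) := by
  have hline : Tendsto (fun ε : ℝ => e + ε • ω) (𝓝[>] 0) (𝓝 e) := by
    have hc : Continuous fun ε : ℝ => e + ε • ω := by fun_prop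
    simpa using (hc.tendsto 0).mono_left (nhdsWithin_le_nhds (s := Ioi 0))
  have hw := tendsto_rpow_neg_mul_ballWeight hs.1 he ω
  have hsmall := (((Asymptotics.isBigO_refl (fun ε : ℝ => ε ^ (-s)) _).mul_isLittleO
    ((isLittleO_sub_boundaryFactor_mul_ballWeight hs he hv hv0 hg hvg).comp_tendsto
      hline)).trans_isBigO (hw.isBigO_one ℝ)).tendsto_zero_of_tendsto tendsto_const_nhds
  simpa [mul_sub, mul_left_comm] using (hsmall.add (hw.const_mul (boundaryFactor s e g)))

theorem toSphere_real_univ :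
    (volume : Measure E).toSphere.real univ = 2 * √Real.pi ^ dim E / Real.Gamma (dim E / 2) := by
  have hdim : (0 : ℝ) < dim E := Nat.cast_pos.2 Module.finrank_pos
  rw [Measure.toSphere_real_apply_univ, measureReal_def, InnerProductSpace.volume_ball,
    Real.Gamma_add_one (by positivity)]
  rw [ENNReal.ofReal_one, one_pow, one_mul, ENNReal.toReal_ofReal (by positivity)]
  field_simp

theorem fracC_pos (n : ℕ) (hs : s ∈ Ioo (0 : ℝ) 1) : 0 < fracC n s := by
  have hs0 := hs.1
  have hΓ := Real.Gamma_pos_of_pos (sub_pos.2 hs.2)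
  unfold fracC
  positivity

theorem fracC_mul_torsionConst_mul_integral_boundaryKernel_mul_kappaC (hs : s ∈ Ioo (0 : ℝ) 1)
    (he : ‖e‖ = 1) :
    fracC (dim E) s * (torsionConst E s * ∫ z, boundaryKernel s e z) * kappaC (dim E) s = s := by
  have hs0 := hs.1
  have hdim : (0 : ℝ) < dim E := Nat.cast_pos.2 Module.finrank_pos
  have hΓ := Real.Gamma_pos_of_pos (sub_pos.2 hs.2)
  have hπ : Real.pi ^ ((dim E : ℝ) / 2) = √Real.pi ^ dim E := by
    rw [Real.sqrt_eq_rpow, ← Real.rpow_mul_natCast Real.pi_pos.le, div_mul_eq_mul_div, one_mul]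
  rw [integral_boundaryKernel hs0 he, torsionConst, toSphere_real_univ, fracC, kappaC, hπ]
  field_simp

theorem boundaryFactor_div_fracC (hs : s ∈ Ioo (0 : ℝ) 1) (he : ‖e‖ = 1) (g : E → ℝ) :
    boundaryFactor s e (fun z => g z / fracC (dim E) s) =
      kappaC (dim E) s * (s⁻¹ * ∫ z, g z * boundaryKernel s e z) := by
  have hnorm := fracC_mul_torsionConst_mul_integral_boundaryKernel_mul_kappaC hs he
  have hC := (fracC_pos (dim E) hs).ne'
  have hTI := (mul_pos (torsionConst_pos (E := E) hs) (integral_boundaryKernel_pos hs.1 he)).ne'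
  have hs0 := hs.1.ne'
  simp only [boundaryFactor, div_mul_eq_mul_div, integral_div]
  generalize torsionConst E s * ∫ z, boundaryKernel s e z = T at *
  field_simp
  linear_combination -(∫ z, g z * boundaryKernel s e z) * hnorm

end BoundaryLimit

theorem eigenfunction_boundary_limit_general {n : ℕ} {s : ℝ} (hs : s ∈ Ioo (0 : ℝ) 1)
    {e : EuclideanSpace ℝ (Fin n)} (he : ‖e‖ = 1) {u g : EuclideanSpace ℝ (Fin n) → ℝ}
    (hu : Continuous u) (hu0 : ∀ z ∉ ball (0 : EuclideanSpace ℝ (Fin n)) 1, u z = 0)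
    (hg : ContinuousOn g (closedBall 0 1))
    (hug : ∀ x ∈ ball (0 : EuclideanSpace ℝ (Fin n)) 1, HasFracLap n s u x (g x))
    (ω : EuclideanSpace ℝ (Fin n)) :
    Tendsto (fun ε : ℝ => ε ^ (-s) * u (e + ε • ω)) (𝓝[>] 0)
      (𝓝 (2 ^ s * kappaC n s * (∫ z in ball (0 : EuclideanSpace ℝ (Fin n)) 1,
        g z * (1 - ‖z‖ ^ 2) ^ s / (s * ‖z - e‖ ^ n)) * max (-⟪e, ω⟫) 0 ^ s)) := by
  have : Nontrivial (EuclideanSpace ℝ (Fin n)) := ⟨e, 0, norm_ne_zero_iff.1 (he ▸ one_ne_zero)⟩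
  have hC := (fracC_pos n hs).ne'
  have hlim := tendsto_rpow_neg_mul_of_hasPrincipalValue hs he hu
    (fun y hy => hu0 y fun h => (mem_ball_zero_iff.1 h).not_ge hy) (hg.div_const (fracC n s))
    (fun x hx => (hasFracLap_iff_hasPrincipalValue hC).1 <| by
      simpa only [mul_div_cancel₀ _ hC] using hug x (mem_ball_zero_iff.2 hx)) ω
  have hfactor := boundaryFactor_div_fracC hs he g
  have hint := setIntegral_ball_eq_inv_mul_integral_boundaryKernel hs.1.ne' e g
  rw [finrank_euclideanSpace_fin] at hfactor hint
  rw [hfactor, ← hint] at hlim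
  convert hlim using 2
  ring

/-- Boundary behavior of the first Dirichlet eigenfunction `φ⋆` of `(-Δ)^s` in `B₁`:
for every `ω ∈ ∂B₁`, `lim_{ε→0⁺} ε^{-s} φ⋆(e+εω) = κ⋆ λ⋆ (-e·ω)₊^s`. -/
theorem eigenfunction_boundary_limit
    (n : ℕ) (hn : 1 ≤ n) (s : ℝ) (hs : s ∈ Set.Ioo (0 : ℝ) 1)
    (e : EuclideanSpace ℝ (Fin n)) (he : ‖e‖ = 1)
    (φ : EuclideanSpace ℝ (Fin n) → ℝ) (lam : ℝ) (hlam : 0 < lam)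
    (hφc : Continuous φ)
    (hφ0 : ∀ z ∉ Metric.ball (0 : EuclideanSpace ℝ (Fin n)) 1, φ z = 0)
    (hφpos : ∀ z ∈ Metric.ball (0 : EuclideanSpace ℝ (Fin n)) 1, 0 < φ z)
    (hφL2 : ∫ z in Metric.ball (0 : EuclideanSpace ℝ (Fin n)) 1, φ z ^ 2 = 1)
    (hφHolder : ∃ C : ℝ, ∀ x y : EuclideanSpace ℝ (Fin n), |φ x - φ y| ≤ C * ‖x - y‖ ^ s)
    (hφeig : ∀ x ∈ Metric.ball (0 : EuclideanSpace ℝ (Fin n)) 1,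
      HasFracLap n s φ x (lam * φ x))
    (κ : ℝ)
    (hκ : κ = 2 ^ s * kappaC n s *
      ∫ z in Metric.ball (0 : EuclideanSpace ℝ (Fin n)) 1,
        φ z * (1 - ‖z‖ ^ 2) ^ s / (s * ‖z - e‖ ^ n))
    (ω : EuclideanSpace ℝ (Fin n)) (hω : ‖ω‖ = 1) :
    Tendsto (fun ε : ℝ => ε ^ (-s) * φ (e + ε • ω))
      (nhdsWithin 0 (Set.Ioi 0))
      (nhds (κ * lam * max (-⟪e, ω⟫) 0 ^ s)) := by
  have hscale (z : EuclideanSpace ℝ (Fin n)) :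
      lam * φ z * (1 - ‖z‖ ^ 2) ^ s / (s * ‖z - e‖ ^ n) =
        lam * (φ z * (1 - ‖z‖ ^ 2) ^ s / (s * ‖z - e‖ ^ n)) := by ring
  have hlim := eigenfunction_boundary_limit_general hs he hφc hφ0
    (hφc.const_mul lam).continuousOn hφeig ω
  simp only [hscale, integral_const_mul] at hlim
  rw [hκ]
  convert hlim using 2
  ring
end

section
/- Let $n=1$ and $s=1/2$, and for $x,z\in(-1,1)$ with $x\neq z$ let $r_0(x,z)=\frac{(1-x^2)(1-z^2)}{(z-x)^2}$ and $G(x,z)=\int_0^{r_0(x,z)}\frac{t^{-1/2}}{(t+1)^{1/2}}\,dt$. Then $G(x,z)=2\log\frac{1-xz+\sqrt{(1-x^2)(1-z^2)}}{|z-x|}$. -/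
open MeasureTheory intervalIntegral Set

/-!
The integrand has the primitive `2 * arsinh √t` on the positive half-line, so `G(x, z)` equals
`2 * arsinh √r₀`. The numbers `√((1 - x²)(1 - z²))` and `|z - x|` are the legs of a right triangle
with hypotenuse `1 - xz`, so `√r₀` is the quotient of its legs and the logarithmic formula for
`arsinh` simplifies.
-/

theorem hasDerivAt_two_mul_arsinh_sqrt {t : ℝ} (ht : 0 < t) :
    HasDerivAt (fun t : ℝ => 2 * Real.arsinh √t)
      (t ^ (-(1 / 2) : ℝ) * (t + 1) ^ (-(1 / 2) : ℝ)) t := by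
  refine ((Real.hasDerivAt_sqrt ht.ne').arsinh.const_mul 2).congr_deriv ?_
  rw [Real.rpow_neg ht.le, Real.rpow_neg (by positivity), ← Real.sqrt_eq_rpow,
    ← Real.sqrt_eq_rpow, Real.sq_sqrt ht.le, add_comm t 1, smul_eq_mul]
  field_simp

theorem continuous_two_mul_arsinh_sqrt : Continuous fun t : ℝ => 2 * Real.arsinh √t :=
  continuous_const.mul Real.continuous_sqrt.arsinh

section Integral

variable {a b : ℝ}

theorem intervalIntegrable_rpow_neg_half_mul_add_one_rpow_neg_half (ha : 0 ≤ a) (hb : 0 ≤ b) :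
    IntervalIntegrable (fun t : ℝ => t ^ (-(1 / 2) : ℝ) * (t + 1) ^ (-(1 / 2) : ℝ)) volume a b := by
  have pos_of_mem : ∀ t ∈ Ioo (min a b) (max a b), 0 < t := fun t ht => (le_min ha hb).trans_lt ht.1
  refine intervalIntegrable_deriv_of_nonneg continuous_two_mul_arsinh_sqrt.continuousOn
    (fun t ht => hasDerivAt_two_mul_arsinh_sqrt (pos_of_mem t ht)) fun t ht => ?_
  have := pos_of_mem t ht
  positivity

theorem integral_rpow_neg_half_mul_add_one_rpow_neg_half (ha : 0 ≤ a) (hb : 0 ≤ b) :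
    ∫ t in a..b, t ^ (-(1 / 2) : ℝ) * (t + 1) ^ (-(1 / 2) : ℝ) =
      2 * Real.arsinh √b - 2 * Real.arsinh √a :=
  integral_eq_sub_of_hasDeriv_right continuous_two_mul_arsinh_sqrt.continuousOn
    (fun _ ht =>
      (hasDerivAt_two_mul_arsinh_sqrt ((le_min ha hb).trans_lt ht.1)).hasDerivWithinAt)
    (intervalIntegrable_rpow_neg_half_mul_add_one_rpow_neg_half ha hb)

end Integral

theorem arsinh_div_eq_log_of_sq_add_sq {a b c : ℝ} (hb : 0 < b) (hc : 0 ≤ c)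
    (h : a ^ 2 + b ^ 2 = c ^ 2) : Real.arsinh (a / b) = Real.log ((c + a) / b) := by
  have hsqrt : √(1 + (a / b) ^ 2) = c / b := by
    rw [Real.sqrt_eq_iff_eq_sq (by positivity) (by positivity)]
    field_simp
    linarith
  rw [Real.arsinh, hsqrt, ← add_div, add_comm a]

theorem green_function_one_dimensional_half_general {x z : ℝ}
    (hnonneg : 0 ≤ (1 - x ^ 2) * (1 - z ^ 2)) (hmul : x * z ≤ 1) (hxz : x ≠ z) :
    ∫ t in (0 : ℝ)..((1 - x ^ 2) * (1 - z ^ 2) / (z - x) ^ 2),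
        t ^ (-(1 / 2) : ℝ) * (t + 1) ^ (-(1 / 2) : ℝ)
      = 2 * Real.log ((1 - x * z + √((1 - x ^ 2) * (1 - z ^ 2))) / |z - x|) := by
  have hdist : 0 < |z - x| := abs_pos.2 (sub_ne_zero.2 hxz.symm)
  have hpythagoras : √((1 - x ^ 2) * (1 - z ^ 2)) ^ 2 + |z - x| ^ 2 = (1 - x * z) ^ 2 := by
    rw [Real.sq_sqrt hnonneg, sq_abs]
    ring
  rw [integral_rpow_neg_half_mul_add_one_rpow_neg_half le_rfl (by positivity), Real.sqrt_zero,
    Real.arsinh_zero, mul_zero, sub_zero, Real.sqrt_div hnonneg, Real.sqrt_sq_eq_abs,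
    arsinh_div_eq_log_of_sq_add_sq hdist (sub_nonneg.2 hmul) hpythagoras]

/-- Explicit form of the fractional Green-type function for `n = 1`, `s = 1/2`:
with `r₀(x,z) = (1-x²)(1-z²)/(z-x)²`,
`∫₀^{r₀(x,z)} t^{-1/2} (t+1)^{-1/2} dt = 2 log((1 - xz + √((1-x²)(1-z²)))/|z-x|)`. -/
theorem green_function_one_dimensional_half
    (x z : ℝ) (hx : x ∈ Set.Ioo (-1 : ℝ) 1) (hz : z ∈ Set.Ioo (-1 : ℝ) 1) (hxz : x ≠ z) :
    ∫ t in (0 : ℝ)..((1 - x ^ 2) * (1 - z ^ 2) / (z - x) ^ 2),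
        t ^ (-(1 / 2) : ℝ) * (t + 1) ^ (-(1 / 2) : ℝ)
      = 2 * Real.log ((1 - x * z + Real.sqrt ((1 - x ^ 2) * (1 - z ^ 2))) / |z - x|) := by
  have hx2 : x ^ 2 < 1 := (sq_lt_one_iff_abs_lt_one x).2 (abs_lt.2 hx)
  have hz2 : z ^ 2 < 1 := (sq_lt_one_iff_abs_lt_one z).2 (abs_lt.2 hz)
  exact green_function_one_dimensional_half_general
    (mul_nonneg (sub_nonneg.2 hx2.le) (sub_nonneg.2 hz2.le)) (by nlinarith [sq_nonneg (x - z)]) hxz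
end

section
/- Let $n\geq 1$, $s\in(0,1)$, $\alpha\in(0,1)$, $e,\omega\in\partial B_1\subset\mathbb{R}^n$ and $\varepsilon_o>0$ with $e+\varepsilon\omega\in B_1$ for all $\varepsilon\in(0,\varepsilon_o]$, and let $f\in C^\alpha(\mathbb{R}^n)$ with $f=0$ outside $B_1$. For $\varepsilon\in(0,\varepsilon_o]$ define $F_\varepsilon(z)=f(z)\,\frac{(-\varepsilon-2\,e\cdot\omega)^s\,(1-|z|^2)^s}{s\,|z-e-\varepsilon\omega|^n}$ if $2\varepsilon\,(-\varepsilon-2\,e\cdot\omega)\,(1-|z|^2)\leq|z-e-\varepsilon\omega|^2$, and $F_\varepsilon(z)=0$ otherwise. Then the family $(F_\varepsilon)$ is uniformly integrable on $B_1$: for every $\eta>0$ there exists $\delta>0$, independent of $\varepsilon$, such that for every measurable set $E\subset\mathbb{R}^n$ with Lebesgue measure $|E|\leq\delta$ and every $\varepsilon\in(0,\varepsilon_o]$ one has $\int_{B_1\cap E}|F_\varepsilon(z)|\,dz\leq\eta$. -/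
open MeasureTheory Filter Metric Set
open scoped RealInnerProductSpace

/-!
Write `x = e + ε ω`. Since `e` and `ω` are unit vectors, `ε (-ε - 2 e·ω) = 1 - ‖x‖²`, so the
cutoff in `F_ε` is the condition `2 (1 - ‖x‖²) (1 - ‖z‖²) ≤ ‖z - x‖²`. As `1 - ‖·‖²` varies by at
most a multiple of `‖z - x‖` between `x` and `z`, the cutoff forces `1 - ‖z‖² ≤ 3 ‖z - x‖`.
This gains a factor `‖z - x‖ ^ s` over the singularity `‖z - x‖ ^ (-n)`, so `|F_ε|` is bounded by a
fixed multiple of the translate by `x` of the single integrable function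
`‖·‖ ^ (s - n) 1_{‖·‖ < 2}`, and the translates of an integrable function are uniformly integrable.
-/

section UniformIntegrability

open scoped ENNReal

theorem unifIntegrable_of_norm_le_mul {X ι κ E E' : Type*} [MeasurableSpace X]
    [NormedAddCommGroup E] [NormedAddCommGroup E'] {μ : Measure X} {p : ℝ≥0∞}
    {f : ι → X → E} {g : κ → X → E'} (hg : UnifIntegrable g p μ) (φ : ι → κ) {C : ℝ}
    (hfg : ∀ i, ∀ᵐ x ∂μ, ‖f i x‖ ≤ C * ‖g (φ i) x‖) : UnifIntegrable f p μ := by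
  intro η hη
  obtain ⟨δ, hδ, hgδ⟩ := hg (show 0 < η / (|C| + 1) by positivity)
  refine ⟨δ, hδ, fun i S hS hSδ => ?_⟩
  have hfgS : ∀ᵐ x ∂μ, ‖S.indicator (f i) x‖ ≤ (|C| + 1) * ‖S.indicator (g (φ i)) x‖ := by
    filter_upwards [hfg i] with x hx
    by_cases hxS : x ∈ S
    · simp only [indicator_of_mem hxS]
      exact hx.trans (by gcongr; linarith [le_abs_self C])
    · simp only [indicator_of_notMem hxS, norm_zero, mul_zero, le_refl]
  calc
    eLpNorm (S.indicator (f i)) p μ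
        ≤ ENNReal.ofReal (|C| + 1) * eLpNorm (S.indicator (g (φ i))) p μ :=
      eLpNorm_le_mul_eLpNorm_of_ae_le_mul hfgS p
    _ ≤ ENNReal.ofReal (|C| + 1) * ENNReal.ofReal (η / (|C| + 1)) := by
      gcongr
      exact hgδ (φ i) S hS hSδ
    _ = ENNReal.ofReal η := by
      rw [← ENNReal.ofReal_mul (by positivity), mul_div_cancel₀ η (by positivity)]

theorem unifIntegrable_comp_sub_right {G E : Type*} [AddGroup G] [MeasurableSpace G]
    [MeasurableAdd G] [NormedAddCommGroup E] {μ : Measure G} [μ.IsAddRightInvariant]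
    {p : ℝ≥0∞} (hp_one : 1 ≤ p) (hp_top : p ≠ ∞) {g : G → E} (hg : MemLp g p μ) :
    UnifIntegrable (fun a x => g (x - a)) p μ := by
  intro η hη
  obtain ⟨δ, hδ, hgδ⟩ := hg.eLpNorm_indicator_le hp_one hp_top hη
  refine ⟨δ, hδ, fun a S hS hSδ => ?_⟩
  have hT : MeasurableSet ((· + a) ⁻¹' S) := measurable_add_const a hS
  have hcomp : S.indicator (fun x => g (x - a)) = ((· + a) ⁻¹' S).indicator g ∘ (· - a) := by
    classical
    ext x
    simp only [indicator_apply, Function.comp_apply, mem_preimage, sub_add_cancel]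
  rw [hcomp, eLpNorm_comp_measurePreserving (hg.1.indicator hT) (measurePreserving_sub_right μ a)]
  exact hgδ _ hT (by rwa [measure_preimage_add_right])

theorem exists_setIntegral_norm_le_of_unifIntegrable {X ι E : Type*} [MeasurableSpace X]
    [NormedAddCommGroup E] {μ : Measure X} {B : Set X} {f : ι → X → E}
    (hf : UnifIntegrable f 1 (μ.restrict B)) {η : ℝ} (hη : 0 < η) :
    ∃ δ : ℝ, 0 < δ ∧ ∀ S : Set X, MeasurableSet S → μ S ≤ ENNReal.ofReal δ →
      ∀ i, ∫ x in B ∩ S, ‖f i x‖ ∂μ ≤ η := by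
  obtain ⟨δ, hδ, hfδ⟩ := hf hη
  refine ⟨δ, hδ, fun S hS hSδ i => (ENNReal.ofReal_le_ofReal_iff hη.le).1 ?_⟩
  calc
    ENNReal.ofReal (∫ x in B ∩ S, ‖f i x‖ ∂μ) = ‖∫ x in B ∩ S, ‖f i x‖ ∂μ‖ₑ :=
      (Real.enorm_of_nonneg (integral_nonneg fun x => norm_nonneg (f i x))).symm
    _ ≤ ∫⁻ x in B ∩ S, ‖f i x‖ₑ ∂μ := by
      simpa only [enorm_norm] using
        enorm_integral_le_lintegral_enorm (μ := μ.restrict (B ∩ S)) fun x => ‖f i x‖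
    _ = eLpNorm (S.indicator (f i)) 1 (μ.restrict B) := by
      rw [eLpNorm_indicator_eq_eLpNorm_restrict hS, eLpNorm_one_eq_lintegral_enorm,
        Measure.restrict_restrict hS, inter_comm]
    _ ≤ ENNReal.ofReal η := hfδ i S hS ((Measure.restrict_apply_le B S).trans hSδ)

end UniformIntegrability

theorem one_sub_norm_sq_le_of_mul_le {V : Type*} [SeminormedAddCommGroup V] {x z : V}
    (hz : ‖z‖ ≤ 1) (hxz : 2 * (1 - ‖x‖ ^ 2) * (1 - ‖z‖ ^ 2) ≤ ‖z - x‖ ^ 2) :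
    1 - ‖z‖ ^ 2 ≤ 3 * ‖z - x‖ := by
  by_contra! hlt
  have hx : ‖x‖ ≤ ‖z‖ + ‖z - x‖ := norm_le_norm_add_norm_sub z x
  have hd : ‖z - x‖ ≤ 1 / 3 := by linarith [sq_nonneg ‖z‖]
  have hx_sq : ‖x‖ ^ 2 ≤ ‖z‖ ^ 2 + 7 / 3 * ‖z - x‖ :=
    calc
      ‖x‖ ^ 2 ≤ (‖z‖ + ‖z - x‖) ^ 2 := by gcongr
      _ = ‖z‖ ^ 2 + (2 * ‖z‖ + ‖z - x‖) * ‖z - x‖ := by ring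
      _ ≤ ‖z‖ ^ 2 + 7 / 3 * ‖z - x‖ := by
        gcongr
        linarith
  have hprod : 2 / 3 * ‖z - x‖ * (3 * ‖z - x‖) < (1 - ‖x‖ ^ 2) * (1 - ‖z‖ ^ 2) :=
    mul_lt_mul'' (by linarith) hlt (by positivity) (by positivity)
  linarith [sq_nonneg ‖z - x‖]

section Kernel

variable {V : Type*} [NormedAddCommGroup V]

theorem mul_neg_sub_two_mul_inner_eq [InnerProductSpace ℝ V] {e ω : V} (he : ‖e‖ = 1)
    (hω : ‖ω‖ = 1) (ε : ℝ) : ε * (-ε - 2 * ⟪e, ω⟫) = 1 - ‖e + ε • ω‖ ^ 2 := by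
  rw [norm_add_sq_real, norm_smul, inner_smul_right, he, hω, mul_one, Real.norm_eq_abs, sq_abs]
  ring

theorem neg_sub_two_mul_inner_mem_Icc [InnerProductSpace ℝ V] {e ω : V} (he : ‖e‖ = 1)
    (hω : ‖ω‖ = 1) {ε : ℝ} (hε : 0 < ε) (hx : ‖e + ε • ω‖ ≤ 1) :
    -ε - 2 * ⟪e, ω⟫ ∈ Icc (0 : ℝ) 2 := by
  constructor
  · refine nonneg_of_mul_nonneg_right ?_ hε
    rw [mul_neg_sub_two_mul_inner_eq he hω]
    exact sub_nonneg.2 (pow_le_one₀ (norm_nonneg _) hx)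
  · have hinner : -1 ≤ ⟪e, ω⟫ := by
      simpa only [he, hω, mul_one] using neg_le_of_abs_le (abs_real_inner_le_norm e ω)
    linarith

/-- The leading term of the Green function of `(-Δ)ˢ` on the unit ball, in units of
`(1 - ‖x‖²)ˢ` and up to a dimensional constant. It is cut off to the region `r₀ ≤ 1 / 2`, where
`r₀ = (1 - ‖x‖²) (1 - ‖z‖²) / ‖z - x‖²`; the cutoff is written without division, so it holds at
`z = x` whenever `‖x‖ = 1`. -/
noncomputable def cutoffGreenKernel [NormedSpace ℝ V] (s : ℝ) (x z : V) : ℝ :=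
  if 2 * (1 - ‖x‖ ^ 2) * (1 - ‖z‖ ^ 2) ≤ ‖z - x‖ ^ 2 then
    (1 - ‖z‖ ^ 2) ^ s / (s * ‖z - x‖ ^ Module.finrank ℝ V)
  else 0

theorem norm_cutoffGreenKernel_le [NormedSpace ℝ V] {s : ℝ} (hs : 0 < s) (x : V) {z : V}
    (hz : ‖z‖ < 1) :
    ‖cutoffGreenKernel s x z‖ ≤ 3 ^ s / s * ‖z - x‖ ^ (s - Module.finrank ℝ V) := by
  rw [cutoffGreenKernel]
  split_ifs with hcut
  · have hdefect : 1 - ‖z‖ ^ 2 ≤ 3 * ‖z - x‖ := one_sub_norm_sq_le_of_mul_le hz.le hcut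
    have hdefect_pos : 0 < 1 - ‖z‖ ^ 2 := sub_pos.2 (pow_lt_one₀ (norm_nonneg z) hz two_ne_zero)
    have hd : 0 < ‖z - x‖ := by linarith
    calc
      ‖(1 - ‖z‖ ^ 2) ^ s / (s * ‖z - x‖ ^ Module.finrank ℝ V)‖
          = (1 - ‖z‖ ^ 2) ^ s / (s * ‖z - x‖ ^ Module.finrank ℝ V) :=
        Real.norm_of_nonneg (by positivity)
      _ ≤ (3 * ‖z - x‖) ^ s / (s * ‖z - x‖ ^ Module.finrank ℝ V) := by gcongr
      _ = 3 ^ s / s * ‖z - x‖ ^ (s - Module.finrank ℝ V) := by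
        rw [Real.mul_rpow (by norm_num) hd.le, Real.rpow_sub hd, Real.rpow_natCast,
          div_mul_div_comm]
  · rw [norm_zero]
    positivity

variable [MeasurableSpace V] [BorelSpace V]

theorem integrable_indicator_ball_norm_rpow [NormedSpace ℝ V] [FiniteDimensional ℝ V]
    [Nontrivial V] (μ : Measure V) [μ.IsAddHaarMeasure] {s : ℝ} (hs : 0 < s) (r : ℝ) :
    Integrable ((ball (0 : V) r).indicator fun x => ‖x‖ ^ (s - Module.finrank ℝ V)) μ := by
  rw [integrable_indicator_iff measurableSet_ball]
  refine integrableOn_ball_of_norm_le_rpow (C := 1) (α := Module.finrank ℝ V - s)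
    Module.finrank_pos (by linarith) (.of_forall fun x => ?_)
    (measurable_norm.pow_const _).aestronglyMeasurable
  rw [neg_sub, one_mul, Real.norm_of_nonneg (by positivity)]

theorem unifIntegrable_cutoffGreenKernel [NormedSpace ℝ V] [FiniteDimensional ℝ V]
    [Nontrivial V] (μ : Measure V) [μ.IsAddHaarMeasure] {s : ℝ} (hs : 0 < s) :
    UnifIntegrable (fun x : closedBall (0 : V) 1 => cutoffGreenKernel s (x : V)) 1
      (μ.restrict (ball 0 1)) := by
  have hmem : MemLp ((ball (0 : V) 2).indicator fun y => ‖y‖ ^ (s - Module.finrank ℝ V)) 1 μ :=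
    memLp_one_iff_integrable.2 (integrable_indicator_ball_norm_rpow μ hs 2)
  have htranslates := unifIntegrable_comp_sub_right le_rfl ENNReal.one_ne_top hmem
  refine unifIntegrable_of_norm_le_mul (C := 3 ^ s / s) (htranslates.restrict (ball 0 1))
    Subtype.val fun x => ?_
  filter_upwards [ae_restrict_mem measurableSet_ball] with z hz
  have hz1 : ‖z‖ < 1 := mem_ball_zero_iff.1 hz
  have hx1 : ‖(x : V)‖ ≤ 1 := mem_closedBall_zero_iff.1 x.2
  have hzx : z - x ∈ ball (0 : V) 2 := by
    rw [mem_ball_zero_iff]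
    linarith [norm_sub_le z x]
  calc
    ‖cutoffGreenKernel s (x : V) z‖ ≤ 3 ^ s / s * ‖z - x‖ ^ (s - Module.finrank ℝ V) :=
      norm_cutoffGreenKernel_le hs (x : V) hz1
    _ = 3 ^ s / s *
        ‖(ball (0 : V) 2).indicator (fun y => ‖y‖ ^ (s - Module.finrank ℝ V)) (z - x)‖ := by
      rw [indicator_of_mem hzx, Real.norm_of_nonneg (by positivity)]

theorem green_family_uniformly_integrable_general [InnerProductSpace ℝ V]
    [FiniteDimensional ℝ V] (μ : Measure V) [μ.IsAddHaarMeasure] {s : ℝ} (hs : 0 < s)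
    {e ω : V} (he : ‖e‖ = 1) (hω : ‖ω‖ = 1) {εo : ℝ}
    (hin : ∀ ε ∈ Ioc (0 : ℝ) εo, e + ε • ω ∈ ball (0 : V) 1)
    {f : V → ℝ} (hfb : ∃ M : ℝ, ∀ x, |f x| ≤ M) {F : ℝ → V → ℝ}
    (hF : ∀ ε z, F ε z =
      if 2 * ε * (-ε - 2 * ⟪e, ω⟫) * (1 - ‖z‖ ^ 2) ≤ ‖z - (e + ε • ω)‖ ^ 2 then
        f z * ((-ε - 2 * ⟪e, ω⟫) ^ s * (1 - ‖z‖ ^ 2) ^ s /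
          (s * ‖z - (e + ε • ω)‖ ^ Module.finrank ℝ V))
      else 0) :
    UnifIntegrable (fun ε : Ioc (0 : ℝ) εo => F ε) 1 (μ.restrict (ball 0 1)) := by
  obtain ⟨M, hM⟩ := hfb
  have : Nontrivial V := nontrivial_of_ne e 0 (norm_ne_zero_iff.1 (he ▸ one_ne_zero))
  have hFK : ∀ ε z, F ε z =
      f z * (-ε - 2 * ⟪e, ω⟫) ^ s * cutoffGreenKernel s (e + ε • ω) z := fun ε z => by
    rw [hF, cutoffGreenKernel, mul_assoc 2 ε, mul_neg_sub_two_mul_inner_eq he hω, mul_ite,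
      mul_zero, mul_div_assoc, mul_assoc (f z)]
  refine unifIntegrable_of_norm_le_mul (C := M * 2 ^ s) (unifIntegrable_cutoffGreenKernel μ hs)
    (fun ε => ⟨e + (ε : ℝ) • ω, ball_subset_closedBall (hin ε ε.2)⟩)
    fun ε => .of_forall fun z => ?_
  obtain ⟨hc_nonneg, hc_le⟩ := neg_sub_two_mul_inner_mem_Icc he hω ε.2.1
    (mem_ball_zero_iff.1 (hin ε ε.2)).le
  have hM_nonneg : 0 ≤ M := (abs_nonneg (f z)).trans (hM z)
  rw [hFK, norm_mul, norm_mul, Real.norm_of_nonneg (Real.rpow_nonneg hc_nonneg s)]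
  gcongr
  exact hM z

end Kernel

/-- Uniform integrability of the family `F_ε` appearing in the boundary asymptotics of
the fractional Green function: for every `η > 0` there is `δ > 0`, independent of `ε`,
such that `∫_{B₁ ∩ E} |F_ε| ≤ η` whenever `|E| ≤ δ`. -/
theorem green_family_uniformly_integrable
    (n : ℕ) (hn : 1 ≤ n) (s : ℝ) (hs : s ∈ Set.Ioo (0 : ℝ) 1)
    (α : ℝ) (hα : α ∈ Set.Ioo (0 : ℝ) 1)
    (e ω : EuclideanSpace ℝ (Fin n)) (he : ‖e‖ = 1) (hω : ‖ω‖ = 1)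
    (εo : ℝ) (hεo : 0 < εo)
    (hin : ∀ ε ∈ Set.Ioc (0 : ℝ) εo,
      e + ε • ω ∈ Metric.ball (0 : EuclideanSpace ℝ (Fin n)) 1)
    (f : EuclideanSpace ℝ (Fin n) → ℝ)
    (hfH : ∃ C : ℝ, ∀ x y : EuclideanSpace ℝ (Fin n), |f x - f y| ≤ C * ‖x - y‖ ^ α)
    (hfb : ∃ M : ℝ, ∀ x : EuclideanSpace ℝ (Fin n), |f x| ≤ M)
    (hf0 : ∀ x ∉ Metric.ball (0 : EuclideanSpace ℝ (Fin n)) 1, f x = 0)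
    (F : ℝ → EuclideanSpace ℝ (Fin n) → ℝ)
    (hF : ∀ ε z, F ε z =
      if 2 * ε * (-ε - 2 * ⟪e, ω⟫) * (1 - ‖z‖ ^ 2) ≤ ‖z - (e + ε • ω)‖ ^ 2 then
        f z * ((-ε - 2 * ⟪e, ω⟫) ^ s * (1 - ‖z‖ ^ 2) ^ s / (s * ‖z - (e + ε • ω)‖ ^ n))
      else 0) :
    ∀ η : ℝ, 0 < η → ∃ δ : ℝ, 0 < δ ∧
      ∀ E : Set (EuclideanSpace ℝ (Fin n)), MeasurableSet E →
        volume E ≤ ENNReal.ofReal δ →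
        ∀ ε ∈ Set.Ioc (0 : ℝ) εo,
          ∫ z in Metric.ball (0 : EuclideanSpace ℝ (Fin n)) 1 ∩ E, |F ε z| ≤ η := by
  intro η hη
  have hunif := green_family_uniformly_integrable_general volume hs.1 he hω hin hfb
    (by simpa only [finrank_euclideanSpace_fin] using hF)
  simpa only [Real.norm_eq_abs, Subtype.forall] using
    exists_setIntegral_norm_le_of_unifIntegrable hunif hη
end
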